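/- arXiv:1308.5695 — 3 statements merged into one kernel-verified Lean document; each statement's English description precedes it below -/
import Mathlib

section
/- Let n ≥ 1, p ∈ (0, ∞), and let q satisfy 1/q = 1/p + n. Let w : ℝⁿ → [0,∞) be measurable, p-concave and p-homogeneous, and let μ be the measure with density w with respect to Lebesgue measure. Let A, B ⊆ ℝⁿ be two convex sets with μ(A), μ(B) ∈ (0,∞), and assume μ⁺_B(A) = (1/q)·μ(B)^q·μ(A)^{1−q}. Then there exist m > 0, b ∈ ℝⁿ and c > 0 such that A coincides with mB+b up to a set of zero μ-measure, and w(mx+b) = c·w(x) for Lebesgue-almost all x ∈ B. -/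
open MeasureTheory Set Filter
open scoped Pointwise ENNReal Topology

/-- The (outer) Minkowski boundary measure of `A` with respect to `B`:
`μ⁺_B(A) := liminf_{ε → 0⁺} μ((A + εB) \ A) / ε`. -/
noncomputable def mBoundary {n : ℕ} (μ : Measure (Fin n → ℝ)) (B A : Set (Fin n → ℝ)) :
    ℝ≥0∞ :=
  Filter.liminf (fun ε : ℝ => μ ((A + ε • B) \ A) / ENNReal.ofReal ε) (𝓝[>] (0 : ℝ))

/-- One-dimensional Brunn–Minkowski inequality for compact sets. -/
lemma volume_add_volume_le_of_isCompact {K L : Set ℝ} (hK : IsCompact K) (hL : IsCompact L)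
    (hK0 : K.Nonempty) (hL0 : L.Nonempty) : volume K + volume L ≤ volume (K + L) := by
  have ha := hK.sSup_mem hK0
  have hb := hL.sInf_mem hL0
  set a := sSup K
  set b := sInf L
  have hsub : ((fun x => x + b) '' K) ∪ ((fun x => a + x) '' L) ⊆ K + L := by
    rintro _ (⟨x, hx, rfl⟩ | ⟨x, hx, rfl⟩)
    · exact add_mem_add hx hb
    · exact add_mem_add ha hx
  have hinter : ((fun x => x + b) '' K) ∩ ((fun x => a + x) '' L) ⊆ {a + b} := by
    rintro z ⟨⟨x, hx, hxz⟩, ⟨y, hy, hyz⟩⟩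
    have h1 : x ≤ a := le_csSup hK.bddAbove hx
    have h2 : b ≤ y := csInf_le hL.bddBelow hy
    simp only at hxz hyz
    rw [mem_singleton_iff]
    linarith
  have hdis : AEDisjoint volume ((fun x => x + b) '' K) ((fun x => a + x) '' L) :=
    measure_mono_null hinter (by simp)
  have hm : MeasurableSet ((fun x => a + x) '' L) :=
    (hL.image (by fun_prop)).measurableSet
  calc volume K + volume L
      = volume ((fun x => x + b) '' K) + volume ((fun x => a + x) '' L) := by
        rw [image_add_right, image_add_left, measure_preimage_add_right, measure_preimage_add]
    _ = volume (((fun x => x + b) '' K) ∪ ((fun x => a + x) '' L)) :=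
        (measure_union₀ hm.nullMeasurableSet hdis).symm
    _ ≤ _ := measure_mono hsub

/-- One-dimensional Brunn–Minkowski inequality. -/
lemma volume_add_volume_le {X Y : Set ℝ} (hX : MeasurableSet X) (hY : MeasurableSet Y)
    (hX0 : X.Nonempty) (hY0 : Y.Nonempty) : volume X + volume Y ≤ volume (X + Y) := by
  obtain ⟨x, hx⟩ := hX0
  obtain ⟨y, hy⟩ := hY0
  have key : ∀ K ⊆ X, IsCompact K → ∀ L ⊆ Y, IsCompact L →
      volume K + volume L ≤ volume (X + Y) := by
    intro K hKX hK L hLY hL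
    calc volume K + volume L ≤ volume (insert x K) + volume (insert y L) := by
          gcongr <;> exact subset_insert _ _
      _ ≤ volume (insert x K + insert y L) :=
          volume_add_volume_le_of_isCompact (hK.insert x) (hL.insert y)
            (insert_nonempty _ _) (insert_nonempty _ _)
      _ ≤ volume (X + Y) :=
          measure_mono (add_subset_add (insert_subset hx hKX) (insert_subset hy hLY))
  rw [hX.measure_eq_iSup_isCompact, hY.measure_eq_iSup_isCompact]
  simp only [iSup_and', iSup_subtype']
  have : Nonempty {K : Set ℝ // K ⊆ X ∧ IsCompact K} := ⟨⟨∅, empty_subset _, isCompact_empty⟩⟩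
  have : Nonempty {K : Set ℝ // K ⊆ Y ∧ IsCompact K} := ⟨⟨∅, empty_subset _, isCompact_empty⟩⟩
  exact ENNReal.iSup_add_iSup_le fun K L => key K.1 K.2.1 K.2.2 L.1 L.2.1 L.2.2

lemma lintegral_eq_lintegral_meas_ofReal_lt {α : Type*} [MeasurableSpace α] (μ : Measure α)
    {F : α → ℝ≥0∞} (hF : Measurable F) (hfin : ∀ x, F x ≠ ⊤) :
    ∫⁻ x, F x ∂μ = ∫⁻ t in Ioi (0 : ℝ), μ {x | ENNReal.ofReal t < F x} := by
  have h := lintegral_eq_lintegral_meas_lt (f := fun x => (F x).toReal) μ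
    (Eventually.of_forall fun x => ENNReal.toReal_nonneg) hF.ennreal_toReal.aemeasurable
  simp only [ENNReal.ofReal_toReal (hfin _)] at h
  rw [h]
  refine setLIntegral_congr_fun measurableSet_Ioi fun t ht => ?_
  simp only [ENNReal.ofReal_lt_iff_lt_toReal (le_of_lt (mem_Ioi.1 ht)) (hfin _)]

/-- Equal heights: if `F` and `G` have supremum one and `H` dominates `min (F s) (G t)` at `s + t`,
then the integrals add up. -/
lemma lintegral_add_le_of_min_le {F G H : ℝ → ℝ≥0∞} (hF : Measurable F) (hG : Measurable G)
    (hH : Measurable H) (hF1 : ⨆ s, F s = 1) (hG1 : ⨆ s, G s = 1)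
    (h : ∀ s t, min (F s) (G t) ≤ H (s + t)) :
    (∫⁻ s, F s) + ∫⁻ s, G s ≤ ∫⁻ s, H s := by
  have hFle : ∀ s, F s ≤ 1 := fun s => hF1 ▸ le_iSup F s
  have hGle : ∀ s, G s ≤ 1 := fun s => hG1 ▸ le_iSup G s
  have hmin : Measurable fun s => min (H s) 1 := hH.min measurable_const
  refine le_trans ?_ (lintegral_mono (fun s => min_le_left (H s) 1))
  rw [lintegral_eq_lintegral_meas_ofReal_lt _ hF fun s => ((hFle s).trans_lt ENNReal.one_lt_top).ne,
    lintegral_eq_lintegral_meas_ofReal_lt _ hG fun s => ((hGle s).trans_lt ENNReal.one_lt_top).ne,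
    lintegral_eq_lintegral_meas_ofReal_lt _ hmin
      fun s => ((min_le_right _ _).trans_lt ENNReal.one_lt_top).ne,
    ← lintegral_add_left']
  swap
  · refine Measurable.aemeasurable ?_
    refine Antitone.measurable fun a b hab => measure_mono fun s hs => ?_
    exact lt_of_le_of_lt (ENNReal.ofReal_le_ofReal hab) hs
  refine lintegral_mono fun t => ?_
  rcases le_or_gt 1 (ENNReal.ofReal t) with ht | ht
  · have e1 : {x | ENNReal.ofReal t < F x} = ∅ :=
      eq_empty_of_forall_notMem fun x hx => (hx.trans_le (hFle x)).not_ge ht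
    have e2 : {x | ENNReal.ofReal t < G x} = ∅ :=
      eq_empty_of_forall_notMem fun x hx => (hx.trans_le (hGle x)).not_ge ht
    simp [e1, e2]
  · have n1 : {x | ENNReal.ofReal t < F x}.Nonempty := lt_iSup_iff.1 (ht.trans_eq hF1.symm)
    have n2 : {x | ENNReal.ofReal t < G x}.Nonempty := lt_iSup_iff.1 (ht.trans_eq hG1.symm)
    refine (volume_add_volume_le (measurableSet_lt measurable_const hF)
      (measurableSet_lt measurable_const hG) n1 n2).trans (measure_mono ?_)
    rintro _ ⟨s, hs, u, hu, rfl⟩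
    exact lt_min ((lt_min hs hu).trans_le (h s u)) ht

/-- One-dimensional inequality retaining the suprema of both functions. -/
lemma sup_mul_lintegral_add_le {F G H : ℝ → ℝ≥0∞} (hF : Measurable F) (hG : Measurable G)
    (hH : Measurable H) {p : ℝ} (hp : 0 < p) {a b : ℝ≥0∞} (hFa : ⨆ s, F s = a)
    (hGb : ⨆ s, G s = b) (ha0 : a ≠ 0) (ha : a ≠ ⊤) (hb0 : b ≠ 0) (hb : b ≠ ⊤)
    (h : ∀ s t, F s ≠ 0 → G t ≠ 0 → (F s ^ p + G t ^ p) ^ p⁻¹ ≤ H (s + t)) :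
    (a ^ p + b ^ p) ^ p⁻¹ * ((∫⁻ s, F s) / a + (∫⁻ s, G s) / b) ≤ ∫⁻ s, H s := by
  set c := (a ^ p + b ^ p) ^ p⁻¹ with hc
  have hap : a ^ p ≠ ⊤ := ENNReal.rpow_ne_top_of_nonneg hp.le ha
  have hbp : b ^ p ≠ ⊤ := ENNReal.rpow_ne_top_of_nonneg hp.le hb
  have hap0 : a ^ p ≠ 0 := by simp [ENNReal.rpow_eq_zero_iff, ha0, ha]
  have hc0 : c ≠ 0 := by simp [hc, ENNReal.rpow_eq_zero_iff, hap0, hap, hbp]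
  have hct : c ≠ ⊤ :=
    ENNReal.rpow_ne_top_of_nonneg (inv_nonneg.2 hp.le) (ENNReal.add_ne_top.2 ⟨hap, hbp⟩)
  have key : (∫⁻ s, F s / a) + ∫⁻ s, G s / b ≤ ∫⁻ s, H s / c := by
    refine lintegral_add_le_of_min_le (hF.div_const a) (hG.div_const b) (hH.div_const c) ?_ ?_ ?_
    · rw [← ENNReal.iSup_div, hFa, ENNReal.div_self ha0 ha]
    · rw [← ENNReal.iSup_div, hGb, ENNReal.div_self hb0 hb]
    · intro s t
      set r := min (F s / a) (G t / b) with hr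
      rcases eq_or_ne r 0 with h0 | h0
      · simp [h0]
      have hrF : r * a ≤ F s := (ENNReal.le_div_iff_mul_le (Or.inl ha0) (Or.inl ha)).1
        (min_le_left _ _)
      have hrG : r * b ≤ G t := (ENNReal.le_div_iff_mul_le (Or.inl hb0) (Or.inl hb)).1
        (min_le_right _ _)
      have hF0 : F s ≠ 0 := fun h' => by simp [h', ha0, h0] at hrF
      have hG0 : G t ≠ 0 := fun h' => by simp [h', hb0, h0] at hrG
      rw [ENNReal.le_div_iff_mul_le (Or.inl hc0) (Or.inl hct)]
      refine le_trans ?_ (h s t hF0 hG0)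
      calc r * c = ((r * a) ^ p + (r * b) ^ p) ^ p⁻¹ := by
            rw [ENNReal.mul_rpow_of_nonneg _ _ hp.le, ENNReal.mul_rpow_of_nonneg _ _ hp.le,
              ← mul_add, ENNReal.mul_rpow_of_nonneg _ _ (inv_nonneg.2 hp.le),
              ENNReal.rpow_rpow_inv hp.ne']
        _ ≤ _ := by gcongr
  simp only [div_eq_mul_inv] at key
  rw [lintegral_mul_const _ hF, lintegral_mul_const _ hG, lintegral_mul_const _ hH,
    ← div_eq_mul_inv, ← div_eq_mul_inv, ← div_eq_mul_inv,
    ENNReal.le_div_iff_mul_le (Or.inl hc0) (Or.inl hct)] at key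
  rwa [mul_comm]

lemma holder_two {a b I J : ℝ≥0∞} (ha0 : a ≠ 0) (ha : a ≠ ⊤) (hb0 : b ≠ 0) (hb : b ≠ ⊤)
    {p q : ℝ} (hp : 0 < p) (hq : 0 < q) (hpq : q⁻¹ = p⁻¹ + 1) :
    (I ^ q + J ^ q) ^ q⁻¹ ≤ (a ^ p + b ^ p) ^ p⁻¹ * (I / a + J / b) := by
  have hpq' : q / p + q = 1 := by field_simp at hpq ⊢; linarith
  have hc : (p / q).HolderConjugate q⁻¹ := by
    rw [Real.holderConjugate_iff]
    constructor
    · rw [lt_div_iff₀ hq]; have := hpq'; field_simp at this; nlinarith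
    · rw [inv_div, inv_inv]; exact hpq'
  have h := ENNReal.inner_le_Lp_mul_Lq (Finset.univ : Finset (Fin 2)) ![a ^ q, b ^ q]
    ![(I / a) ^ q, (J / b) ^ q] hc
  simp only [Fin.sum_univ_two, Matrix.cons_val_zero, Matrix.cons_val_one] at h
  have e : ∀ x y : ℝ≥0∞, x ≠ 0 → x ≠ ⊤ → x ^ q * (y / x) ^ q = y ^ q := by
    intro x y hx0 hx
    rw [← ENNReal.mul_rpow_of_nonneg _ _ hq.le, ENNReal.mul_div_cancel hx0 hx]
  have e2 : q * (p / q) = p := by field_simp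
  rw [e a I ha0 ha, e b J hb0 hb, ← ENNReal.rpow_mul, ← ENNReal.rpow_mul, ← ENNReal.rpow_mul,
    ← ENNReal.rpow_mul, e2, mul_inv_cancel₀ hq.ne', ENNReal.rpow_one, ENNReal.rpow_one] at h
  have h2 := ENNReal.rpow_le_rpow h (inv_nonneg.2 hq.le)
  rw [ENNReal.mul_rpow_of_nonneg _ _ (inv_nonneg.2 hq.le), ← ENNReal.rpow_mul,
    ← ENNReal.rpow_mul] at h2
  have e3 : 1 / (p / q) * q⁻¹ = p⁻¹ := by field_simp
  have e4 : 1 / q⁻¹ * q⁻¹ = 1 := by field_simp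
  rwa [e3, e4, ENNReal.rpow_one] at h2

lemma tendsto_lintegral_min_natCast {α : Type*} [MeasurableSpace α] (μ : Measure α)
    {F : α → ℝ≥0∞} (hF : Measurable F) :
    Tendsto (fun k : ℕ => ∫⁻ x, min (F x) k ∂μ) atTop (𝓝 (∫⁻ x, F x ∂μ)) := by
  refine lintegral_tendsto_of_tendsto_of_monotone (fun k => (hF.min measurable_const).aemeasurable)
    (Eventually.of_forall fun x i j hij => by dsimp only; gcongr) (Eventually.of_forall fun x => ?_)
  have h := (continuous_const (y := F x)).min continuous_id |>.tendsto (⊤ : ℝ≥0∞)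
  simpa [Function.comp_def] using h.comp ENNReal.tendsto_nat_nhds_top

/-- One-dimensional Borell–Brascamp–Lieb inequality in additive form. -/
lemma borell_brascamp_lieb_one {F G H : ℝ → ℝ≥0∞} (hF : Measurable F) (hG : Measurable G)
    (hH : Measurable H) {p q : ℝ} (hp : 0 < p) (hq : 0 < q) (hpq : q⁻¹ = p⁻¹ + 1)
    (hF0 : ∫⁻ s, F s ≠ 0) (hG0 : ∫⁻ s, G s ≠ 0)
    (h : ∀ s t, F s ≠ 0 → G t ≠ 0 → (F s ^ p + G t ^ p) ^ p⁻¹ ≤ H (s + t)) :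
    ((∫⁻ s, F s) ^ q + (∫⁻ s, G s) ^ q) ^ q⁻¹ ≤ ∫⁻ s, H s := by
  have hlim : Tendsto (fun k : ℕ => ((∫⁻ s, min (F s) k) ^ q + (∫⁻ s, min (G s) k) ^ q) ^ q⁻¹)
      atTop (𝓝 (((∫⁻ s, F s) ^ q + (∫⁻ s, G s) ^ q) ^ q⁻¹)) := by
    refine (ENNReal.continuous_rpow_const.tendsto _).comp (Tendsto.add ?_ ?_)
    · exact (ENNReal.continuous_rpow_const.tendsto _).comp (tendsto_lintegral_min_natCast _ hF)
    · exact (ENNReal.continuous_rpow_const.tendsto _).comp (tendsto_lintegral_min_natCast _ hG)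
  have sup_ne : ∀ {E : ℝ → ℝ≥0∞} (k : ℕ), 0 < k → ∫⁻ s, E s ≠ 0 →
      ⨆ s, min (E s) k ≠ 0 ∧ ⨆ s, min (E s) k ≠ ⊤ := by
    intro E k hk hE
    constructor
    · intro h0
      refine hE ?_
      have : ∀ s, E s = 0 := fun s => by
        have hs : min (E s) k = 0 := ENNReal.iSup_eq_zero.1 h0 s
        rcases min_eq_iff.1 hs with h' | h'
        · exact h'.1
        · simp [hk.ne'] at h'
      simp [this]
    · exact ((iSup_le fun s => min_le_right _ _).trans_lt (ENNReal.natCast_lt_top k)).ne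
  refine le_of_tendsto hlim ?_
  filter_upwards [eventually_gt_atTop 0] with k hk
  obtain ⟨ha0, ha⟩ := sup_ne k hk hF0
  obtain ⟨hb0, hb⟩ := sup_ne k hk hG0
  refine (holder_two ha0 ha hb0 hb hp hq hpq).trans
    (sup_mul_lintegral_add_le (hF.min measurable_const) (hG.min measurable_const) hH hp rfl rfl
      ha0 ha hb0 hb fun s t hs ht => ?_)
  have hs' : F s ≠ 0 := fun h0 => hs (by simp [h0])
  have ht' : G t ≠ 0 := fun h0 => ht (by simp [h0])
  refine le_trans ?_ (h s t hs' ht')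
  gcongr <;> exact min_le_left _ _

lemma measurable_finCons {k : ℕ} :
    Measurable fun z : ℝ × (Fin k → ℝ) => (Fin.cons z.1 z.2 : Fin (k + 1) → ℝ) := by
  refine measurable_pi_iff.2 fun i => ?_
  refine Fin.cases ?_ (fun j => ?_) i
  · simpa using measurable_fst
  · simpa [Function.comp_def] using (measurable_pi_apply j).comp measurable_snd

lemma lintegral_fin_succ {k : ℕ} {f : (Fin (k + 1) → ℝ) → ℝ≥0∞} (hf : Measurable f) :
    ∫⁻ x, f x = ∫⁻ s : ℝ, ∫⁻ y : Fin k → ℝ, f (Fin.cons s y) := by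
  have h := (volume_preserving_piFinSuccAbove (fun _ : Fin (k + 1) => ℝ) 0).symm
  rw [← h.lintegral_comp hf, Measure.volume_eq_prod, lintegral_prod]
  · simp [MeasurableEquiv.piFinSuccAbove, Fin.insertNthEquiv]
  · exact (hf.comp (MeasurableEquiv.measurable _)).aemeasurable

/-- Measurability of the marginal of a function along the first coordinate. -/
lemma measurable_lintegral_finCons {k : ℕ} {f : (Fin (k + 1) → ℝ) → ℝ≥0∞} (hf : Measurable f) :
    Measurable fun s : ℝ => ∫⁻ y : Fin k → ℝ, f (Fin.cons s y) :=
  (hf.comp measurable_finCons).lintegral_prod_right'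

/-- Borell–Brascamp–Lieb inequality in additive form. -/
theorem borell_brascamp_lieb {p : ℝ} (hp : 0 < p) : ∀ (n : ℕ) {f g h : (Fin n → ℝ) → ℝ≥0∞},
    Measurable f → Measurable g → Measurable h →
    (∀ x y, f x ≠ 0 → g y ≠ 0 → (f x ^ p + g y ^ p) ^ p⁻¹ ≤ h (x + y)) →
    ∫⁻ x, f x ≠ 0 → ∫⁻ x, g x ≠ 0 →
    ((∫⁻ x, f x) ^ (p⁻¹ + n)⁻¹ + (∫⁻ x, g x) ^ (p⁻¹ + n)⁻¹) ^ (p⁻¹ + (n : ℝ)) ≤ ∫⁻ x, h x := by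
  intro n
  induction n with
  | zero =>
    intro f g h hf hg hh hfg hf0 hg0
    have e : ∀ u : (Fin 0 → ℝ) → ℝ≥0∞, ∫⁻ x, u x = u default := fun u => by
      rw [lintegral_unique, volume_pi, Measure.pi_of_empty, Measure.dirac_apply_of_mem (mem_univ _),
        mul_one]
      exact congrArg u (Subsingleton.elim _ _)
    rw [e] at hf0 hg0
    have h0 := hfg default default hf0 hg0
    rw [e, e, e]
    simp only [Nat.cast_zero, add_zero, inv_inv]
    rwa [Subsingleton.elim (default + default : Fin 0 → ℝ) default] at h0
  | succ k ih =>
    intro f g h hf hg hh hfg hf0 hg0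
    rw [lintegral_fin_succ hf] at hf0 ⊢
    rw [lintegral_fin_succ hg] at hg0 ⊢
    rw [lintegral_fin_succ hh]
    have hpos : 0 < p⁻¹ + k := by positivity
    have hpos' : 0 < p⁻¹ + (k + 1 : ℕ) := by positivity
    have := borell_brascamp_lieb_one (measurable_lintegral_finCons hf)
      (measurable_lintegral_finCons hg)
      (measurable_lintegral_finCons hh) (inv_pos.2 hpos) (inv_pos.2 hpos')
      (by rw [inv_inv, inv_inv]; push_cast; ring) hf0 hg0 ?_
    · rwa [inv_inv] at this
    · intro s t hs ht
      rw [inv_inv]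
      refine ih (f := fun y => f (Fin.cons s y)) (g := fun y => g (Fin.cons t y))
        (h := fun y => h (Fin.cons (s + t) y)) ?_ ?_ ?_ ?_ hs ht
      · exact hf.comp (measurable_finCons.comp measurable_prodMk_left)
      · exact hg.comp (measurable_finCons.comp measurable_prodMk_left)
      · exact hh.comp (measurable_finCons.comp measurable_prodMk_left)
      · intro x y hx hy
        refine (hfg _ _ hx hy).trans_eq ?_
        congr 1
        ext i
        refine Fin.cases ?_ (fun j => ?_) i <;> simp

/-- A probability-like density on the line which is positive and continuous on the open interval
`I` and vanishes off `I`. -/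
structure IsIntervalDensity (F : ℝ → ℝ) (I : Set ℝ) : Prop where
  isOpen : IsOpen I
  ordConnected : I.OrdConnected
  nonempty : I.Nonempty
  continuousOn : ContinuousOn F I
  pos : ∀ s ∈ I, 0 < F s
  eq_zero : ∀ s, s ∉ I → F s = 0
  integrable : Integrable F

namespace IsIntervalDensity

variable {F : ℝ → ℝ} {I : Set ℝ}

lemma nonneg (h : IsIntervalDensity F I) (s : ℝ) : 0 ≤ F s := by
  by_cases hs : s ∈ I
  · exact (h.pos s hs).le
  · exact (h.eq_zero s hs).ge

lemma cdf_sub (h : IsIntervalDensity F I) (s t : ℝ) :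
    (∫ x in Iic t, F x) - ∫ x in Iic s, F x = ∫ x in s..t, F x :=
  intervalIntegral.integral_Iic_sub_Iic h.integrable.integrableOn h.integrable.integrableOn

lemma cdf_hasDerivAt (h : IsIntervalDensity F I) {s : ℝ} (hs : s ∈ I) :
    HasDerivAt (fun t => ∫ x in Iic t, F x) (F s) s := by
  have h1 : HasDerivAt (fun t => ∫ x in s..t, F x) (F s) s :=
    intervalIntegral.integral_hasDerivAt_right h.integrable.intervalIntegrable
      h.integrable.aestronglyMeasurable.stronglyMeasurableAtFilter
      (h.continuousOn.continuousAt (h.isOpen.mem_nhds hs))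
  have h2 : (fun t => ∫ x in Iic t, F x) = fun t => (∫ x in s..t, F x) + ∫ x in Iic s, F x := by
    ext t
    rw [← h.cdf_sub s t]
    ring
  rw [h2]
  exact h1.add_const _

lemma cdf_continuous (h : IsIntervalDensity F I) : Continuous fun t => ∫ x in Iic t, F x := by
  have h2 : (fun t => ∫ x in Iic t, F x) = fun t => (∫ x in 0..t, F x) + ∫ x in Iic 0, F x := by
    ext t
    rw [← h.cdf_sub 0 t]
    ring
  rw [h2]
  exact (intervalIntegral.continuous_primitive
    (fun a b => h.integrable.intervalIntegrable) 0).add continuous_const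

lemma cdf_strictMonoOn (h : IsIntervalDensity F I) :
    StrictMonoOn (fun t => ∫ x in Iic t, F x) I := by
  intro s hs t ht hst
  have := intervalIntegral.intervalIntegral_pos_of_pos_on
    (h.integrable.intervalIntegrable (a := s) (b := t))
    (fun x hx => h.pos x (h.ordConnected.out hs ht (Ioo_subset_Icc_self hx))) hst
  rw [← h.cdf_sub] at this
  exact sub_pos.1 this

lemma cdf_mem_Ioo (h : IsIntervalDensity F I) {s : ℝ} (hs : s ∈ I) :
    ∫ x in Iic s, F x ∈ Ioo 0 (∫ x, F x) := by
  obtain ⟨l, u, hlu, hsub⟩ := mem_nhds_iff_exists_Ioo_subset.1 (h.isOpen.mem_nhds hs)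
  obtain ⟨s', hs'⟩ := exists_between hlu.1
  obtain ⟨s'', hs''⟩ := exists_between hlu.2
  constructor
  · refine lt_of_le_of_lt (integral_nonneg fun x => h.nonneg x)
      (h.cdf_strictMonoOn (hsub ⟨hs'.1, hs'.2.trans hlu.2⟩) hs hs'.2)
  · refine lt_of_lt_of_le (h.cdf_strictMonoOn hs (hsub ⟨hlu.1.trans hs''.1, hs''.2⟩) hs''.1) ?_
    exact setIntegral_le_integral h.integrable (Eventually.of_forall h.nonneg)

lemma cdf_add_Ioi (h : IsIntervalDensity F I) (s : ℝ) :
    (∫ x in Iic s, F x) + ∫ x in Ioi s, F x = ∫ x, F x := by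
  rw [← setIntegral_union (Iic_disjoint_Ioi le_rfl) measurableSet_Ioi h.integrable.integrableOn
    h.integrable.integrableOn, Iic_union_Ioi, setIntegral_univ]

lemma exists_cdf_eq (h : IsIntervalDensity F I) {θ : ℝ} (hθ : θ ∈ Ioo 0 (∫ x, F x)) :
    ∃ s ∈ I, ∫ x in Iic s, F x = θ := by
  have hM : Tendsto (fun t => ∫ x in Iic t, F x) atTop (𝓝 (∫ x, F x)) :=
    (aecover_Iic tendsto_id).integral_tendsto_of_countably_generated h.integrable
  have h0 : Tendsto (fun t => ∫ x in Iic t, F x) atBot (𝓝 0) := by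
    have h1 : Tendsto (fun t => ∫ x in Ioi t, F x) atBot (𝓝 (∫ x, F x)) :=
      (aecover_Ioi tendsto_id).integral_tendsto_of_countably_generated h.integrable
    have h2 := (tendsto_const_nhds (x := ∫ x, F x)).sub h1
    rw [sub_self] at h2
    refine h2.congr fun t => ?_
    rw [← h.cdf_add_Ioi t]
    ring
  obtain ⟨s₀, hs₀⟩ := (h0.eventually (gt_mem_nhds hθ.1)).exists
  obtain ⟨s₁, hs₁⟩ := (hM.eventually (lt_mem_nhds hθ.2)).exists
  obtain ⟨s, hs⟩ := mem_range_of_exists_le_of_exists_ge h.cdf_continuous ⟨s₀, hs₀.le⟩ ⟨s₁, hs₁.le⟩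
  refine ⟨s, ?_, hs⟩
  by_contra hsI
  simp only at hs
  by_cases hlow : ∃ x ∈ I, x ≤ s
  · obtain ⟨x, hx, hxs⟩ := hlow
    have : ∫ y in Ioi s, F y = 0 := by
      refine setIntegral_eq_zero_of_forall_eq_zero fun y hy => h.eq_zero y fun hyI => hsI ?_
      exact h.ordConnected.out hx hyI ⟨hxs, le_of_lt hy⟩
    have h3 := h.cdf_add_Ioi s
    rw [this, add_zero, hs] at h3
    exact hθ.2.ne h3
  · push Not at hlow
    have : ∫ y in Iic s, F y = 0 :=
      setIntegral_eq_zero_of_forall_eq_zero fun y hy => h.eq_zero y fun hyI =>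
        (hlow y hyI).not_ge hy
    exact hθ.1.ne (this.symm.trans hs)

/-- The quantile function of an interval density. -/
lemma exists_quantile (h : IsIntervalDensity F I) :
    ∃ a : ℝ → ℝ, StrictMonoOn a (Ioo 0 (∫ x, F x)) ∧
      ∀ θ ∈ Ioo 0 (∫ x, F x), a θ ∈ I ∧ ∫ x in Iic (a θ), F x = θ ∧
        HasDerivAt a (F (a θ))⁻¹ θ := by
  choose! a haI ha using fun θ => h.exists_cdf_eq (θ := θ)
  have hmono : StrictMonoOn a (Ioo 0 (∫ x, F x)) := by
    intro θ hθ θ' hθ' hlt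
    refine (h.cdf_strictMonoOn.lt_iff_lt (haI θ hθ) (haI θ' hθ')).1 ?_
    simpa only [ha θ hθ, ha θ' hθ'] using hlt
  refine ⟨a, hmono, fun θ hθ => ⟨haI θ hθ, ha θ hθ, ?_⟩⟩
  have hcont : ContinuousAt a θ := by
    refine hmono.continuousAt_of_image_mem_nhds (isOpen_Ioo.mem_nhds hθ)
      (mem_of_superset (h.isOpen.mem_nhds (haI θ hθ)) fun s hs => ?_)
    refine ⟨_, h.cdf_mem_Ioo hs, ?_⟩
    exact h.cdf_strictMonoOn.injOn (haI _ (h.cdf_mem_Ioo hs)) hs (ha _ (h.cdf_mem_Ioo hs))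
  refine HasDerivAt.of_local_left_inverse hcont (h.cdf_hasDerivAt (haI θ hθ))
    (h.pos _ (haI θ hθ)).ne' ?_
  filter_upwards [isOpen_Ioo.mem_nhds hθ] with y hy using ha y hy

end IsIntervalDensity

/-- `F` dominates `G` on all slabs with endpoints in `J` cut off at equal masses. -/
def SlabDominated (F G : ℝ → ℝ) (J : Set ℝ) : Prop :=
  ∀ s₁ s₂, ∀ t₁ ∈ J, ∀ t₂ ∈ J, s₁ < s₂ → t₁ < t₂ →
    ∫ x in Iic s₁, F x = ∫ x in Iic t₁, G x → ∫ x in Iic s₂, F x = ∫ x in Iic t₂, G x →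
    ∫ x in Iic s₁, F x < ∫ x in Iic s₂, F x →
    ∀ m, (∀ s ∈ Ioo s₁ s₂, F s ≤ m) → ∀ t ∈ Ioo t₁ t₂, G t ≤ m

lemma SlabDominated.apply_quantile_le {F G : ℝ → ℝ} {I J : Set ℝ} (hF : IsIntervalDensity F I)
    (hG : IsIntervalDensity G J) (h : SlabDominated F G J) {a b : ℝ → ℝ} {M θ : ℝ}
    (ha : StrictMonoOn a (Ioo 0 M)) (hb : StrictMonoOn b (Ioo 0 M)) (hθ : θ ∈ Ioo 0 M)
    (haF : ∀ θ ∈ Ioo 0 M, a θ ∈ I ∧ ∫ x in Iic (a θ), F x = θ)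
    (hbG : ∀ θ ∈ Ioo 0 M, b θ ∈ J ∧ ∫ x in Iic (b θ), G x = θ) (hac : ContinuousAt a θ) :
    G (b θ) ≤ F (a θ) := by
  refine le_of_forall_gt_imp_ge_of_dense fun m hm => ?_
  have hFc : ContinuousAt F (a θ) :=
    hF.continuousOn.continuousAt (hF.isOpen.mem_nhds (haF θ hθ).1)
  have hGc : ContinuousAt G (b θ) :=
    hG.continuousOn.continuousAt (hG.isOpen.mem_nhds (hbG θ hθ).1)
  obtain ⟨l, u, hlu, hsub⟩ := mem_nhds_iff_exists_Ioo_subset.1 (hFc.eventually (gt_mem_nhds hm))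
  have hev : ∀ᶠ θ' in 𝓝[>] θ, a θ' < u ∧ θ' ∈ Ioo 0 M ∧ θ < θ' := by
    have e1 : ∀ᶠ θ' in 𝓝[>] θ, a θ' < u :=
      (hac.eventually (gt_mem_nhds hlu.2)).filter_mono nhdsWithin_le_nhds
    have e2 : ∀ᶠ θ' in 𝓝[>] θ, θ' ∈ Ioo 0 M :=
      nhdsWithin_le_nhds (isOpen_Ioo.mem_nhds hθ)
    filter_upwards [e1, e2, self_mem_nhdsWithin] with θ' h1 h2 h3 using ⟨h1, h2, h3⟩
  obtain ⟨θ', h1, h2, h3⟩ := hev.exists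
  have hba : b θ < b θ' := hb hθ h2 h3
  have hle := h (a θ) (a θ') (b θ) (hbG θ hθ).1 (b θ') (hbG θ' h2).1 (ha hθ h2 h3) hba
    ((haF θ hθ).2.trans (hbG θ hθ).2.symm) ((haF θ' h2).2.trans (hbG θ' h2).2.symm)
    (by rwa [(haF θ hθ).2, (haF θ' h2).2]) m
    fun s hs => le_of_lt (hsub ⟨hlu.1.trans hs.1, hs.2.trans h1⟩)
  refine le_of_tendsto (hGc.tendsto.mono_left (nhdsWithin_le_nhds (s := Ioi (b θ)))) ?_
  filter_upwards [Ioo_mem_nhdsGT hba] with t ht using hle t ht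

/-- Interval densities that dominate each other on slabs are translates of each other. -/
lemma exists_translate_of_slabDominated {F G : ℝ → ℝ} {I J : Set ℝ} (hF : IsIntervalDensity F I)
    (hG : IsIntervalDensity G J) (hFG : ∫ x, F x = ∫ x, G x) (h : SlabDominated F G J)
    (h' : SlabDominated G F I) : ∃ c, ∀ s, F (s + c) = G s := by
  obtain ⟨a, ha, haF⟩ := hF.exists_quantile
  obtain ⟨b, hb, hbG⟩ := hG.exists_quantile
  rw [← hFG] at hb hbG
  set M := ∫ x, F x with hM
  have heq : ∀ θ ∈ Ioo 0 M, F (a θ) = G (b θ) := by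
    intro θ hθ
    refine le_antisymm ?_ ?_
    · exact h'.apply_quantile_le hG hF hb ha hθ (fun θ hθ => ⟨(hbG θ hθ).1, (hbG θ hθ).2.1⟩)
        (fun θ hθ => ⟨(haF θ hθ).1, (haF θ hθ).2.1⟩) (hbG θ hθ).2.2.continuousAt
    · exact h.apply_quantile_le hF hG ha hb hθ (fun θ hθ => ⟨(haF θ hθ).1, (haF θ hθ).2.1⟩)
        (fun θ hθ => ⟨(hbG θ hθ).1, (hbG θ hθ).2.1⟩) (haF θ hθ).2.2.continuousAt
  have hder : ∀ θ ∈ Ioo 0 M, HasDerivAt (fun θ => a θ - b θ) 0 θ := by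
    intro θ hθ
    have := (haF θ hθ).2.2.sub (hbG θ hθ).2.2
    rwa [heq θ hθ, sub_self] at this
  obtain ⟨c, hc⟩ : ∃ c, ∀ θ ∈ Ioo 0 M, a θ - b θ = c := by
    refine isOpen_Ioo.exists_is_const_of_deriv_eq_zero isPreconnected_Ioo
      (fun θ hθ => (hder θ hθ).differentiableAt.differentiableWithinAt)
      (fun θ hθ => (hder θ hθ).deriv)
  refine ⟨c, fun s => ?_⟩
  by_cases hs : s ∈ J
  · have hθ := hG.cdf_mem_Ioo hs
    rw [← hFG] at hθ
    have hbs : b (∫ x in Iic s, G x) = s :=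
      hG.cdf_strictMonoOn.injOn (hbG _ hθ).1 hs (hbG _ hθ).2.1
    have := heq _ hθ
    rwa [← sub_add_cancel (a _) (b (∫ x in Iic s, G x)), hc _ hθ, hbs, add_comm] at this
  · rw [hG.eq_zero s hs]
    refine hF.eq_zero _ fun hsc => hs ?_
    have hθ := hF.cdf_mem_Ioo hsc
    have has : a (∫ x in Iic (s + c), F x) = s + c :=
      hF.cdf_strictMonoOn.injOn (haF _ hθ).1 hsc (haF _ hθ).2.1
    have h1 := hc _ hθ
    rw [has] at h1
    have h2 : b (∫ x in Iic (s + c), F x) = s := by linarith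
    exact h2 ▸ (hbG _ hθ).1

/-- A finite measurable weight `W` on `ℝⁿ` such that `W ^ p` is superadditive on its support and
positively homogeneous of degree one. -/
structure IsConicWeight (p : ℝ) {n : ℕ} (W : (Fin n → ℝ) → ℝ≥0∞) : Prop where
  pos : 0 < p
  measurable : Measurable W
  ne_top : ∀ x, W x ≠ ⊤
  superadd : ∀ x y, W x ≠ 0 → W y ≠ 0 → (W x ^ p + W y ^ p) ^ p⁻¹ ≤ W (x + y)
  hom : ∀ c : ℝ, 0 < c → ∀ x, W (c • x) = ENNReal.ofReal c ^ p⁻¹ * W x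

lemma lintegral_eq_pow_mul_lintegral_smul {n : ℕ} {c : ℝ} (hc : 0 < c) {f : (Fin n → ℝ) → ℝ≥0∞}
    (hf : Measurable f) : ∫⁻ y, f y = ENNReal.ofReal c ^ (n : ℝ) * ∫⁻ z, f (c • z) := by
  rw [← lintegral_map hf (measurable_const_smul c), Measure.map_addHaar_smul _ hc.ne',
    lintegral_smul_measure, smul_eq_mul, ← mul_assoc, Module.finrank_fin_fun,
    abs_of_pos (by positivity),
    ENNReal.rpow_natCast, ← ENNReal.ofReal_pow hc.le, ← ENNReal.ofReal_mul (by positivity),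
    mul_inv_cancel₀ (by positivity), ENNReal.ofReal_one, one_mul]

namespace IsConicWeight

variable {p : ℝ} {n : ℕ} {W : (Fin n → ℝ) → ℝ≥0∞}

lemma ne_zero_add (h : IsConicWeight p W) {x y : Fin n → ℝ} (hx : W x ≠ 0) (hy : W y ≠ 0) :
    W (x + y) ≠ 0 := by
  intro h0
  have h1 := h.superadd x y hx hy
  rw [h0, le_zero_iff, ENNReal.rpow_eq_zero_iff] at h1
  have hp := h.pos
  rcases h1 with ⟨h1, -⟩ | ⟨-, h1⟩
  · rw [add_eq_zero, ENNReal.rpow_eq_zero_iff] at h1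
    rcases h1.1 with ⟨h2, -⟩ | ⟨-, h2⟩
    · exact hx h2
    · exact absurd h2 (by linarith)
  · exact absurd h1 (by simp [hp.le])

lemma ne_zero_smul (h : IsConicWeight p W) {c : ℝ} (hc : 0 < c) {x : Fin n → ℝ} (hx : W x ≠ 0) :
    W (c • x) ≠ 0 := by
  rw [h.hom c hc]
  refine mul_ne_zero ?_ hx
  simp [ENNReal.rpow_eq_zero_iff, hc]

lemma convex_support (h : IsConicWeight p W) : Convex ℝ {x | W x ≠ 0} := by
  rw [convex_iff_forall_pos]
  intro x hx y hy a b ha hb _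
  exact h.ne_zero_add (h.ne_zero_smul ha hx) (h.ne_zero_smul hb hy)

lemma withDensity_eq_lintegral_indicator {S : Set (Fin n → ℝ)} (hS : IsOpen S) :
    volume.withDensity W S = ∫⁻ x, S.indicator W x := by
  rw [withDensity_apply' W S, lintegral_indicator hS.measurableSet]

lemma measurable_indicator (h : IsConicWeight p W) {S : Set (Fin n → ℝ)} (hS : IsOpen S) :
    Measurable (S.indicator W) :=
  h.measurable.indicator hS.measurableSet

lemma indicator_superadd (h : IsConicWeight p W) {S T : Set (Fin n → ℝ)} (x y : Fin n → ℝ)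
    (hx : S.indicator W x ≠ 0) (hy : T.indicator W y ≠ 0) :
    (S.indicator W x ^ p + T.indicator W y ^ p) ^ p⁻¹ ≤ (S + T).indicator W (x + y) := by
  have hxS := mem_of_indicator_ne_zero hx
  have hyT := mem_of_indicator_ne_zero hy
  rw [indicator_of_mem hxS] at hx ⊢
  rw [indicator_of_mem hyT] at hy ⊢
  rw [indicator_of_mem (add_mem_add hxS hyT)]
  exact h.superadd x y hx hy

/-- Brunn–Minkowski inequality for open sets. -/
lemma brunn_minkowski_isOpen (h : IsConicWeight p W) {S T : Set (Fin n → ℝ)} (hS : IsOpen S)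
    (hT : IsOpen T) (hS0 : volume.withDensity W S ≠ 0) (hT0 : volume.withDensity W T ≠ 0) :
    (volume.withDensity W S ^ (p⁻¹ + n)⁻¹ + volume.withDensity W T ^ (p⁻¹ + n)⁻¹) ^ (p⁻¹ + n) ≤
      volume.withDensity W (S + T) := by
  rw [withDensity_eq_lintegral_indicator hS] at hS0 ⊢
  rw [withDensity_eq_lintegral_indicator hT] at hT0 ⊢
  rw [withDensity_eq_lintegral_indicator hS.add_right]
  exact borell_brascamp_lieb h.pos n (h.measurable_indicator hS) (h.measurable_indicator hT)
    (h.measurable_indicator hS.add_right) h.indicator_superadd hS0 hT0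

lemma exponent_pos (h : IsConicWeight p W) : 0 < p⁻¹ + n := by
  have := h.pos
  positivity

/-- Brunn–Minkowski inequality for open sets of equal mass. -/
lemma two_rpow_mul_le (h : IsConicWeight p W) {S T : Set (Fin n → ℝ)} (hS : IsOpen S)
    (hT : IsOpen T) (hST : volume.withDensity W S = volume.withDensity W T) :
    2 ^ (p⁻¹ + n) * volume.withDensity W S ≤ volume.withDensity W (S + T) := by
  rcases eq_or_ne (volume.withDensity W S) 0 with h0 | h0
  · simp [h0]
  · have := h.brunn_minkowski_isOpen hS hT h0 (hST ▸ h0)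
    rwa [← hST, ← two_mul, ENNReal.mul_rpow_of_nonneg _ _ h.exponent_pos.le,
      ENNReal.rpow_inv_rpow h.exponent_pos.ne'] at this

lemma withDensity_smul (h : IsConicWeight p W) {c : ℝ} (hc : 0 < c) {S : Set (Fin n → ℝ)}
    (hS : IsOpen S) : volume.withDensity W (c • S) =
      ENNReal.ofReal c ^ (p⁻¹ + n) * volume.withDensity W S := by
  rw [withDensity_eq_lintegral_indicator hS, withDensity_eq_lintegral_indicator (hS.smul₀ hc.ne'),
    lintegral_eq_pow_mul_lintegral_smul hc (h.measurable_indicator (hS.smul₀ hc.ne')),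
    ENNReal.rpow_add _ _ (by simpa using hc) ENNReal.ofReal_ne_top, mul_comm (_ ^ p⁻¹), mul_assoc,
    ← lintegral_const_mul _ (h.measurable_indicator hS)]
  congr 2
  ext z
  by_cases hz : z ∈ S
  · rw [indicator_of_mem hz, indicator_of_mem (smul_mem_smul_set hz), h.hom c hc]
  · rw [indicator_of_notMem hz, indicator_of_notMem (by rwa [smul_mem_smul_set_iff₀ hc.ne']),
      mul_zero]

end IsConicWeight

/-- The marginal along the first coordinate of the weight `W` restricted to `S`. -/
noncomputable def marginal {k : ℕ} (W : (Fin (k + 1) → ℝ) → ℝ≥0∞) (S : Set (Fin (k + 1) → ℝ))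
    (s : ℝ) : ℝ≥0∞ :=
  ∫⁻ y : Fin k → ℝ, S.indicator W (Fin.cons s y)

section Marginal

variable {p : ℝ} {k : ℕ} {W : (Fin (k + 1) → ℝ) → ℝ≥0∞} {S T : Set (Fin (k + 1) → ℝ)}

lemma measurable_finCons_right (s : ℝ) :
    Measurable fun y : Fin k → ℝ => (Fin.cons s y : Fin (k + 1) → ℝ) :=
  measurable_finCons.comp measurable_prodMk_left

lemma continuous_finCons_right (s : ℝ) :
    Continuous fun y : Fin k → ℝ => (Fin.cons s y : Fin (k + 1) → ℝ) := by
  refine continuous_pi fun i => ?_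
  refine Fin.cases ?_ (fun j => ?_) i
  · simpa using continuous_const
  · simpa using continuous_apply j

lemma IsConicWeight.measurable_indicator_finCons (h : IsConicWeight p W) (hS : IsOpen S) (s : ℝ) :
    Measurable fun y : Fin k → ℝ => S.indicator W (Fin.cons s y) :=
  (h.measurable_indicator hS).comp (measurable_finCons_right s)

lemma marginal_mono (hST : S ⊆ T) (s : ℝ) : marginal W S s ≤ marginal W T s :=
  lintegral_mono fun _ => indicator_le_indicator_of_subset hST (fun _ => zero_le) _

lemma IsConicWeight.measurable_marginal (h : IsConicWeight p W) (hS : IsOpen S) :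
    Measurable (marginal W S) :=
  measurable_lintegral_finCons (h.measurable_indicator hS)

lemma marginal_inter_preimage (E : Set ℝ) :
    marginal W (S ∩ {x | x 0 ∈ E}) = E.indicator (marginal W S) := by
  ext s
  unfold marginal
  by_cases hs : s ∈ E
  · rw [indicator_of_mem hs]
    congr 1
    ext y
    refine indicator_eq_indicator ?_ rfl
    simp [hs]
  · rw [indicator_of_notMem hs]
    simp [indicator, hs]

lemma IsConicWeight.withDensity_inter_preimage (h : IsConicWeight p W) (hS : IsOpen S)
    {E : Set ℝ} (hE : MeasurableSet E) :
    volume.withDensity W (S ∩ {x | x 0 ∈ E}) = ∫⁻ s in E, marginal W S s := by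
  have hm : MeasurableSet (S ∩ {x | x 0 ∈ E}) :=
    hS.measurableSet.inter (measurable_pi_apply 0 hE)
  rw [withDensity_apply' W, ← lintegral_indicator hm,
    lintegral_fin_succ (h.measurable.indicator hm), ← lintegral_indicator hE]
  congr 1
  exact marginal_inter_preimage E

lemma IsConicWeight.withDensity_eq_lintegral_marginal (h : IsConicWeight p W) (hS : IsOpen S) :
    volume.withDensity W S = ∫⁻ s, marginal W S s := by
  simpa using h.withDensity_inter_preimage hS MeasurableSet.univ

lemma IsConicWeight.marginal_superadd (h : IsConicWeight p W) (hS : IsOpen S) (hT : IsOpen T)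
    (s t : ℝ) (hs : marginal W S s ≠ 0) (ht : marginal W T t ≠ 0) :
    (marginal W S s ^ (p⁻¹ + k)⁻¹ + marginal W T t ^ (p⁻¹ + k)⁻¹) ^ (p⁻¹ + k) ≤
      marginal W (S + T) (s + t) := by
  refine borell_brascamp_lieb h.pos k (f := fun y => S.indicator W (Fin.cons s y))
    (g := fun y => T.indicator W (Fin.cons t y))
    (h := fun y => (S + T).indicator W (Fin.cons (s + t) y))
    (h.measurable_indicator_finCons hS s) (h.measurable_indicator_finCons hT t)
    (h.measurable_indicator_finCons hS.add_right (s + t))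
    (fun x y hx hy => ?_) hs ht
  refine (h.indicator_superadd _ _ hx hy).trans_eq ?_
  congr 1
  ext i
  refine Fin.cases ?_ (fun j => ?_) i <;> simp

lemma IsConicWeight.marginal_smul (h : IsConicWeight p W) {c : ℝ} (hc : 0 < c) (hS : IsOpen S)
    (s : ℝ) : marginal W (c • S) (c * s) = ENNReal.ofReal c ^ (p⁻¹ + k) * marginal W S s := by
  unfold marginal
  rw [lintegral_eq_pow_mul_lintegral_smul hc
    (h.measurable_indicator_finCons (hS.smul₀ hc.ne') _),
    ENNReal.rpow_add _ _ (by simpa using hc) ENNReal.ofReal_ne_top, mul_comm (_ ^ p⁻¹), mul_assoc,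
    ← lintegral_const_mul _ (h.measurable_indicator_finCons hS s)]
  congr 2
  ext z
  have e : (Fin.cons (c * s) (c • z) : Fin (k + 1) → ℝ) = c • Fin.cons s z := by
    ext i
    refine Fin.cases ?_ (fun j => ?_) i <;> simp
  rw [e]
  by_cases hz : (Fin.cons s z : Fin (k + 1) → ℝ) ∈ S
  · rw [indicator_of_mem hz, indicator_of_mem (smul_mem_smul_set hz), h.hom c hc]
  · rw [indicator_of_notMem hz, indicator_of_notMem (by rwa [smul_mem_smul_set_iff₀ hc.ne']),
      mul_zero]

/-- Concavity of a power of the marginal of a convex set. -/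
lemma IsConicWeight.marginal_concave (h : IsConicWeight p W) (hS : IsOpen S) (hSc : Convex ℝ S)
    {s t a b : ℝ} (ha : 0 < a) (hb : 0 < b) (hab : a + b = 1) (hs : marginal W S s ≠ 0)
    (ht : marginal W S t ≠ 0) :
    ENNReal.ofReal a * marginal W S s ^ (p⁻¹ + k)⁻¹ + ENNReal.ofReal b * marginal W S t ^ (p⁻¹ + k)⁻¹
      ≤ marginal W S (a * s + b * t) ^ (p⁻¹ + k)⁻¹ := by
  have hpos : 0 < p⁻¹ + (k : ℝ) := by have := h.pos; positivity
  have ne : ∀ {c r : ℝ}, 0 < c → marginal W S r ≠ 0 →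
      ENNReal.ofReal c ^ (p⁻¹ + k) * marginal W S r ≠ 0 := by
    intro c r hc hr
    refine mul_ne_zero ?_ hr
    simp [ENNReal.rpow_eq_zero_iff, hc]
  have h1 := h.marginal_superadd (hS.smul₀ ha.ne') (hS.smul₀ hb.ne') (a * s) (b * t)
    (by rw [h.marginal_smul ha hS]; exact ne ha hs) (by rw [h.marginal_smul hb hS]; exact ne hb ht)
  have h2 := h1.trans (marginal_mono (hSc.set_combo_subset ha.le hb.le hab) _)
  rw [h.marginal_smul ha hS, h.marginal_smul hb hS,
    ENNReal.mul_rpow_of_nonneg _ _ (inv_nonneg.2 hpos.le),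
    ENNReal.mul_rpow_of_nonneg _ _ (inv_nonneg.2 hpos.le), ENNReal.rpow_rpow_inv hpos.ne',
    ENNReal.rpow_rpow_inv hpos.ne'] at h2
  have h3 := ENNReal.rpow_le_rpow h2 (inv_nonneg.2 hpos.le)
  rwa [ENNReal.rpow_rpow_inv hpos.ne'] at h3

lemma IsConicWeight.marginal_ne_zero_iff (h : IsConicWeight p W) (hS : IsOpen S)
    (hSW : ∀ x ∈ S, W x ≠ 0) (s : ℝ) : marginal W S s ≠ 0 ↔ s ∈ (fun x => x 0) '' S := by
  constructor
  · contrapose!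
    intro hs
    have : ∀ y : Fin k → ℝ, S.indicator W (Fin.cons s y) = 0 := fun y =>
      indicator_of_notMem (fun hy => hs ⟨_, hy, by simp⟩) _
    simp [marginal, this]
  · rintro ⟨x, hx, rfl⟩ h0
    rw [marginal, lintegral_eq_zero_iff
      (h.measurable_indicator_finCons hS _)] at h0
    have hopen : IsOpen ((fun y : Fin k → ℝ => (Fin.cons (x 0) y : Fin (k + 1) → ℝ)) ⁻¹' S) :=
      hS.preimage (continuous_finCons_right _)
    refine (hopen.measure_pos volume ⟨Fin.tail x, by simpa using hx⟩).ne' ?_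
    refine measure_mono_null (fun y hy => ?_) (ae_iff.1 h0)
    simp only [Pi.zero_apply, mem_ofPred_eq]
    rw [indicator_of_mem (show (Fin.cons (x 0) y : Fin (k + 1) → ℝ) ∈ S from hy)]
    exact hSW _ hy

end Marginal

/-- An open convex set of finite mass contained in the support of the weight. -/
structure IsConvexRegion {n : ℕ} (W : (Fin n → ℝ) → ℝ≥0∞) (S : Set (Fin n → ℝ)) : Prop where
  isOpen : IsOpen S
  convex : Convex ℝ S
  nonempty : S.Nonempty
  ne_zero : ∀ x ∈ S, W x ≠ 0
  ne_top : volume.withDensity W S ≠ ⊤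

section MarginalRegularity

variable {p : ℝ} {k : ℕ} {W : (Fin (k + 1) → ℝ) → ℝ≥0∞} {S : Set (Fin (k + 1) → ℝ)}

lemma IsConvexRegion.isOpen_image_eval (hS : IsConvexRegion W S) :
    IsOpen ((fun x : Fin (k + 1) → ℝ => x 0) '' S) :=
  isOpenMap_eval 0 _ hS.isOpen

lemma IsConvexRegion.convex_image_eval (hS : IsConvexRegion W S) :
    Convex ℝ ((fun x : Fin (k + 1) → ℝ => x 0) '' S) :=
  hS.convex.linear_image (LinearMap.proj 0)

lemma IsConvexRegion.lintegral_marginal_ne_top (h : IsConicWeight p W)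
    (hS : IsConvexRegion W S) : ∫⁻ s, marginal W S s ≠ ⊤ := by
  rw [← h.withDensity_eq_lintegral_marginal hS.isOpen]
  exact hS.ne_top

lemma IsConvexRegion.marginal_ne_top (h : IsConicWeight p W) (hS : IsConvexRegion W S) (s : ℝ) :
    marginal W S s ≠ ⊤ := by
  intro htop
  have hk : 0 < (p⁻¹ + (k : ℝ))⁻¹ := by have := h.pos; positivity
  have hs : marginal W S s ≠ 0 := by simp [htop]
  have hsI := (h.marginal_ne_zero_iff hS.isOpen hS.ne_zero s).1 hs
  obtain ⟨l, u, hlu, hsub⟩ :=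
    mem_nhds_iff_exists_Ioo_subset.1 (hS.isOpen_image_eval.mem_nhds hsI)
  obtain ⟨t, hst, htu⟩ := exists_between hlu.2
  have ht := (h.marginal_ne_zero_iff hS.isOpen hS.ne_zero t).2 (hsub ⟨hlu.1.trans hst, htu⟩)
  refine hS.lintegral_marginal_ne_top h (top_le_iff.1 ?_)
  calc (⊤ : ℝ≥0∞) = ∫⁻ r in Ioo s t, ⊤ := by simp [ENNReal.top_mul, hst]
    _ = ∫⁻ r in Ioo s t, marginal W S r := by
        refine setLIntegral_congr_fun measurableSet_Ioo fun r hr => ?_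
        have hts : 0 < t - s := by linarith
        have := h.marginal_concave hS.isOpen hS.convex (a := (t - r) / (t - s))
          (b := (r - s) / (t - s)) (div_pos (by linarith [hr.2]) hts)
          (div_pos (by linarith [hr.1]) hts) (by field_simp; ring) hs ht
        rw [htop, ENNReal.top_rpow_of_pos hk, ENNReal.mul_top, top_add, top_le_iff,
          ENNReal.rpow_eq_top_iff] at this
        · have hr' : (t - r) / (t - s) * s + (r - s) / (t - s) * t = r := by field_simp; ring
          rw [hr'] at this
          rcases this with ⟨-, h2⟩ | ⟨h2, -⟩
          · exact absurd h2 (by linarith)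
          · exact h2.symm
        · simpa using div_pos (by linarith [hr.2]) hts
    _ ≤ _ := setLIntegral_le_lintegral _ _

lemma IsConvexRegion.concaveOn_marginal (h : IsConicWeight p W) (hS : IsConvexRegion W S) :
    ConcaveOn ℝ ((fun x : Fin (k + 1) → ℝ => x 0) '' S)
      fun s => (marginal W S s).toReal ^ (p⁻¹ + (k : ℝ))⁻¹ := by
  have hk : 0 < (p⁻¹ + (k : ℝ))⁻¹ := by have := h.pos; positivity
  refine concaveOn_iff_forall_pos.2 ⟨hS.convex_image_eval, fun s hs t ht a b ha hb hab => ?_⟩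
  have key := h.marginal_concave hS.isOpen hS.convex ha hb hab
    ((h.marginal_ne_zero_iff hS.isOpen hS.ne_zero s).2 hs)
    ((h.marginal_ne_zero_iff hS.isOpen hS.ne_zero t).2 ht)
  have fin : ∀ r, marginal W S r ^ (p⁻¹ + (k : ℝ))⁻¹ ≠ ⊤ := fun r =>
    ENNReal.rpow_ne_top_of_nonneg hk.le (hS.marginal_ne_top h r)
  have := ENNReal.toReal_mono (fin _) key
  rwa [ENNReal.toReal_add (ENNReal.mul_ne_top ENNReal.ofReal_ne_top (fin _))
    (ENNReal.mul_ne_top ENNReal.ofReal_ne_top (fin _)), ENNReal.toReal_mul, ENNReal.toReal_mul,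
    ENNReal.toReal_ofReal ha.le, ENNReal.toReal_ofReal hb.le, ← ENNReal.toReal_rpow,
    ← ENNReal.toReal_rpow, ← ENNReal.toReal_rpow] at this

lemma IsConvexRegion.isIntervalDensity (h : IsConicWeight p W) (hS : IsConvexRegion W S) :
    IsIntervalDensity (fun s => (marginal W S s).toReal)
      ((fun x : Fin (k + 1) → ℝ => x 0) '' S) where
  isOpen := hS.isOpen_image_eval
  ordConnected := hS.convex_image_eval.ordConnected
  nonempty := hS.nonempty.image _
  continuousOn := by
    have hk : 0 < p⁻¹ + (k : ℝ) := by have := h.pos; positivity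
    have := ((hS.concaveOn_marginal h).continuousOn hS.isOpen_image_eval).rpow_const
      (p := p⁻¹ + (k : ℝ)) fun _ _ => Or.inr hk.le
    exact this.congr fun s _ => (Real.rpow_inv_rpow ENNReal.toReal_nonneg hk.ne').symm
  pos s hs := ENNReal.toReal_pos ((h.marginal_ne_zero_iff hS.isOpen hS.ne_zero s).2 hs)
    (hS.marginal_ne_top h s)
  eq_zero s hs := by
    rw [(not_iff_not.2 (h.marginal_ne_zero_iff hS.isOpen hS.ne_zero s)).2 hs |> not_not.1]
    rfl
  integrable := integrable_toReal_of_lintegral_ne_top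
    (h.measurable_marginal hS.isOpen).aemeasurable (hS.lintegral_marginal_ne_top h)

lemma IsConvexRegion.bddAbove_image_eval (h : IsConicWeight p W) (hS : IsConvexRegion W S) :
    BddAbove ((fun x : Fin (k + 1) → ℝ => x 0) '' S) := by
  by_contra hb
  have hk : 0 < p⁻¹ + (k : ℝ) := by have := h.pos; positivity
  obtain ⟨s, hs⟩ := hS.nonempty.image (fun x : Fin (k + 1) → ℝ => x 0)
  have hs0 := (h.marginal_ne_zero_iff hS.isOpen hS.ne_zero s).2 hs
  refine hS.lintegral_marginal_ne_top h (top_le_iff.1 ?_)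
  calc (⊤ : ℝ≥0∞) =
      ∫⁻ r in Ioi s, (ENNReal.ofReal (1 / 2) * marginal W S s ^ (p⁻¹ + (k : ℝ))⁻¹) ^ (p⁻¹ + (k : ℝ)) := by
        rw [setLIntegral_const, Real.volume_Ioi, ENNReal.mul_top]
        have hs1 : marginal W S s ^ (p⁻¹ + (k : ℝ))⁻¹ ≠ 0 := by
          simp [ENNReal.rpow_eq_zero_iff, hs0, hS.marginal_ne_top h s]
        have : ENNReal.ofReal (1 / 2) * marginal W S s ^ (p⁻¹ + (k : ℝ))⁻¹ ≠ 0 :=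
          mul_ne_zero (by simp) hs1
        intro h0
        rcases ENNReal.rpow_eq_zero_iff.1 h0 with h1 | h1
        · exact this h1.1
        · exact absurd h1.2 (by linarith)
    _ ≤ ∫⁻ r in Ioi s, marginal W S r := by
        refine setLIntegral_mono (h.measurable_marginal hS.isOpen) fun r hr => ?_
        obtain ⟨t, ht, hrt⟩ := not_bddAbove_iff.1 hb (2 * r - s)
        have hr' : s < r := hr
        have hts : 0 < t - s := by linarith
        have := h.marginal_concave hS.isOpen hS.convex (a := (t - r) / (t - s))
          (b := (r - s) / (t - s)) (div_pos (by linarith) hts)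
          (div_pos (by linarith) hts) (by field_simp; ring) hs0
          ((h.marginal_ne_zero_iff hS.isOpen hS.ne_zero t).2 ht)
        have hr' : (t - r) / (t - s) * s + (r - s) / (t - s) * t = r := by field_simp; ring
        rw [hr'] at this
        rw [← ENNReal.le_rpow_inv_iff hk]
        refine le_trans ?_ (le_self_add.trans this)
        refine mul_le_mul' (ENNReal.ofReal_le_ofReal ?_) le_rfl
        rw [div_le_div_iff₀ two_pos hts]
        linarith
    _ ≤ _ := setLIntegral_le_lintegral _ _

end MarginalRegularity

/-- Two regions of equal mass that achieve equality in the Brunn–Minkowski inequality. -/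
structure IsEqualityPair (p : ℝ) {n : ℕ} (W : (Fin n → ℝ) → ℝ≥0∞) (A B : Set (Fin n → ℝ)) :
    Prop where
  left : IsConvexRegion W A
  right : IsConvexRegion W B
  mass_eq : volume.withDensity W A = volume.withDensity W B
  mass_add_le : volume.withDensity W (A + B) ≤ 2 ^ (p⁻¹ + n) * volume.withDensity W A

lemma IsEqualityPair.symm {p : ℝ} {n : ℕ} {W : (Fin n → ℝ) → ℝ≥0∞} {A B : Set (Fin n → ℝ)}
    (h : IsEqualityPair p W A B) : IsEqualityPair p W B A where
  left := h.right
  right := h.left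
  mass_eq := h.mass_eq.symm
  mass_add_le := by rw [add_comm, ← h.mass_eq]; exact h.mass_add_le

lemma eq_of_rpow_add_rpow_mul_inv_add_inv_le {a b r : ℝ} (ha : 0 < a) (hb : 0 < b) (hr : 0 < r)
    (h : (a ^ r + b ^ r) ^ r⁻¹ * (a⁻¹ + b⁻¹) ≤ 2 ^ (r⁻¹ + 1)) : a = b := by
  obtain ⟨u, hu, rfl⟩ : ∃ u, 0 < u ∧ a = u ^ 2 := ⟨√a, by positivity, (Real.sq_sqrt ha.le).symm⟩
  obtain ⟨v, hv, rfl⟩ : ∃ v, 0 < v ∧ b = v ^ 2 := ⟨√b, by positivity, (Real.sq_sqrt hb.le).symm⟩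
  have h1 : 2 * (u * v) ^ r ≤ (u ^ 2) ^ r + (v ^ 2) ^ r := by
    have e : ∀ x : ℝ, 0 < x → (x ^ 2) ^ r = (x ^ r) ^ 2 := fun x hx => by
      rw [← Real.rpow_natCast, ← Real.rpow_natCast, ← Real.rpow_mul hx.le, ← Real.rpow_mul hx.le,
        mul_comm]
    rw [e u hu, e v hv, Real.mul_rpow hu.le hv.le]
    nlinarith [sq_nonneg (u ^ r - v ^ r)]
  have h2 : 2 ^ r⁻¹ * (u * v) ≤ ((u ^ 2) ^ r + (v ^ 2) ^ r) ^ r⁻¹ := by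
    calc 2 ^ r⁻¹ * (u * v) = (2 * (u * v) ^ r) ^ r⁻¹ := by
          rw [Real.mul_rpow zero_le_two (by positivity), Real.rpow_rpow_inv (by positivity) hr.ne']
      _ ≤ _ := Real.rpow_le_rpow (by positivity) h1 (by positivity)
  have h3 : 2 ^ r⁻¹ * (u * v) * ((u ^ 2)⁻¹ + (v ^ 2)⁻¹) ≤ 2 ^ r⁻¹ * 2 := by
    rw [← Real.rpow_add_one two_ne_zero]
    exact (mul_le_mul_of_nonneg_right h2 (by positivity)).trans h
  rw [mul_assoc] at h3
  have h4 := le_of_mul_le_mul_left h3 (by positivity)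
  have h5 : u * v * ((u ^ 2)⁻¹ + (v ^ 2)⁻¹) = (u ^ 2 + v ^ 2) / (u * v) := by field_simp; ring
  rw [h5, div_le_iff₀ (by positivity)] at h4
  have : u = v := by nlinarith [sq_nonneg (u - v)]
  rw [this]

lemma ENNReal.eq_of_rpow_add_rpow_mul_div_add_div_le {a b M : ℝ≥0∞} {r : ℝ} (ha : a ≠ 0)
    (ha' : a ≠ ⊤) (hb : b ≠ 0) (hb' : b ≠ ⊤) (hM : M ≠ 0) (hM' : M ≠ ⊤) (hr : 0 < r)
    (h : (a ^ r + b ^ r) ^ r⁻¹ * (M / a + M / b) ≤ 2 ^ (r⁻¹ + 1) * M) : a = b := by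
  have hfin : 2 ^ (r⁻¹ + 1) * M ≠ ⊤ :=
    ENNReal.mul_ne_top (ENNReal.rpow_ne_top_of_nonneg (by positivity) (by simp)) hM'
  have h1 := ENNReal.toReal_mono hfin h
  rw [ENNReal.toReal_mul, ENNReal.toReal_mul, ← ENNReal.toReal_rpow, ← ENNReal.toReal_rpow,
    ENNReal.toReal_add (by simp [ENNReal.rpow_eq_top_iff, ha, ha'])
      (by simp [ENNReal.rpow_eq_top_iff, hb, hb']),
    ENNReal.toReal_add (ENNReal.div_ne_top hM' ha) (ENNReal.div_ne_top hM' hb),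
    ENNReal.toReal_div, ENNReal.toReal_div, ← ENNReal.toReal_rpow, ← ENNReal.toReal_rpow] at h1
  have hMp := ENNReal.toReal_pos hM hM'
  refine (ENNReal.toReal_eq_toReal_iff' ha' hb').1
    (eq_of_rpow_add_rpow_mul_inv_add_inv_le (ENNReal.toReal_pos ha ha')
      (ENNReal.toReal_pos hb hb') hr (le_of_mul_le_mul_right ?_ hMp))
  refine le_trans (le_of_eq ?_) h1
  rw [div_eq_mul_inv, div_eq_mul_inv]
  ring

section EqualityPair

variable {p : ℝ} {k : ℕ} {W : (Fin (k + 1) → ℝ) → ℝ≥0∞} {A B : Set (Fin (k + 1) → ℝ)}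

lemma lintegral_eq_add_add_of_lt (f : ℝ → ℝ≥0∞) {s t : ℝ} (hst : s < t) :
    ∫⁻ x, f x = (∫⁻ x in Iio s, f x) + (∫⁻ x in Ioo s t, f x) + ∫⁻ x in Ioi t, f x := by
  rw [setLIntegral_congr Iio_ae_eq_Iic, setLIntegral_congr Ioo_ae_eq_Ioc,
    ← lintegral_union measurableSet_Ioc (Iic_disjoint_Ioc le_rfl), Iic_union_Ioc_eq_Iic hst.le,
    ← lintegral_union measurableSet_Ioi (Iic_disjoint_Ioi le_rfl), Iic_union_Ioi,
    Measure.restrict_univ]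

lemma isOpen_inter_eval_preimage {S : Set (Fin (k + 1) → ℝ)} (hS : IsOpen S) {E : Set ℝ}
    (hE : IsOpen E) : IsOpen (S ∩ {x | x 0 ∈ E}) :=
  hS.inter (hE.preimage (continuous_apply 0))

/-- Corresponding slabs of an equality pair again achieve equality. -/
lemma IsEqualityPair.slab (h : IsConicWeight p W) (hAB : IsEqualityPair p W A B)
    {s₁ s₂ t₁ t₂ : ℝ} (hs : s₁ < s₂) (ht : t₁ < t₂)
    (hlow : ∫⁻ s in Iio s₁, marginal W A s = ∫⁻ s in Iio t₁, marginal W B s)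
    (hhigh : ∫⁻ s in Ioi s₂, marginal W A s = ∫⁻ s in Ioi t₂, marginal W B s) :
    volume.withDensity W ((A ∩ {x | x 0 ∈ Ioo s₁ s₂}) + (B ∩ {x | x 0 ∈ Ioo t₁ t₂})) ≤
      2 ^ (p⁻¹ + (k + 1 : ℕ)) * ∫⁻ s in Ioo s₁ s₂, marginal W A s := by
  set μ := volume.withDensity W with hμ
  set N := p⁻¹ + ((k + 1 : ℕ) : ℝ) with hN
  have hA := hAB.left.isOpen
  have hB := hAB.right.isOpen
  have mA : ∀ {E : Set ℝ}, MeasurableSet E → μ (A ∩ {x | x 0 ∈ E}) = ∫⁻ s in E, marginal W A s :=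
    fun hE => h.withDensity_inter_preimage hA hE
  have mB : ∀ {E : Set ℝ}, MeasurableSet E → μ (B ∩ {x | x 0 ∈ E}) = ∫⁻ s in E, marginal W B s :=
    fun hE => h.withDensity_inter_preimage hB hE
  have lowle := h.two_rpow_mul_le (isOpen_inter_eval_preimage hA (isOpen_Iio (a := s₁)))
    (isOpen_inter_eval_preimage hB (isOpen_Iio (a := t₁)))
    (by rw [← hμ, mA measurableSet_Iio, mB measurableSet_Iio, hlow])
  have highle := h.two_rpow_mul_le (isOpen_inter_eval_preimage hA (isOpen_Ioi (a := s₂)))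
    (isOpen_inter_eval_preimage hB (isOpen_Ioi (a := t₂)))
    (by rw [← hμ, mA measurableSet_Ioi, mB measurableSet_Ioi, hhigh])
  rw [← hμ, mA measurableSet_Iio, ← hN] at lowle
  rw [← hμ, mA measurableSet_Ioi, ← hN] at highle
  set P := (A ∩ {x | x 0 ∈ Iio s₁}) + (B ∩ {x | x 0 ∈ Iio t₁})
  set Q := (A ∩ {x | x 0 ∈ Ioo s₁ s₂}) + (B ∩ {x | x 0 ∈ Ioo t₁ t₂})
  set R := (A ∩ {x | x 0 ∈ Ioi s₂}) + (B ∩ {x | x 0 ∈ Ioi t₂})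
  have hQo : IsOpen Q := (isOpen_inter_eval_preimage hA isOpen_Ioo).add_right
  have hRo : IsOpen R := (isOpen_inter_eval_preimage hA isOpen_Ioi).add_right
  have hP : ∀ x ∈ P, x 0 < s₁ + t₁ := by
    rintro _ ⟨x, ⟨-, hx⟩, y, ⟨-, hy⟩, rfl⟩
    exact add_lt_add hx hy
  have hQ : ∀ x ∈ Q, s₁ + t₁ < x 0 ∧ x 0 < s₂ + t₂ := by
    rintro _ ⟨x, ⟨-, hx⟩, y, ⟨-, hy⟩, rfl⟩
    exact ⟨add_lt_add hx.1 hy.1, add_lt_add hx.2 hy.2⟩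
  have hR : ∀ x ∈ R, s₂ + t₂ < x 0 := by
    rintro _ ⟨x, ⟨-, hx⟩, y, ⟨-, hy⟩, rfl⟩
    exact add_lt_add hx hy
  have hsub : P ∪ Q ∪ R ⊆ A + B :=
    union_subset (union_subset (add_subset_add inter_subset_left inter_subset_left)
      (add_subset_add inter_subset_left inter_subset_left))
      (add_subset_add inter_subset_left inter_subset_left)
  have hPQ : Disjoint P Q := disjoint_left.2 fun x hx hx' => by
    linarith [hP x hx, (hQ x hx').1]
  have hPQR : Disjoint (P ∪ Q) R := disjoint_left.2 fun x hx hx' => by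
    rcases hx with hx | hx
    · linarith [hP x hx, hR x hx']
    · linarith [(hQ x hx).2, hR x hx']
  have total : μ P + μ Q + μ R ≤ 2 ^ N * ((∫⁻ s in Iio s₁, marginal W A s) +
      (∫⁻ s in Ioo s₁ s₂, marginal W A s) + ∫⁻ s in Ioi s₂, marginal W A s) := by
    rw [← measure_union hPQ hQo.measurableSet, ← measure_union hPQR hRo.measurableSet,
      ← lintegral_eq_add_add_of_lt _ hs, ← h.withDensity_eq_lintegral_marginal hA]
    exact (measure_mono hsub).trans hAB.mass_add_le
  have hNtop : (2 : ℝ≥0∞) ^ N ≠ ⊤ :=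
    ENNReal.rpow_ne_top_of_nonneg (h.exponent_pos).le (by simp)
  have fin : ∀ E, 2 ^ N * (∫⁻ s in E, marginal W A s) ≠ ⊤ := fun E =>
    ENNReal.mul_ne_top hNtop (ne_top_of_le_ne_top (hAB.left.lintegral_marginal_ne_top h)
      (setLIntegral_le_lintegral _ _))
  have total' : (2 ^ N * (∫⁻ s in Iio s₁, marginal W A s) +
      2 ^ N * ∫⁻ s in Ioi s₂, marginal W A s) + μ Q ≤
      (2 ^ N * (∫⁻ s in Iio s₁, marginal W A s) +
      2 ^ N * ∫⁻ s in Ioi s₂, marginal W A s) + 2 ^ N * (∫⁻ s in Ioo s₁ s₂, marginal W A s) := by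
    calc _ ≤ (μ P + μ R) + μ Q := by gcongr
      _ = μ P + μ Q + μ R := by ring
      _ ≤ _ := total
      _ = _ := by ring
  exact (ENNReal.add_le_add_iff_left (ENNReal.add_ne_top.2 ⟨fin _, fin _⟩)).1 total'

lemma IsConvexRegion.setLIntegral_marginal (h : IsConicWeight p W) (hA : IsConvexRegion W A)
    (E : Set ℝ) : ∫⁻ s in E, marginal W A s =
      ENNReal.ofReal (∫ s in E, (marginal W A s).toReal) := by
  rw [integral_toReal (h.measurable_marginal hA.isOpen).aemeasurable
    (Eventually.of_forall fun s => (hA.marginal_ne_top h s).lt_top), ENNReal.ofReal_toReal]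
  exact ne_top_of_le_ne_top (hA.lintegral_marginal_ne_top h) (setLIntegral_le_lintegral _ _)

lemma IsEqualityPair.integral_marginal_eq (h : IsConicWeight p W) (hAB : IsEqualityPair p W A B) :
    ∫ s, (marginal W A s).toReal = ∫ s, (marginal W B s).toReal := by
  have hA := hAB.left.setLIntegral_marginal h univ
  have hB := hAB.right.setLIntegral_marginal h univ
  simp only [Measure.restrict_univ] at hA hB
  rw [← h.withDensity_eq_lintegral_marginal hAB.left.isOpen] at hA
  rw [← h.withDensity_eq_lintegral_marginal hAB.right.isOpen, ← hAB.mass_eq, hA] at hB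
  exact (ENNReal.ofReal_eq_ofReal_iff (integral_nonneg fun _ => ENNReal.toReal_nonneg)
    (integral_nonneg fun _ => ENNReal.toReal_nonneg)).1 hB

lemma IsEqualityPair.slabDominated (h : IsConicWeight p W) (hAB : IsEqualityPair p W A B) :
    SlabDominated (fun s => (marginal W A s).toReal) (fun s => (marginal W B s).toReal)
      ((fun x : Fin (k + 1) → ℝ => x 0) '' B) := by
  intro s₁ s₂ t₁ ht₁ t₂ ht₂ hs ht h₁ h₂ hlt m hm t htt
  have hk : 0 < (p⁻¹ + (k : ℝ))⁻¹ := by have := h.pos; positivity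
  have dA := hAB.left.isIntervalDensity h
  have dB := hAB.right.isIntervalDensity h
  have hA := hAB.left.isOpen
  have hB := hAB.right.isOpen
  have hlow : ∫⁻ s in Iio s₁, marginal W A s = ∫⁻ s in Iio t₁, marginal W B s := by
    rw [setLIntegral_congr Iio_ae_eq_Iic, setLIntegral_congr Iio_ae_eq_Iic,
      hAB.left.setLIntegral_marginal h, hAB.right.setLIntegral_marginal h, h₁]
  have hhigh : ∫⁻ s in Ioi s₂, marginal W A s = ∫⁻ s in Ioi t₂, marginal W B s := by
    rw [hAB.left.setLIntegral_marginal h, hAB.right.setLIntegral_marginal h]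
    congr 1
    have e1 := dA.cdf_add_Ioi s₂
    have e2 := dB.cdf_add_Ioi t₂
    have e3 := hAB.integral_marginal_eq h
    linarith
  have hmidA : ∫⁻ s in Ioo s₁ s₂, marginal W A s =
      ENNReal.ofReal ((∫ s in Iic s₂, (marginal W A s).toReal) -
        ∫ s in Iic s₁, (marginal W A s).toReal) := by
    rw [setLIntegral_congr Ioo_ae_eq_Ioc, hAB.left.setLIntegral_marginal h, dA.cdf_sub,
      intervalIntegral.integral_of_le hs.le]
  have hmidB : ∫⁻ s in Ioo t₁ t₂, marginal W B s = ∫⁻ s in Ioo s₁ s₂, marginal W A s := by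
    rw [hmidA, h₁, h₂, setLIntegral_congr Ioo_ae_eq_Ioc, hAB.right.setLIntegral_marginal h,
      dB.cdf_sub, intervalIntegral.integral_of_le ht.le]
  have hslab := hAB.slab h hs ht hlow hhigh
  set A' := A ∩ {x | x 0 ∈ Ioo s₁ s₂} with hA'
  set B' := B ∩ {x | x 0 ∈ Ioo t₁ t₂} with hB'
  have hA'o : IsOpen A' := isOpen_inter_eval_preimage hA isOpen_Ioo
  have hB'o : IsOpen B' := isOpen_inter_eval_preimage hB isOpen_Ioo
  have iA : ∫⁻ s, marginal W A' s = ∫⁻ s in Ioo s₁ s₂, marginal W A s := by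
    rw [hA', marginal_inter_preimage, lintegral_indicator measurableSet_Ioo]
  have iB : ∫⁻ s, marginal W B' s = ∫⁻ s in Ioo s₁ s₂, marginal W A s := by
    rw [hB', marginal_inter_preimage, lintegral_indicator measurableSet_Ioo, hmidB]
  set M := ∫⁻ s in Ioo s₁ s₂, marginal W A s
  have hM0 : M ≠ 0 := by rw [hmidA]; simpa using hlt
  have hMtop : M ≠ ⊤ := by rw [hmidA]; exact ENNReal.ofReal_ne_top
  have ne0 : ∀ f : ℝ → ℝ≥0∞, ∫⁻ s, f s = M → ⨆ s, f s ≠ 0 := by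
    intro f hf h0
    apply hM0
    rw [← hf]
    have : f = 0 := funext fun s => le_zero_iff.1 (h0 ▸ le_iSup f s)
    simp [this]
  have supA : ⨆ s, marginal W A' s ≤ ENNReal.ofReal m := by
    refine iSup_le fun s => ?_
    rw [hA', marginal_inter_preimage]
    by_cases hsI : s ∈ Ioo s₁ s₂
    · rw [indicator_of_mem hsI, ← ENNReal.ofReal_toReal (hAB.left.marginal_ne_top h s)]
      exact ENNReal.ofReal_le_ofReal (hm s hsI)
    · simp [indicator_of_notMem hsI]
  have supB : ⨆ s, marginal W B' s ≠ ⊤ := by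
    have hsub : Icc t₁ t₂ ⊆ (fun x : Fin (k + 1) → ℝ => x 0) '' B := dB.ordConnected.out ht₁ ht₂
    obtain ⟨C, hC⟩ := isCompact_Icc.exists_bound_of_continuousOn (dB.continuousOn.mono hsub)
    refine ne_top_of_le_ne_top (ENNReal.ofReal_ne_top (r := C)) (iSup_le fun s => ?_)
    rw [hB', marginal_inter_preimage]
    by_cases hsI : s ∈ Ioo t₁ t₂
    · rw [indicator_of_mem hsI, ← ENNReal.ofReal_toReal (hAB.right.marginal_ne_top h s)]
      exact ENNReal.ofReal_le_ofReal ((le_abs_self _).trans (hC s (Ioo_subset_Icc_self hsI)))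
    · simp [indicator_of_notMem hsI]
  have key := sup_mul_lintegral_add_le (h.measurable_marginal hA'o) (h.measurable_marginal hB'o)
    (h.measurable_marginal hA'o.add_right) hk rfl rfl (ne0 _ iA)
    (ne_top_of_le_ne_top ENNReal.ofReal_ne_top supA) (ne0 _ iB) supB
    (fun s t hs ht => by rw [inv_inv]; exact h.marginal_superadd hA'o hB'o s t hs ht)
  rw [iA, iB, ← h.withDensity_eq_lintegral_marginal hA'o.add_right] at key
  have hab := ENNReal.eq_of_rpow_add_rpow_mul_div_add_div_le (ne0 _ iA)
    (ne_top_of_le_ne_top ENNReal.ofReal_ne_top supA) (ne0 _ iB) supB hM0 hMtop hk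
    (key.trans (hslab.trans (le_of_eq (by push_cast; rw [inv_inv, add_assoc]))))
  have hm0 : 0 ≤ m := by
    obtain ⟨s, hs'⟩ := exists_between hs
    exact ENNReal.toReal_nonneg.trans (hm s hs')
  refine ENNReal.toReal_le_of_le_ofReal hm0 (le_trans ?_ (hab ▸ supA))
  refine le_trans (le_of_eq ?_) (le_iSup (marginal W B') t)
  rw [hB', marginal_inter_preimage, indicator_of_mem htt]

/-- The marginals of an equality pair are translates of each other. -/
lemma IsEqualityPair.exists_marginal_translate (h : IsConicWeight p W)
    (hAB : IsEqualityPair p W A B) : ∃ c, ∀ s, marginal W A (s + c) = marginal W B s := by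
  obtain ⟨c, hc⟩ := exists_translate_of_slabDominated (hAB.left.isIntervalDensity h)
    (hAB.right.isIntervalDensity h) (hAB.integral_marginal_eq h) (hAB.slabDominated h)
    (hAB.symm.slabDominated h)
  exact ⟨c, fun s => (ENNReal.toReal_eq_toReal_iff' (hAB.left.marginal_ne_top h _)
    (hAB.right.marginal_ne_top h _)).1 (hc s)⟩

end EqualityPair

lemma IsEqualityPair.exists_map_eval_eq {p : ℝ} {k : ℕ} {W : (Fin (k + 1) → ℝ) → ℝ≥0∞}
    {A B : Set (Fin (k + 1) → ℝ)} (h : IsConicWeight p W) (hAB : IsEqualityPair p W A B) :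
    ∃ c : ℝ, ((volume.withDensity W).restrict A).map (fun x => x 0) =
      ((volume.withDensity W).restrict B).map (fun x => x 0 + c) := by
  obtain ⟨c, hc⟩ := hAB.exists_marginal_translate h
  have hm : Measurable fun x : Fin (k + 1) → ℝ => x 0 := measurable_pi_apply 0
  refine ⟨c, Measure.ext fun E hE => ?_⟩
  have hE' : MeasurableSet {s : ℝ | s + c ∈ E} := (measurable_add_const c) hE
  rw [Measure.map_apply hm hE, Measure.map_apply (hm.add_const c) hE,
    Measure.restrict_apply (hm hE), Measure.restrict_apply ((hm.add_const c) hE),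
    inter_comm, inter_comm _ B]
  refine (h.withDensity_inter_preimage hAB.left.isOpen hE).trans
    (Eq.trans ?_ (h.withDensity_inter_preimage hAB.right.isOpen hE').symm)
  rw [← lintegral_indicator hE, ← lintegral_indicator hE',
    ← lintegral_add_right_eq_self _ c]
  congr 1
  ext s
  by_cases hs : s + c ∈ E
  · rw [indicator_of_mem hs, indicator_of_mem (show s ∈ {s : ℝ | s + c ∈ E} from hs), hc]
  · rw [indicator_of_notMem hs, indicator_of_notMem (show s ∉ {s : ℝ | s + c ∈ E} from hs)]

lemma exists_linearEquiv_apply_zero {k : ℕ} {L : (Fin (k + 1) → ℝ) →ₗ[ℝ] ℝ} (hL : L ≠ 0) :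
    ∃ e : (Fin (k + 1) → ℝ) ≃ₗ[ℝ] (Fin (k + 1) → ℝ), ∀ x, e x 0 = L x := by
  obtain ⟨j, hj⟩ : ∃ j, L (Pi.single j 1) ≠ 0 := by
    by_contra! hall
    exact hL (LinearMap.pi_ext' fun j => LinearMap.ext_ring (by simpa using hall j))
  let f : (Fin (k + 1) → ℝ) →ₗ[ℝ] (Fin (k + 1) → ℝ) :=
    LinearMap.pi fun i => if i = 0 then L else LinearMap.proj (Equiv.swap 0 j i)
  have hf : Function.Injective f := by
    refine (injective_iff_map_eq_zero f).2 fun x hx => ?_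
    have hx0 : L x = 0 := by simpa [f] using congrFun hx 0
    have hxi : ∀ i, i ≠ j → x i = 0 := fun i hi => by
      have hi' : Equiv.swap 0 j i ≠ 0 := fun h => hi (by simpa using congrArg (Equiv.swap 0 j) h)
      simpa [f, hi'] using congrFun hx (Equiv.swap 0 j i)
    have hxs : x = x j • Pi.single j 1 := by
      ext i
      by_cases hi : i = j
      · subst hi; simp
      · simp [hi, hxi i hi]
    rw [hxs, map_smul, smul_eq_mul, mul_eq_zero] at hx0
    rw [hxs, hx0.resolve_right hj, zero_smul]
  exact ⟨LinearEquiv.ofInjectiveEndo f hf, fun x => by simp [f]⟩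

section LinearChange

variable {p : ℝ} {n : ℕ} {W : (Fin n → ℝ) → ℝ≥0∞} {A B S : Set (Fin n → ℝ)}

lemma measurable_linearEquiv (e : (Fin n → ℝ) ≃ₗ[ℝ] (Fin n → ℝ)) : Measurable e :=
  e.toContinuousLinearEquiv.continuous.measurable

lemma IsConicWeight.comp_linearEquiv (h : IsConicWeight p W)
    (e : (Fin n → ℝ) ≃ₗ[ℝ] (Fin n → ℝ)) : IsConicWeight p (W ∘ e.symm) where
  pos := h.pos
  measurable := h.measurable.comp (measurable_linearEquiv e.symm)
  ne_top x := h.ne_top _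
  superadd x y hx hy := by simpa using h.superadd _ _ hx hy
  hom c hc x := by simpa using h.hom c hc (e.symm x)

lemma IsConicWeight.exists_withDensity_comp (h : IsConicWeight p W)
    (e : (Fin n → ℝ) ≃ₗ[ℝ] (Fin n → ℝ)) : ∃ κ : ℝ≥0∞, κ ≠ 0 ∧ κ ≠ ⊤ ∧
      volume.withDensity (W ∘ e.symm) = κ • (volume.withDensity W).map e := by
  have hdet : LinearMap.det (e.symm : (Fin n → ℝ) →ₗ[ℝ] (Fin n → ℝ)) ≠ 0 :=
    (LinearEquiv.isUnit_det' e.symm).ne_zero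
  have hmap := Measure.map_linearMap_addHaar_eq_smul_addHaar
    (volume : Measure (Fin n → ℝ)) hdet
  refine ⟨ENNReal.ofReal |(LinearMap.det (e.symm : (Fin n → ℝ) →ₗ[ℝ] (Fin n → ℝ)))⁻¹|, ?_,
    ENNReal.ofReal_ne_top, Measure.ext fun E hE => ?_⟩
  · rw [Ne, ENNReal.ofReal_eq_zero, not_le]
    exact abs_pos.2 (inv_ne_zero hdet)
  · have hE' : MeasurableSet (e ⁻¹' E) := measurable_linearEquiv e hE
    rw [Measure.smul_apply, Measure.map_apply (measurable_linearEquiv e) hE,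
      withDensity_apply _ hE, withDensity_apply _ hE', ← lintegral_indicator hE,
      ← lintegral_indicator hE', ← lintegral_smul_measure, ← hmap]
    refine Eq.trans ?_ (lintegral_map (h.measurable.indicator hE')
      (measurable_linearEquiv e.symm)).symm
    congr 1
    ext x
    by_cases hx : x ∈ E
    · rw [indicator_of_mem hx, indicator_of_mem (by simpa using hx), Function.comp_apply]
    · rw [indicator_of_notMem hx, indicator_of_notMem (by simpa using hx)]

lemma IsConvexRegion.image_linearEquiv (h : IsConicWeight p W) (hS : IsConvexRegion W S)
    (e : (Fin n → ℝ) ≃ₗ[ℝ] (Fin n → ℝ)) : IsConvexRegion (W ∘ e.symm) (e '' S) where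
  isOpen := e.toContinuousLinearEquiv.toHomeomorph.isOpenMap _ hS.isOpen
  convex := hS.convex.linear_image (e : (Fin n → ℝ) →ₗ[ℝ] (Fin n → ℝ))
  nonempty := hS.nonempty.image _
  ne_zero := by
    rintro _ ⟨x, hx, rfl⟩
    simpa using hS.ne_zero x hx
  ne_top := by
    obtain ⟨κ, -, hκ, hmap⟩ := h.exists_withDensity_comp e
    have ho : IsOpen (e '' S) := e.toContinuousLinearEquiv.toHomeomorph.isOpenMap _ hS.isOpen
    rw [hmap, Measure.smul_apply, Measure.map_apply (measurable_linearEquiv e) ho.measurableSet,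
      preimage_image_eq _ e.injective]
    exact ENNReal.mul_ne_top hκ hS.ne_top

lemma IsEqualityPair.image_linearEquiv (h : IsConicWeight p W) (hAB : IsEqualityPair p W A B)
    (e : (Fin n → ℝ) ≃ₗ[ℝ] (Fin n → ℝ)) :
    IsEqualityPair p (W ∘ e.symm) (e '' A) (e '' B) := by
  obtain ⟨κ, -, -, hmap⟩ := h.exists_withDensity_comp e
  have mass : ∀ {S : Set (Fin n → ℝ)}, IsOpen S →
      volume.withDensity (W ∘ e.symm) (e '' S) = κ * volume.withDensity W S := by
    intro S hS
    have ho : IsOpen (e '' S) := e.toContinuousLinearEquiv.toHomeomorph.isOpenMap _ hS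
    rw [hmap, Measure.smul_apply, Measure.map_apply (measurable_linearEquiv e) ho.measurableSet,
      preimage_image_eq _ e.injective, smul_eq_mul]
  refine ⟨hAB.left.image_linearEquiv h e, hAB.right.image_linearEquiv h e, ?_, ?_⟩
  · rw [mass hAB.left.isOpen, mass hAB.right.isOpen, hAB.mass_eq]
  · rw [← image_add, mass hAB.left.isOpen.add_right, mass hAB.left.isOpen, mul_left_comm]
    exact mul_le_mul' le_rfl hAB.mass_add_le

lemma IsEqualityPair.exists_map_eq (h : IsConicWeight p W) (hAB : IsEqualityPair p W A B)
    (L : (Fin n → ℝ) →ₗ[ℝ] ℝ) : ∃ c : ℝ, ((volume.withDensity W).restrict A).map L =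
      ((volume.withDensity W).restrict B).map (fun x => L x + c) := by
  by_cases hL : L = 0
  · refine ⟨0, ?_⟩
    have hm : ∀ S : Set (Fin n → ℝ), ((volume.withDensity W).restrict S).map (fun _ => (0 : ℝ)) =
        volume.withDensity W S • Measure.dirac 0 := fun S => by simp [Measure.map_const]
    simp only [hL, LinearMap.zero_apply, add_zero]
    refine Eq.trans ?_ ((hm A).trans ((congrArg (· • _) hAB.mass_eq).trans (hm B).symm))
    rfl
  · obtain _ | k := n
    · exact absurd (LinearMap.ext fun x => by rw [Subsingleton.elim x 0, map_zero, map_zero]) hL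
    obtain ⟨e, he⟩ := exists_linearEquiv_apply_zero hL
    obtain ⟨κ, hκ0, hκ, hmap⟩ := h.exists_withDensity_comp e
    obtain ⟨c, hc⟩ := (hAB.image_linearEquiv h e).exists_map_eval_eq (h.comp_linearEquiv e)
    have hr : ∀ {S : Set (Fin (k + 1) → ℝ)}, IsOpen S →
        (volume.withDensity (W ∘ e.symm)).restrict (e '' S) =
          κ • ((volume.withDensity W).restrict S).map e := by
      intro S hS
      have ho : IsOpen (e '' S) := e.toContinuousLinearEquiv.toHomeomorph.isOpenMap _ hS
      rw [hmap, Measure.restrict_smul, Measure.restrict_map (measurable_linearEquiv e)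
        ho.measurableSet, preimage_image_eq _ e.injective]
    have hm : Measurable fun x : Fin (k + 1) → ℝ => x 0 := measurable_pi_apply 0
    rw [hr hAB.left.isOpen, hr hAB.right.isOpen, Measure.map_smul, Measure.map_smul,
      Measure.map_map hm (measurable_linearEquiv e),
      Measure.map_map (hm.add_const c) (measurable_linearEquiv e)] at hc
    have hc' := congrArg (κ⁻¹ • ·) hc
    simp only [smul_smul, ENNReal.inv_mul_cancel hκ0 hκ, one_smul] at hc'
    refine ⟨c, ?_⟩
    have e1 : (fun x => x 0) ∘ e = L := funext he
    have e2 : (fun x => x 0 + c) ∘ e = fun x => L x + c := funext fun x => by simp [he]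
    rwa [e1, e2] at hc'

lemma IsConvexRegion.bddAbove_image (h : IsConicWeight p W) (hS : IsConvexRegion W S)
    (L : (Fin n → ℝ) →ₗ[ℝ] ℝ) : BddAbove (L '' S) := by
  by_cases hL : L = 0
  · refine ⟨0, ?_⟩
    rintro _ ⟨x, -, rfl⟩
    simp [hL]
  · obtain _ | k := n
    · exact absurd (LinearMap.ext fun x => by rw [Subsingleton.elim x 0, map_zero, map_zero]) hL
    obtain ⟨e, he⟩ := exists_linearEquiv_apply_zero hL
    have := (hS.image_linearEquiv h e).bddAbove_image_eval (h.comp_linearEquiv e)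
    rw [image_image] at this
    simpa [he] using this

lemma IsConvexRegion.isBounded (h : IsConicWeight p W) (hS : IsConvexRegion W S) :
    Bornology.IsBounded S := by
  refine Bornology.forall_isBounded_image_eval_iff.1 fun i => ?_
  refine isBounded_iff_bddBelow_bddAbove.2 ⟨?_, ?_⟩
  · obtain ⟨C, hC⟩ := hS.bddAbove_image h (-LinearMap.proj i)
    refine ⟨-C, ?_⟩
    rintro _ ⟨x, hx, rfl⟩
    have := hC ⟨x, hx, rfl⟩
    simp only [LinearMap.neg_apply, LinearMap.proj_apply] at this
    simp only [Function.eval]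
    linarith
  · exact hS.bddAbove_image h (LinearMap.proj i)

lemma IsConvexRegion.integrable_id (h : IsConicWeight p W) (hS : IsConvexRegion W S) :
    Integrable (fun x => x) ((volume.withDensity W).restrict S) := by
  obtain ⟨C, hC⟩ := (hS.isBounded h).exists_norm_le
  exact Measure.integrableOn_of_bounded (M := C) hS.ne_top aestronglyMeasurable_id
    ((ae_restrict_iff' hS.isOpen.measurableSet).2 (Eventually.of_forall hC))

lemma IsConvexRegion.measure_ne_zero (hS : IsConvexRegion W S) (hW : Measurable W) :
    volume.withDensity W S ≠ 0 := by
  intro h0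
  rw [withDensity_apply_eq_zero hW] at h0
  have : {x | W x ≠ 0} ∩ S = S := inter_eq_right.2 hS.ne_zero
  rw [this] at h0
  exact hS.nonempty.ne_empty (hS.isOpen.measure_eq_zero_iff volume |>.1 h0)

/-- The weighted measures restricted to an equality pair are translates of each other. -/
lemma IsEqualityPair.exists_restrict_eq_map (h : IsConicWeight p W)
    (hAB : IsEqualityPair p W A B) : ∃ b : Fin n → ℝ, (volume.withDensity W).restrict A =
      ((volume.withDensity W).restrict B).map (fun x => x + b) := by
  set νA := (volume.withDensity W).restrict A with hνA
  set νB := (volume.withDensity W).restrict B with hνB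
  have : IsFiniteMeasure νA := ⟨by simpa [hνA] using hAB.left.ne_top.lt_top⟩
  have : IsFiniteMeasure νB := ⟨by simpa [hνB] using hAB.right.ne_top.lt_top⟩
  have hM : 0 < νB.real univ := by
    simpa [hνB, Measure.real] using ENNReal.toReal_pos
      (hAB.right.measure_ne_zero h.measurable) hAB.right.ne_top
  have iA : Integrable (fun x => x) νA := hAB.left.integrable_id h
  have iB : Integrable (fun x => x) νB := hAB.right.integrable_id h
  refine ⟨(νB.real univ)⁻¹ • ((∫ x, x ∂νA) - ∫ x, x ∂νB), Measure.ext_of_charFunDual ?_⟩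
  ext L
  obtain ⟨c, hc⟩ := hAB.exists_map_eq h (L : (Fin n → ℝ) →ₗ[ℝ] ℝ)
  have hLm : Measurable L := L.continuous.measurable
  have hc1 : ∫ x, L x ∂νA = (∫ x, L x ∂νB) + νB.real univ * c := by
    have h1 : ∫ s, s ∂(νA.map L) = ∫ x, L x ∂νA :=
      integral_map hLm.aemeasurable aestronglyMeasurable_id
    have h2 : ∫ s, s ∂(νB.map fun x => L x + c) = ∫ x, (L x + c) ∂νB :=
      integral_map (hLm.add_const c).aemeasurable aestronglyMeasurable_id
    have h3 : νA.map L = νB.map fun x => L x + c := hc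
    rw [← h1, h3, h2, integral_add (L.integrable_comp iB) (integrable_const c), integral_const,
      smul_eq_mul]
  have hLb : L ((νB.real univ)⁻¹ • ((∫ x, x ∂νA) - ∫ x, x ∂νB)) = c := by
    rw [map_smul, map_sub, ← L.integral_comp_comm iA, ← L.integral_comp_comm iB, hc1, smul_eq_mul]
    field_simp
    ring
  rw [charFunDual_eq_charFun_map_one, charFunDual_eq_charFun_map_one,
    Measure.map_map hLm (measurable_add_const _)]
  congr 1
  refine hc.trans ?_
  congr 1
  ext x
  simp [hLb]

lemma subset_of_measure_diff_eq_zero (hW : Measurable W) (hAo : IsOpen A)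
    (hAW : ∀ x ∈ A, W x ≠ 0) (hBo : IsOpen B) (hBc : Convex ℝ B)
    (h0 : volume.withDensity W (A \ B) = 0) : A ⊆ B := by
  rcases A.eq_empty_or_nonempty with rfl | hne
  · exact empty_subset _
  rw [withDensity_apply_eq_zero hW] at h0
  have h1 : volume (A \ closure B) = 0 := measure_mono_null
    (fun x hx => mem_inter (hAW x hx.1) (mem_sdiff_of_mem hx.1 fun hxB => hx.2 (subset_closure hxB))) h0
  have h2 : A ⊆ closure B :=
    sdiff_eq_empty.1 ((hAo.sdiff isClosed_closure).measure_eq_zero_iff volume |>.1 h1)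
  have hBne : (interior B).Nonempty := by
    rw [hBo.interior_eq]
    exact closure_nonempty_iff.1 (hne.mono h2)
  have := interior_maximal h2 hAo
  rwa [hBc.interior_closure_eq_interior_of_nonempty_interior hBne, hBo.interior_eq] at this

/-- The two members of an equality pair are translates of each other, with the same weight. -/
theorem IsEqualityPair.exists_translate (h : IsConicWeight p W) (hAB : IsEqualityPair p W A B) :
    ∃ b : Fin n → ℝ, (∀ x, x + b ∈ A ↔ x ∈ B) ∧ ∀ᵐ x, x ∈ B → W (x + b) = W x := by
  obtain ⟨b, hb⟩ := hAB.exists_restrict_eq_map h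
  have hA := hAB.left.isOpen
  have hB := hAB.right.isOpen
  have hBb : IsOpen ((fun x => x - b) ⁻¹' B) := hB.preimage (continuous_sub_right b)
  have hval : ∀ {E : Set (Fin n → ℝ)}, MeasurableSet E → volume.withDensity W (E ∩ A) =
      volume.withDensity W ((fun x => x + b) ⁻¹' E ∩ B) := fun {E} hE => by
    have := congrArg (fun ν => ν E) hb
    simpa only [Measure.restrict_apply hE, Measure.map_apply (measurable_add_const b) hE,
      Measure.restrict_apply (measurable_add_const b hE)] using this
  have hAB1 : A ⊆ (fun x => x - b) ⁻¹' B := by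
    refine subset_of_measure_diff_eq_zero h.measurable hA hAB.left.ne_zero hBb
      (by simpa only [sub_eq_add_neg] using hAB.right.convex.translate_preimage_left (-b)) ?_
    have := hval hBb.measurableSet.compl
    rw [inter_comm, ← sdiff_eq] at this
    rw [this]
    convert measure_empty (μ := volume.withDensity W)
    ext x
    simp
  have hAB2 : B ⊆ (fun x => x + b) ⁻¹' A := by
    refine subset_of_measure_diff_eq_zero h.measurable hB hAB.right.ne_zero
      (hA.preimage (continuous_add_const b)) (hAB.left.convex.translate_preimage_left b) ?_
    have := hval hA.measurableSet.compl
    rw [compl_inter_self, measure_empty] at this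
    rw [this, sdiff_eq, inter_comm]
    rfl
  have hmem : ∀ x, x + b ∈ A ↔ x ∈ B :=
    fun x => ⟨fun hx => by simpa using hAB1 hx, fun hx => hAB2 hx⟩
  refine ⟨b, hmem, ?_⟩
  have hd : volume.withDensity (A.indicator W) =
      volume.withDensity fun x => B.indicator W (x - b) := by
    rw [withDensity_indicator hA.measurableSet, ← restrict_withDensity hA.measurableSet, hb]
    refine Measure.ext fun E hE => ?_
    have hE' := measurable_add_const b hE
    rw [Measure.map_apply (measurable_add_const b) hE, restrict_withDensity hB.measurableSet,
      ← withDensity_indicator hB.measurableSet, withDensity_apply _ hE, withDensity_apply _ hE',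
      ← lintegral_indicator hE, ← lintegral_indicator hE',
      ← lintegral_add_right_eq_self (E.indicator _) b]
    congr 1
    ext x
    by_cases hx : x + b ∈ E
    · rw [indicator_of_mem hx, indicator_of_mem (show x ∈ (· + b) ⁻¹' E from hx),
        add_sub_cancel_right]
    · rw [indicator_of_notMem hx, indicator_of_notMem (show x ∉ (· + b) ⁻¹' E from hx)]
  have hae := (withDensity_eq_iff (h.measurable_indicator hA).aemeasurable
    ((h.measurable_indicator hB).comp (measurable_sub_const b)).aemeasurable (by
      rw [← IsConicWeight.withDensity_eq_lintegral_indicator hA]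
      exact hAB.left.ne_top)).1 hd
  have hae' := (measurePreserving_add_right volume b).quasiMeasurePreserving.ae hae
  filter_upwards [hae'] with x hx hxB
  rwa [indicator_of_mem ((hmem x).2 hxB), Function.comp_apply, add_sub_cancel_right,
    indicator_of_mem hxB] at hx

end LinearChange

/-- The interior of the part of `X` on which the weight does not vanish. -/
def weightCore {n : ℕ} (W : (Fin n → ℝ) → ℝ≥0∞) (X : Set (Fin n → ℝ)) : Set (Fin n → ℝ) :=
  interior (X ∩ {x | W x ≠ 0})

namespace IsConicWeight

variable {p : ℝ} {n : ℕ} {W : (Fin n → ℝ) → ℝ≥0∞} {X Y : Set (Fin n → ℝ)}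

lemma weightCore_subset : weightCore W X ⊆ X := interior_subset.trans inter_subset_left

lemma isOpen_weightCore : IsOpen (weightCore W X) := isOpen_interior

lemma ne_zero_of_mem_weightCore {x : Fin n → ℝ} (hx : x ∈ weightCore W X) : W x ≠ 0 :=
  (interior_subset hx).2

lemma convex_weightCore (h : IsConicWeight p W) (hX : Convex ℝ X) : Convex ℝ (weightCore W X) :=
  (hX.inter h.convex_support).interior

lemma ae_mem_weightCore (h : IsConicWeight p W) (hX : Convex ℝ X) :
    ∀ᵐ x, x ∈ X → W x ≠ 0 → x ∈ weightCore W X := by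
  have hfr : volume (frontier (X ∩ {x | W x ≠ 0})) = 0 :=
    (hX.inter h.convex_support).addHaar_frontier volume
  filter_upwards [measure_eq_zero_iff_ae_notMem.1 hfr] with x hx hxX hxW
  by_contra hnot
  exact hx ⟨subset_closure ⟨hxX, hxW⟩, hnot⟩

lemma withDensity_diff_weightCore (h : IsConicWeight p W) (hX : Convex ℝ X) :
    volume.withDensity W (X \ weightCore W X) = 0 := by
  rw [withDensity_apply_eq_zero h.measurable, measure_eq_zero_iff_ae_notMem]
  filter_upwards [h.ae_mem_weightCore hX] with x hx hx'
  exact hx'.2.2 (hx hx'.2.1 hx'.1)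

lemma withDensity_weightCore (h : IsConicWeight p W) (hX : Convex ℝ X) :
    volume.withDensity W (weightCore W X) = volume.withDensity W X :=
  measure_eq_measure_of_null_sdiff weightCore_subset (h.withDensity_diff_weightCore hX)

lemma weightCore_smul (h : IsConicWeight p W) {c : ℝ} (hc : 0 < c) :
    weightCore W (c • X) = c • weightCore W X := by
  have : c • {x | W x ≠ 0} = {x | W x ≠ 0} := by
    ext x
    rw [mem_smul_set_iff_inv_smul_mem₀ hc.ne']
    refine ⟨fun hx => ?_, fun hx => h.ne_zero_smul (inv_pos.2 hc) hx⟩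
    simpa [smul_smul, hc.ne'] using h.ne_zero_smul hc hx
  rw [weightCore, weightCore, ← interior_smul₀ hc.ne', smul_set_inter₀ hc.ne', this]

lemma withDensity_smul_of_convex (h : IsConicWeight p W) {c : ℝ} (hc : 0 < c) (hX : Convex ℝ X) :
    volume.withDensity W (c • X) = ENNReal.ofReal c ^ (p⁻¹ + n) * volume.withDensity W X := by
  rw [← h.withDensity_weightCore hX, ← h.withDensity_weightCore (hX.smul c), h.weightCore_smul hc,
    h.withDensity_smul hc isOpen_weightCore]

lemma withDensity_smul_rpow_inv (h : IsConicWeight p W) {c : ℝ} (hc : 0 < c) (hX : Convex ℝ X) :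
    volume.withDensity W (c • X) ^ (p⁻¹ + n)⁻¹ =
      ENNReal.ofReal c * volume.withDensity W X ^ (p⁻¹ + n)⁻¹ := by
  rw [h.withDensity_smul_of_convex hc hX, ENNReal.mul_rpow_of_nonneg _ _
    (inv_nonneg.2 h.exponent_pos.le), ENNReal.rpow_rpow_inv h.exponent_pos.ne']

lemma brunn_minkowski_convex (h : IsConicWeight p W) (hX : Convex ℝ X) (hY : Convex ℝ Y)
    (hX0 : volume.withDensity W X ≠ 0) (hY0 : volume.withDensity W Y ≠ 0) :
    volume.withDensity W X ^ (p⁻¹ + n)⁻¹ + volume.withDensity W Y ^ (p⁻¹ + n)⁻¹ ≤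
      volume.withDensity W (weightCore W X + weightCore W Y) ^ (p⁻¹ + n)⁻¹ := by
  rw [← h.withDensity_weightCore hX] at hX0 ⊢
  rw [← h.withDensity_weightCore hY] at hY0 ⊢
  rw [ENNReal.le_rpow_inv_iff h.exponent_pos]
  exact h.brunn_minkowski_isOpen isOpen_interior isOpen_interior hX0 hY0

lemma brunn_minkowski (h : IsConicWeight p W) (hX : Convex ℝ X) (hY : Convex ℝ Y)
    (hX0 : volume.withDensity W X ≠ 0) (hY0 : volume.withDensity W Y ≠ 0) :
    volume.withDensity W X ^ (p⁻¹ + n)⁻¹ + volume.withDensity W Y ^ (p⁻¹ + n)⁻¹ ≤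
      volume.withDensity W (X + Y) ^ (p⁻¹ + n)⁻¹ :=
  (h.brunn_minkowski_convex hX hY hX0 hY0).trans
    (ENNReal.rpow_le_rpow (measure_mono (add_subset_add weightCore_subset weightCore_subset))
      (inv_nonneg.2 h.exponent_pos.le))

/-- If the enlargement `X + ε • Y` has the extremal mass for every `ε`, then translating `Y` by a
vector taking the core of `Y` to the core of `X` almost never leads into the support. -/
lemma volume_translate_into_support_eq_zero (h : IsConicWeight p W) (hX : Convex ℝ X)
    (hY : Convex ℝ Y) (hX0 : volume.withDensity W X ≠ 0) (hXtop : volume.withDensity W X ≠ ⊤)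
    (hXY : volume.withDensity W X = volume.withDensity W Y) {b : Fin n → ℝ}
    (hb : ∀ x, x + b ∈ weightCore W X ↔ x ∈ weightCore W Y)
    (hle : ∀ ε : ℝ, 0 < ε → volume.withDensity W (X + ε • Y) ^ (p⁻¹ + n)⁻¹ ≤
      volume.withDensity W X ^ (p⁻¹ + n)⁻¹ +
        ENNReal.ofReal ε * volume.withDensity W Y ^ (p⁻¹ + n)⁻¹) :
    ∀ᵐ z, z ∈ Y → W z = 0 → W (z + b) = 0 := by
  set C := {x | W x ≠ 0} with hC
  have hCc : Convex ℝ C := h.convex_support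
  set D := weightCore W Y with hD
  have hDc : Convex ℝ D := h.convex_weightCore hY
  have hDo : IsOpen D := isOpen_interior
  have hDne : D.Nonempty := by
    rw [nonempty_iff_ne_empty]
    intro h0
    rw [hXY, ← h.withDensity_weightCore hY, ← hD, h0, measure_empty] at hX0
    exact hX0 rfl
  have hfr1 : volume (frontier D) = 0 := hDc.addHaar_frontier volume
  have hfr2 : volume (frontier C) = 0 := hCc.addHaar_frontier volume
  filter_upwards [measure_eq_zero_iff_ae_notMem.1 hfr1,
    (measurePreserving_add_right volume b).quasiMeasurePreserving.ae
      (measure_eq_zero_iff_ae_notMem.1 hfr2)] with z hz1 hz2 hzY hz0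
  by_contra hzb
  have hzD : z ∉ closure D := fun hcl =>
    hz1 ⟨hcl, fun hinter => ne_zero_of_mem_weightCore (interior_subset hinter) hz0⟩
  have hzC : z + b ∈ interior C := by
    by_contra hnot
    exact hz2 ⟨subset_closure hzb, hnot⟩
  obtain ⟨x₀, hx₀⟩ := hDne
  have hx₀C : x₀ + b ∈ interior C :=
    interior_mono inter_subset_right ((hb x₀).2 hx₀)
  let γ : ℝ → (Fin n → ℝ) := fun s => (1 - s) • x₀ + s • z
  have hγ : Continuous γ := by fun_prop
  obtain ⟨s, ⟨hs01, hsD⟩, hsmax⟩ : ∃ s, IsGreatest (Icc (0 : ℝ) 1 ∩ γ ⁻¹' closure D) s :=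
    (isCompact_Icc.inter_right (isClosed_closure.preimage hγ)).exists_isGreatest
      ⟨0, by simp, by simpa [γ] using subset_closure hx₀⟩
  have hs1 : s < 1 := by
    refine lt_of_le_of_ne hs01.2 fun h1 => hzD ?_
    simpa [γ, h1] using hsD
  have hγC : γ s + b ∈ interior C := by
    have := hCc.interior hx₀C hzC (sub_nonneg.2 hs01.2) hs01.1 (by ring)
    convert this using 1
    simp only [γ, smul_add]
    rw [add_add_add_comm, ← add_smul, sub_add_cancel, one_smul]
  obtain ⟨ε, hεC, hε⟩ : ∃ ε : ℝ, γ s + b + ε • z ∈ interior C ∧ 0 < ε := by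
    have hcont : Continuous fun ε : ℝ => γ s + b + ε • z := by fun_prop
    have hev : ∀ᶠ ε in 𝓝[>] (0 : ℝ), γ s + b + ε • z ∈ interior C :=
      (hcont.tendsto 0).mono_left nhdsWithin_le_nhds
        (isOpen_interior.mem_nhds (by simpa using hγC))
    exact (hev.and self_mem_nhdsWithin).exists
  have hε1 : (0 : ℝ) < 1 + ε := by linarith
  have hγ' : (1 + ε)⁻¹ • (γ s + ε • z) ∉ closure D := by
    intro hmem
    have hs' : (1 + ε)⁻¹ * (s + ε) ∈ Icc (0 : ℝ) 1 := by
      have := hs01.1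
      refine ⟨by positivity, ?_⟩
      rw [inv_mul_le_iff₀ hε1]
      linarith
    have heq : γ ((1 + ε)⁻¹ * (s + ε)) = (1 + ε)⁻¹ • (γ s + ε • z) := by
      ext i
      simp only [γ, Pi.add_apply, Pi.smul_apply, smul_eq_mul]
      field_simp
      ring
    have hle' := hsmax ⟨hs', by rw [mem_preimage, heq]; exact hmem⟩
    rw [inv_mul_le_iff₀ hε1] at hle'
    nlinarith
  let U : Set (Fin n → ℝ) :=
    {x | x + b + ε • z ∈ interior C} ∩ {x | (1 + ε)⁻¹ • (x + ε • z) ∉ closure D}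
  have hUo : IsOpen U :=
    (isOpen_interior.preimage (by fun_prop : Continuous fun x : Fin n → ℝ => x + b + ε • z)).inter
      (isClosed_closure.isOpen_compl.preimage
        (by fun_prop : Continuous fun x : Fin n → ℝ => (1 + ε)⁻¹ • (x + ε • z)))
  obtain ⟨x₁, hx₁U, hx₁D⟩ := mem_closure_iff.1 hsD U hUo ⟨hεC, hγ'⟩
  let V : Set (Fin n → ℝ) := (fun x => x + -(b + ε • z)) ⁻¹' (U ∩ D)
  have hVo : IsOpen V := (hUo.inter hDo).preimage (continuous_add_const _)
  have hVmem : ∀ v ∈ V, ∃ x ∈ U ∩ D, v = x + b + ε • z := fun v hv =>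
    ⟨_, hv, by simp only []; abel⟩
  have hV0 : volume.withDensity W V ≠ 0 := by
    rw [Ne, withDensity_apply_eq_zero h.measurable]
    have : {x | W x ≠ 0} ∩ V = V := by
      refine inter_eq_right.2 fun v hv => ?_
      obtain ⟨x, hx, rfl⟩ := hVmem v hv
      exact interior_subset hx.1.1
    rw [this, hVo.measure_eq_zero_iff volume]
    refine Nonempty.ne_empty ⟨x₁ + (b + ε • z), ?_⟩
    rw [mem_preimage, add_neg_cancel_right]
    exact ⟨hx₁U, hx₁D⟩
  have hdisj : Disjoint (weightCore W X + weightCore W (ε • Y)) V := by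
    rw [disjoint_left]
    rintro v ⟨a, ha, d, hd, rfl⟩ hv
    obtain ⟨x, hx, hxv⟩ := hVmem _ hv
    rw [h.weightCore_smul hε] at hd
    obtain ⟨d, hd, rfl⟩ := hd
    have ha' : a - b ∈ D := (hb _).1 (by simpa using ha)
    have hxe : x + ε • z = (a - b) + ε • d := by
      have : a + ε • d = x + b + ε • z := hxv
      rw [sub_add_eq_add_sub, this]
      abel
    refine hx.1.2 (subset_closure ?_)
    have := hDc ha' hd (inv_nonneg.2 hε1.le) (by positivity : 0 ≤ (1 + ε)⁻¹ * ε)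
      (by field_simp)
    rwa [hxe, smul_add, smul_smul]
  have hsub : (weightCore W X + weightCore W (ε • Y)) ∪ V ⊆ X + ε • Y := by
    refine union_subset (add_subset_add weightCore_subset weightCore_subset) fun v hv => ?_
    obtain ⟨x, hx, rfl⟩ := hVmem v hv
    exact add_mem_add (weightCore_subset ((hb x).2 hx.2)) (smul_mem_smul_set hzY)
  have hεY0 : volume.withDensity W (ε • Y) ≠ 0 := by
    rw [h.withDensity_smul_of_convex hε hY]
    refine mul_ne_zero ?_ (hXY ▸ hX0)
    simp [ENNReal.rpow_eq_zero_iff, hε]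
  have hlow := h.brunn_minkowski_convex hX (hY.smul ε) hX0 hεY0
  rw [h.withDensity_smul_rpow_inv hε hY] at hlow
  have hup := hle ε hε
  have hq : 0 < (p⁻¹ + (n : ℝ))⁻¹ := inv_pos.2 h.exponent_pos
  have hle2 : volume.withDensity W (X + ε • Y) ≤
      volume.withDensity W (weightCore W X + weightCore W (ε • Y)) :=
    (ENNReal.rpow_le_rpow_iff hq).1 (hup.trans hlow)
  have hXq : volume.withDensity W X ^ (p⁻¹ + (n : ℝ))⁻¹ ≠ ⊤ :=
    ENNReal.rpow_ne_top_of_nonneg hq.le hXtop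
  have hfin : volume.withDensity W (X + ε • Y) ≠ ⊤ := by
    intro htop
    rw [htop, ENNReal.top_rpow_of_pos hq, top_le_iff] at hup
    exact ENNReal.add_ne_top.2 ⟨hXq, ENNReal.mul_ne_top ENNReal.ofReal_ne_top (hXY ▸ hXq)⟩ hup
  have hsum : volume.withDensity W (weightCore W X + weightCore W (ε • Y)) +
      volume.withDensity W V ≤ volume.withDensity W (weightCore W X + weightCore W (ε • Y)) := by
    rw [← measure_union hdisj hVo.measurableSet]
    exact (measure_mono hsub).trans hle2
  have hfin' := ne_top_of_le_ne_top hfin (measure_mono (subset_union_left.trans hsub))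
  exact hV0 (by simpa using (ENNReal.add_le_add_iff_left hfin').1 (hsum.trans (add_zero _).ge))

end IsConicWeight

lemma mul_rpow_sub_one_mul_le_rpow_sub_rpow {a x N : ℝ} (ha : 0 < a) (hx : 0 ≤ x) (hN : 1 ≤ N) :
    N * a ^ (N - 1) * x ≤ (a + x) ^ N - a ^ N := by
  have h1 := one_add_mul_self_le_rpow_one_add (s := x / a)
    (by have : 0 ≤ x / a := by positivity
        linarith) hN
  have h2 : (a + x) ^ N = a ^ N * (1 + x / a) ^ N := by
    rw [← Real.mul_rpow ha.le (by positivity)]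
    congr 1
    field_simp
  have h3 : a ^ N = a ^ (N - 1) * a := by rw [← Real.rpow_add_one ha.ne', sub_add_cancel]
  have h4 := mul_le_mul_of_nonneg_left h1 (Real.rpow_nonneg ha.le N)
  rw [← h2] at h4
  have h5 : a ^ N * (1 + N * (x / a)) = a ^ N + N * a ^ (N - 1) * x := by
    rw [h3]
    field_simp
  linarith

namespace IsConicWeight

variable {p : ℝ} {n : ℕ} {W : (Fin n → ℝ) → ℝ≥0∞} {A B : Set (Fin n → ℝ)}

/-- A set satisfying equality in the isoperimetric inequality has extremal enlargements. -/
lemma withDensity_add_smul_le_of_mBoundary_le (h : IsConicWeight p W) (hn : 1 ≤ n)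
    (hA : Convex ℝ A) (hB : Convex ℝ B) (hA0 : volume.withDensity W A ≠ 0)
    (hAtop : volume.withDensity W A ≠ ⊤) (hBtop : volume.withDensity W B ≠ ⊤)
    (hle : mBoundary (volume.withDensity W) B A ≤ ENNReal.ofReal (p⁻¹ + n) *
      volume.withDensity W B ^ (p⁻¹ + n)⁻¹ * volume.withDensity W A ^ (1 - (p⁻¹ + n)⁻¹))
    {ε : ℝ} (hε : 0 < ε) : volume.withDensity W (A + ε • B) ^ (p⁻¹ + n)⁻¹ ≤
      volume.withDensity W A ^ (p⁻¹ + n)⁻¹ +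
        ENNReal.ofReal ε * volume.withDensity W B ^ (p⁻¹ + n)⁻¹ := by
  set μ := volume.withDensity W with hμ
  set N : ℝ := p⁻¹ + n with hNdef
  have hNpos : 0 < N := h.exponent_pos
  have hN : 1 ≤ N := by
    have h1 : (1 : ℝ) ≤ n := by exact_mod_cast hn
    have h2 : 0 < p⁻¹ := inv_pos.2 h.pos
    linarith
  have hq : 0 < N⁻¹ := inv_pos.2 hNpos
  obtain ⟨a, ha, haA⟩ : ∃ a : ℝ, 0 < a ∧ μ A ^ N⁻¹ = ENNReal.ofReal a := by
    have hne : μ A ^ N⁻¹ ≠ ⊤ := ENNReal.rpow_ne_top_of_nonneg hq.le hAtop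
    refine ⟨_, ENNReal.toReal_pos ?_ hne, (ENNReal.ofReal_toReal hne).symm⟩
    simp [ENNReal.rpow_eq_zero_iff, hA0, hAtop]
  obtain ⟨β, hβ, hβB⟩ : ∃ β : ℝ, 0 ≤ β ∧ μ B ^ N⁻¹ = ENNReal.ofReal β :=
    ⟨_, ENNReal.toReal_nonneg,
      (ENNReal.ofReal_toReal (ENNReal.rpow_ne_top_of_nonneg hq.le hBtop)).symm⟩
  have hAN : μ A = ENNReal.ofReal (a ^ N) := by
    rw [← ENNReal.ofReal_rpow_of_pos ha, ← haA, ENNReal.rpow_inv_rpow hNpos.ne']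
  by_contra! hlt
  rw [haA, hβB, ← ENNReal.ofReal_mul hε.le, ← ENNReal.ofReal_add ha.le (by positivity)] at hlt
  obtain ⟨κ, hκβ, hκ⟩ : ∃ κ : ℝ, β < κ ∧ ENNReal.ofReal (a + ε * κ) ≤ μ (A + ε • B) ^ N⁻¹ := by
    obtain ⟨r, -, hr1, hr2⟩ := ENNReal.lt_iff_exists_real_btwn.1 hlt
    have hr3 := (ENNReal.ofReal_lt_ofReal_iff_of_nonneg (by positivity)).1 hr1
    refine ⟨(r - a) / ε, ?_, ?_⟩
    · rw [lt_div_iff₀ hε]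
      linarith
    · rw [mul_div_cancel₀ _ hε.ne', add_sub_cancel]
      exact hr2.le
  have hκ0 : 0 < κ := hβ.trans_lt hκβ
  have hAεB0 : μ (A + ε • B) ≠ 0 := by
    intro h0
    rw [h0, ENNReal.zero_rpow_of_pos hq] at hlt
    exact not_lt_zero hlt
  have hgrow : ∀ δ ∈ Ioo 0 ε, ENNReal.ofReal ((a + δ * κ) ^ N) ≤ μ (A + δ • B) := by
    rintro δ ⟨hδ0, hδε⟩
    have hl0 : 0 < δ / ε := by positivity
    have hl1 : 0 < 1 - δ / ε := by rw [sub_pos, div_lt_one hε]; exact hδε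
    have hABc : Convex ℝ (A + ε • B) := hA.add (hB.smul ε)
    have hsub : (1 - δ / ε) • A + (δ / ε) • (A + ε • B) ⊆ A + δ • B := by
      rintro _ ⟨_, ⟨x, hx, rfl⟩, _, ⟨_, ⟨y, hy, _, ⟨z, hz, rfl⟩, rfl⟩, rfl⟩, rfl⟩
      refine ⟨(1 - δ / ε) • x + (δ / ε) • y, hA hx hy hl1.le hl0.le (by ring), δ • z,
        smul_mem_smul_set hz, ?_⟩
      simp only [smul_add, smul_smul]
      rw [div_mul_cancel₀ _ hε.ne', add_assoc]
    have ne0 : ∀ {c : ℝ} {S : Set (Fin n → ℝ)}, 0 < c → Convex ℝ S → μ S ≠ 0 → μ (c • S) ≠ 0 := by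
      intro c S hc hS hS0
      rw [hμ, h.withDensity_smul_of_convex hc hS]
      refine mul_ne_zero ?_ hS0
      simp [ENNReal.rpow_eq_zero_iff, hc]
    have hbm := h.brunn_minkowski (hA.smul (1 - δ / ε)) (hABc.smul (δ / ε)) (ne0 hl1 hA hA0)
      (ne0 hl0 hABc hAεB0)
    rw [h.withDensity_smul_rpow_inv hl1 hA, h.withDensity_smul_rpow_inv hl0 hABc, ← hμ, ← hNdef,
      haA] at hbm
    have hmono : μ ((1 - δ / ε) • A + (δ / ε) • (A + ε • B)) ^ N⁻¹ ≤ μ (A + δ • B) ^ N⁻¹ :=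
      ENNReal.rpow_le_rpow (measure_mono hsub) hq.le
    have hbound : ENNReal.ofReal (a + δ * κ) ≤ μ (A + δ • B) ^ N⁻¹ := by
      refine le_trans ?_ (hbm.trans hmono)
      refine le_trans (le_of_eq ?_) (add_le_add le_rfl (mul_le_mul' le_rfl hκ))
      rw [← ENNReal.ofReal_mul hl1.le, ← ENNReal.ofReal_mul hl0.le,
        ← ENNReal.ofReal_add (by positivity) (by positivity)]
      congr 1
      field_simp
      ring
    rw [ENNReal.le_rpow_inv_iff hNpos, ENNReal.ofReal_rpow_of_pos (by positivity)] at hbound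
    exact hbound
  have hlow : ENNReal.ofReal (N * a ^ (N - 1) * κ) ≤ mBoundary μ B A := by
    refine le_liminf_of_le (by isBoundedDefault) ?_
    filter_upwards [Ioo_mem_nhdsGT hε] with δ hδ
    have hδ0 := hδ.1
    rw [ENNReal.le_div_iff_mul_le (Or.inl (by simpa using hδ0)) (Or.inl ENNReal.ofReal_ne_top),
      ← ENNReal.ofReal_mul (by positivity)]
    refine le_trans ?_ (le_measure_sdiff)
    refine le_trans ?_ (tsub_le_tsub_right (hgrow δ hδ) _)
    rw [hAN, ← ENNReal.ofReal_sub _ (by positivity)]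
    refine ENNReal.ofReal_le_ofReal ?_
    have := mul_rpow_sub_one_mul_le_rpow_sub_rpow ha (x := δ * κ) (by positivity) hN
    linarith
  have hAq : μ A ^ (1 - N⁻¹) = ENNReal.ofReal (a ^ (N - 1)) := by
    rw [hAN, ENNReal.ofReal_rpow_of_pos (by positivity), ← Real.rpow_mul ha.le]
    congr 2
    field_simp
  rw [hAq, hβB, ← ENNReal.ofReal_mul hNpos.le, ← ENNReal.ofReal_mul (by positivity)] at hle
  have hfinal := (ENNReal.ofReal_le_ofReal_iff (by positivity)).1 (hlow.trans hle)
  have hpos : 0 < N * a ^ (N - 1) := by positivity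
  nlinarith [mul_lt_mul_of_pos_left hκβ hpos]

/-- Equality of the isoperimetric inequality for conic weights forces the two convex sets to be
homothetic. -/
theorem exists_homothety (h : IsConicWeight p W) (hn : 1 ≤ n)
    (hA : Convex ℝ A) (hB : Convex ℝ B) (hA0 : volume.withDensity W A ≠ 0)
    (hAtop : volume.withDensity W A ≠ ⊤) (hB0 : volume.withDensity W B ≠ 0)
    (hBtop : volume.withDensity W B ≠ ⊤)
    (hle : mBoundary (volume.withDensity W) B A ≤ ENNReal.ofReal (p⁻¹ + n) *
      volume.withDensity W B ^ (p⁻¹ + n)⁻¹ * volume.withDensity W A ^ (1 - (p⁻¹ + n)⁻¹)) :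
    ∃ (m : ℝ) (b : Fin n → ℝ), 0 < m ∧
      volume.withDensity W (A \ (fun x => m • x + b) '' B) = 0 ∧
      volume.withDensity W ((fun x => m • x + b) '' B \ A) = 0 ∧
      ∀ᵐ x, x ∈ B → W (m • x + b) = ENNReal.ofReal m ^ p⁻¹ * W x := by
  set μ := volume.withDensity W with hμ
  have hNpos : 0 < p⁻¹ + (n : ℝ) := h.exponent_pos
  obtain ⟨t, ht, htB⟩ : ∃ t : ℝ, 0 < t ∧ ENNReal.ofReal t ^ (p⁻¹ + (n : ℝ)) * μ B = μ A := by
    have hr : (0 : ℝ) < (μ A / μ B).toReal :=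
      ENNReal.toReal_pos (ENNReal.div_ne_zero.2 ⟨hA0, hBtop⟩) (ENNReal.div_ne_top hAtop hB0)
    refine ⟨(μ A / μ B).toReal ^ (p⁻¹ + (n : ℝ))⁻¹, by positivity, ?_⟩
    rw [ENNReal.ofReal_rpow_of_pos (by positivity), Real.rpow_inv_rpow hr.le hNpos.ne',
      ENNReal.ofReal_toReal (ENNReal.div_ne_top hAtop hB0), ENNReal.div_mul_cancel hB0 hBtop]
  set D := t • B with hD
  have hDc : Convex ℝ D := hB.smul t
  have hAD : μ A = μ D := by rw [hμ, hD, h.withDensity_smul_of_convex ht hB, ← hμ, htB]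
  have hup : ∀ ε : ℝ, 0 < ε → μ (A + ε • D) ^ (p⁻¹ + (n : ℝ))⁻¹ ≤
      μ A ^ (p⁻¹ + (n : ℝ))⁻¹ + ENNReal.ofReal ε * μ D ^ (p⁻¹ + (n : ℝ))⁻¹ := by
    intro ε hε
    have := h.withDensity_add_smul_le_of_mBoundary_le hn hA hB hA0 hAtop hBtop hle (mul_pos hε ht)
    rw [hμ, hD, h.withDensity_smul_rpow_inv ht hB, ← mul_assoc, ← ENNReal.ofReal_mul hε.le,
      smul_smul]
    exact this
  have region : ∀ {S : Set (Fin n → ℝ)}, Convex ℝ S → μ S ≠ 0 → μ S ≠ ⊤ →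
      IsConvexRegion W (weightCore W S) := fun {S} hS hS0 hStop =>
    { isOpen := isOpen_weightCore
      convex := h.convex_weightCore hS
      nonempty := nonempty_of_measure_ne_zero (μ := μ) (by rwa [hμ, h.withDensity_weightCore hS])
      ne_zero := fun x hx => ne_zero_of_mem_weightCore hx
      ne_top := by rwa [h.withDensity_weightCore hS] }
  have pair : IsEqualityPair p W (weightCore W A) (weightCore W D) := by
    refine ⟨region hA hA0 hAtop, region hDc (hAD ▸ hA0) (hAD ▸ hAtop), ?_, ?_⟩
    · rw [h.withDensity_weightCore hA, h.withDensity_weightCore hDc]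
      exact hAD
    · rw [h.withDensity_weightCore hA]
      have h1 := hup 1 one_pos
      rw [one_smul, ENNReal.ofReal_one, one_mul, ← hAD, ← two_mul,
        ENNReal.rpow_inv_le_iff hNpos, ENNReal.mul_rpow_of_nonneg _ _ hNpos.le,
        ENNReal.rpow_inv_rpow hNpos.ne'] at h1
      exact (measure_mono (add_subset_add weightCore_subset weightCore_subset)).trans h1
  obtain ⟨b, hb, hbW⟩ := pair.exists_translate h
  have hsupp := h.volume_translate_into_support_eq_zero hA hDc hA0 hAtop hAD hb hup
  have hcore := h.ae_mem_weightCore hDc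
  have hweight : ∀ᵐ z, z ∈ D → W (z + b) = W z := by
    filter_upwards [hbW, hsupp, hcore] with z h1 h2 h3 hz
    by_cases hWz : W z = 0
    · rw [h2 hz hWz, hWz]
    · exact h1 (h3 hz hWz)
  have himage : ∀ y, y ∈ (fun x => t • x + b) '' B ↔ y - b ∈ D := fun y => by
    constructor
    · rintro ⟨x, hx, rfl⟩
      simpa using smul_mem_smul_set hx
    · rintro ⟨x, hx, hxy⟩
      exact ⟨x, hx, by simp only [] at hxy ⊢; rw [hxy, sub_add_cancel]⟩
  refine ⟨t, b, ht, ?_, ?_, ?_⟩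
  · refine measure_mono_null (fun y hy => ?_) (h.withDensity_diff_weightCore hA)
    refine ⟨hy.1, fun hyA => hy.2 ((himage y).2 (weightCore_subset ((hb _).1 ?_)))⟩
    simpa using hyA
  · rw [hμ, withDensity_apply_eq_zero h.measurable, measure_eq_zero_iff_ae_notMem]
    have hq := (measurePreserving_sub_right volume b).quasiMeasurePreserving
    filter_upwards [hq.ae hweight, hq.ae hcore] with y h1 h2 hy
    have hyD := (himage y).1 hy.2.1
    have hW := h1 hyD
    rw [sub_add_cancel] at hW
    have := (hb _).2 (h2 hyD (hW ▸ hy.1))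
    rw [sub_add_cancel] at this
    exact hy.2.2 (weightCore_subset this)
  · have hsm : Measure.QuasiMeasurePreserving (fun x : Fin n → ℝ => t • x) volume volume :=
      ⟨measurable_const_smul t, by
        rw [Measure.map_addHaar_smul _ ht.ne']
        exact Measure.smul_absolutelyContinuous⟩
    filter_upwards [hsm.ae hweight] with x hx hxB
    rw [hx (smul_mem_smul_set hxB), h.hom t ht]

end IsConicWeight

lemma isConicWeight_ofReal {n : ℕ} {p : ℝ} (hp : 0 < p) {w : (Fin n → ℝ) → ℝ} (hwm : Measurable w)
    (hw0 : ∀ x, 0 ≤ w x)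
    (hwconc : ∀ x y : Fin n → ℝ, 0 < w x * w y → ∀ lam ∈ Set.Ioo (0 : ℝ) 1,
      (lam * w x ^ p + (1 - lam) * w y ^ p) ^ (1 / p) ≤ w (lam • x + (1 - lam) • y))
    (hwhom : ∀ c : ℝ, 0 < c → ∀ x, w (c • x) ^ p = c * w x ^ p) :
    IsConicWeight p fun x => ENNReal.ofReal (w x) where
  pos := hp
  measurable := hwm.ennreal_ofReal
  ne_top _ := ENNReal.ofReal_ne_top
  hom c hc x := by
    rw [ENNReal.ofReal_rpow_of_pos hc, ← ENNReal.ofReal_mul (by positivity)]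
    congr 1
    rw [← Real.rpow_rpow_inv (hw0 (c • x)) hp.ne', hwhom c hc x,
      Real.mul_rpow hc.le (Real.rpow_nonneg (hw0 x) p), Real.rpow_rpow_inv (hw0 x) hp.ne']
  superadd x y hx hy := by
    have hx' : 0 < w x := by simpa using hx
    have hy' : 0 < w y := by simpa using hy
    rw [ENNReal.ofReal_rpow_of_pos hx', ENNReal.ofReal_rpow_of_pos hy',
      ← ENNReal.ofReal_add (by positivity) (by positivity),
      ENNReal.ofReal_rpow_of_pos (by positivity)]
    refine ENNReal.ofReal_le_ofReal ?_
    have scale : ∀ z, (2⁻¹ : ℝ) * w ((2 : ℝ) • z) ^ p = w z ^ p := fun z => by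
      rw [hwhom 2 two_pos]
      ring
    have pos2 : ∀ z, 0 < w z → 0 < w ((2 : ℝ) • z) := fun z hz => by
      refine lt_of_le_of_ne (hw0 _) fun h0 => ?_
      have := scale z
      rw [← h0, Real.zero_rpow hp.ne', mul_zero] at this
      exact (Real.rpow_pos_of_pos hz p).ne this
    have := hwconc ((2 : ℝ) • x) ((2 : ℝ) • y) (mul_pos (pos2 x hx') (pos2 y hy')) 2⁻¹
      ⟨by norm_num, by norm_num⟩
    rw [show (1 : ℝ) - 2⁻¹ = 2⁻¹ by norm_num, scale, scale, smul_smul, smul_smul,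
      inv_mul_cancel₀ two_ne_zero, one_smul, one_smul, one_div] at this
    exact this

/-- characterization of equality in the isoperimetric inequality for a
`p`-concave `p`-homogeneous density `w`, `p ∈ (0, ∞)`, `1/q = 1/p + n`, among convex sets:
equality forces `A = mB + b` up to zero `μ`-measure, with `w(mx+b) = c w(x)` a.e. on `B`. -/
theorem stmt6 (n : ℕ) (hn : 1 ≤ n) (p q : ℝ) (hp : 0 < p) (hq : 1 / q = 1 / p + (n : ℝ))
    (w : (Fin n → ℝ) → ℝ) (hwm : Measurable w) (hw0 : ∀ x, 0 ≤ w x)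
    (hwconc : ∀ x y : Fin n → ℝ, 0 < w x * w y → ∀ lam ∈ Set.Ioo (0 : ℝ) 1,
      (lam * w x ^ p + (1 - lam) * w y ^ p) ^ (1 / p) ≤ w (lam • x + (1 - lam) • y))
    (hwhom : ∀ c : ℝ, 0 < c → ∀ x, w (c • x) ^ p = c * w x ^ p)
    (μ : Measure (Fin n → ℝ))
    (hμ : μ = volume.withDensity fun x => ENNReal.ofReal (w x))
    (A B : Set (Fin n → ℝ)) (hAconv : Convex ℝ A) (hBconv : Convex ℝ B)
    (hA0 : 0 < μ A) (hAfin : μ A < ⊤) (hB0 : 0 < μ B) (hBfin : μ B < ⊤)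
    (heq : mBoundary μ B A = ENNReal.ofReal (1 / q) * μ B ^ q * μ A ^ (1 - q)) :
    ∃ (m : ℝ) (b : Fin n → ℝ) (c : ℝ), 0 < m ∧ 0 < c ∧
      μ (A \ (fun x => m • x + b) '' B) = 0 ∧ μ ((fun x => m • x + b) '' B \ A) = 0 ∧
      ∀ᵐ x ∂(volume : Measure (Fin n → ℝ)), x ∈ B → w (m • x + b) = c * w x := by
  have h := isConicWeight_ofReal hp hwm hw0 hwconc hwhom
  have hq' : q = (p⁻¹ + (n : ℝ))⁻¹ := by rw [← one_div p, ← hq, one_div, inv_inv]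
  rw [hq, hq', one_div] at heq
  subst hμ
  obtain ⟨m, b, hm, h1, h2, h3⟩ := h.exists_homothety hn hAconv hBconv hA0.ne' hAfin.ne hB0.ne'
    hBfin.ne heq.le
  refine ⟨m, b, m ^ p⁻¹, hm, by positivity, h1, h2, ?_⟩
  filter_upwards [h3] with x hx hxB
  have := hx hxB
  rw [ENNReal.ofReal_rpow_of_pos hm, ← ENNReal.ofReal_mul (by positivity)] at this
  exact (ENNReal.ofReal_eq_ofReal_iff (hw0 _) (mul_nonneg (by positivity) (hw0 x))).1 this
end

section
/- Let n ≥ 1 and q < 0, and let μ be a σ-finite q-homogeneous Borel measure on ℝⁿ. Let B ⊆ ℝⁿ be an open bounded convex set containing the origin with μ(ℝⁿ∖B) ∈ (0,∞). If a Borel set C ⊆ ℝⁿ with μ(C) ∈ (0,∞) satisfies μ⁻_B(C) = −(1/q)·μ(ℝⁿ∖B)^q·μ(C)^{1−q}, then there exists t > 0 such that C coincides with ℝⁿ∖(tB) up to a set of zero μ-measure. -/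
open MeasureTheory Set Filter
open scoped Pointwise ENNReal Topology

/-- The inner Minkowski boundary measure `μ⁻_B(C) := μ⁺_B(ℝⁿ \ C)`. -/
noncomputable def mInnerBoundary {n : ℕ} (μ : Measure (Fin n → ℝ)) (B C : Set (Fin n → ℝ)) :
    ℝ≥0∞ :=
  mBoundary μ B Cᶜ

/-- The infinitesimal growth of the complement of a set `S` of finite length, in the coordinate
`s ↦ s ^ q` with `q < 0`, is bounded below in terms of any level `U` exceeded by `S`. -/
lemma eventually_le_volume_rpow_growth {q : ℝ} (hq : q < 0) {S : Set ℝ} (hS : volume S < ⊤)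
    {U : ℝ} (hU : 0 ≤ U) (hSU : 0 < volume (S ∩ Ioi U)) :
    ∀ᶠ ε in 𝓝[>] (0 : ℝ), ENNReal.ofReal (-(1 / q) * U ^ (1 - q) * ε) ≤
      volume {s | s ∈ S ∧ U < s ∧ ∃ s', s' ∉ S ∧ s ≤ s' ∧ s ^ q - s' ^ q < ε} := by
  by_cases hcase : ∀ s ∈ S, U < s → ∀ ε > 0, ∃ s', s' ∉ S ∧ s ≤ s' ∧ s ^ q - s' ^ q < ε
  · have hlim : Tendsto (fun ε : ℝ => ENNReal.ofReal (-(1 / q) * U ^ (1 - q) * ε)) (𝓝[>] 0)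
        (𝓝 0) := by
      have : Continuous fun ε : ℝ => ENNReal.ofReal (-(1 / q) * U ^ (1 - q) * ε) :=
        ENNReal.continuous_ofReal.comp (continuous_const.mul continuous_id)
      simpa using (this.tendsto 0).mono_left nhdsWithin_le_nhds
    filter_upwards [hlim.eventually_lt_const hSU, self_mem_nhdsWithin] with ε hε hε0
    exact hε.le.trans (measure_mono fun s hs => ⟨hs.1, hs.2, hcase s hs.1 hs.2 ε hε0⟩)
  push Not at hcase
  obtain ⟨s₀, hs₀S, hs₀U, ε₀, hε₀, hgap⟩ := hcase
  have hs₀ : 0 < s₀ := hU.trans_lt hs₀U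
  set X : Set ℝ := {s' | s' ∉ S ∧ s₀ ≤ s'} with hX
  have hXne : X.Nonempty := by
    by_contra hne
    have hsub : Ici s₀ ⊆ S := fun s hs => by
      by_contra hsS
      exact hne ⟨s, hsS, hs⟩
    have hle : volume (Ici s₀) ≤ volume S := measure_mono hsub
    rw [Real.volume_Ici] at hle
    exact hS.not_ge hle
  have hXbdd : BddBelow X := ⟨s₀, fun s hs => hs.2⟩
  set b := sInf X with hb
  have hs₀b : s₀ ≤ b := le_csInf hXne fun s hs => hs.2
  have hb0 : 0 < b := hs₀.trans_le hs₀b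
  have happrox : ∀ v < b ^ q, ∃ s' ∈ X, v < s' ^ q := by
    intro v hv
    have hcont : ContinuousAt (fun x : ℝ => x ^ q) b :=
      Real.continuousAt_rpow_const b q (Or.inl hb0.ne')
    have hmem : b ∈ closure X := csInf_mem_closure hXne hXbdd
    obtain ⟨s', h1, h2⟩ := mem_closure_iff_nhds.1 hmem _ (hcont.eventually_const_lt hv)
    exact ⟨s', h2, h1⟩
  have hs₀b' : s₀ < b := by
    refine lt_of_le_of_ne hs₀b fun h => ?_
    obtain ⟨s', hs', hlt⟩ := happrox (s₀ ^ q - ε₀) (by rw [← h]; linarith)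
    have := hgap s' hs'.1 hs'.2
    linarith
  have hbq : 0 < b ^ q := Real.rpow_pos_of_pos hb0 q
  have hbb : (b ^ q) ^ (1 / q) = b := by
    rw [← Real.rpow_mul hb0.le, mul_one_div_cancel hq.ne, Real.rpow_one]
  have hderiv : HasDerivAt (fun ε : ℝ => (b ^ q + ε) ^ (1 / q)) ((1 / q) * b ^ (1 - q)) 0 := by
    have h1 : HasDerivAt (fun ε : ℝ => b ^ q + ε) 1 0 := (hasDerivAt_id _).const_add _
    have h2 := h1.rpow_const (p := 1 / q) (Or.inl (by simpa using hbq.ne'))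
    convert h2 using 1
    rw [add_zero, ← Real.rpow_mul hb0.le, mul_sub, mul_one_div_cancel hq.ne]
    ring_nf
  have hslope : ∀ᶠ ε in 𝓝[>] (0 : ℝ),
      ((b ^ q + ε) ^ (1 / q) - b) / ε < (1 / q) * U ^ (1 - q) := by
    have h := (hasDerivAt_iff_tendsto_slope.1 hderiv).mono_left
      (nhdsWithin_mono 0 (fun x (hx : x ∈ Ioi (0 : ℝ)) => ne_of_gt hx))
    have hlt : (1 / q) * b ^ (1 - q) < (1 / q) * U ^ (1 - q) := by
      have := Real.rpow_lt_rpow hU (hs₀U.trans hs₀b') (by linarith : 0 < 1 - q)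
      exact mul_lt_mul_of_neg_left this (one_div_neg.2 hq)
    filter_upwards [h.eventually_lt_const hlt] with ε hε
    simpa only [slope_def_field, add_zero, sub_zero, hbb] using hε
  have hbig : ∀ᶠ ε in 𝓝[>] (0 : ℝ), s₀ < (b ^ q + ε) ^ (1 / q) := by
    have := hderiv.continuousAt.tendsto
    simp only [add_zero, hbb] at this
    exact (this.mono_left nhdsWithin_le_nhds).eventually_const_lt hs₀b'
  filter_upwards [hslope, hbig, self_mem_nhdsWithin] with ε hε hεs (hε0 : 0 < ε)
  calc ENNReal.ofReal (-(1 / q) * U ^ (1 - q) * ε)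
      ≤ ENNReal.ofReal (b - (b ^ q + ε) ^ (1 / q)) := by
        refine ENNReal.ofReal_le_ofReal ?_
        rw [div_lt_iff₀ hε0] at hε
        linarith
    _ = volume (Ioo ((b ^ q + ε) ^ (1 / q)) b) := by rw [Real.volume_Ioo]
    _ ≤ _ := by
        refine measure_mono fun s hs => ?_
        have hs0 : s₀ < s := hεs.trans hs.1
        have hsq : s ^ q < b ^ q + ε := by
          have h := Real.rpow_lt_rpow_of_neg (hs₀.trans hεs) hs.1 hq
          rwa [← Real.rpow_mul (by positivity), one_div_mul_cancel hq.ne, Real.rpow_one] at h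
        obtain ⟨s', hs', hlt⟩ := happrox (s ^ q - ε) (by linarith)
        refine ⟨?_, hs₀U.trans hs0, s', hs'.1, hs.2.le.trans (csInf_le hXbdd hs'), by linarith⟩
        by_contra hsS
        exact absurd (csInf_le hXbdd (show s ∈ X from ⟨hsS, hs0.le⟩)) (not_le.2 hs.2)

/-- Tangent line inequality for the convex function `c ↦ c ^ (1 - q)`. -/
lemma rpow_tangent_lt {q : ℝ} (hq : q < 0) {T c : ℝ} (hT : 0 < T) (hc : 0 ≤ c) (hne : c ≠ T) :
    (1 - q) * T ^ (-q) * c < c ^ (1 - q) + -q * T ^ (1 - q) := by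
  have h := one_add_mul_self_lt_rpow_one_add (s := c / T - 1) (p := 1 - q)
    (by have := div_nonneg hc hT.le; linarith)
    (fun h => hne ((div_eq_one_iff_eq hT.ne').1 (by linarith))) (by linarith)
  rw [add_sub_cancel, Real.div_rpow hc hT.le, lt_div_iff₀ (Real.rpow_pos_of_pos hT _)] at h
  have h1 : T ^ (1 - q) = T ^ (-q) * T := by
    rw [← Real.rpow_add_one hT.ne']
    ring_nf
  have h2 : (1 + (1 - q) * (c / T - 1)) * T ^ (1 - q) =
      (1 - q) * T ^ (-q) * c + q * T ^ (1 - q) := by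
    rw [h1]
    field_simp
    ring
  linarith

lemma volume_inter_Ioi_pos {S : Set ℝ} (hpos : S ⊆ Ioi 0) {U : ℝ} (hU : 0 ≤ U)
    (hUS : U < (volume S).toReal) : 0 < volume (S ∩ Ioi U) := by
  by_contra! h0
  have hsub : S ⊆ (S ∩ Ioi U) ∪ Ioc 0 U := fun s hs =>
    (lt_or_ge U s).elim (fun h => Or.inl ⟨hs, h⟩) fun h => Or.inr ⟨hpos hs, h⟩
  have h1 : volume S ≤ ENNReal.ofReal U := by
    refine (measure_mono hsub).trans ((measure_union_le _ _).trans ?_)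
    rw [nonpos_iff_eq_zero.1 h0, zero_add, Real.volume_Ioc, sub_zero]
  have := ENNReal.toReal_mono ENNReal.ofReal_ne_top h1
  rw [ENNReal.toReal_ofReal hU] at this
  linarith

lemma ofReal_volume_rpow_le {q : ℝ} (hq : q < 0) {S : Set ℝ} (hpos : S ⊆ Ioi 0) {L : ℝ≥0∞}
    (hL : ∀ U, 0 ≤ U → 0 < volume (S ∩ Ioi U) → ENNReal.ofReal (U ^ (1 - q)) ≤ L) :
    ENNReal.ofReal ((volume S).toReal ^ (1 - q)) ≤ L := by
  rcases (ENNReal.toReal_nonneg (a := volume S)).eq_or_lt with h0 | h0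
  · rw [← h0, Real.zero_rpow (by linarith), ENNReal.ofReal_zero]
    exact zero_le
  set c := (volume S).toReal with hc
  have hcont : Tendsto (fun U : ℝ => ENNReal.ofReal (U ^ (1 - q))) (𝓝[<] c)
      (𝓝 (ENNReal.ofReal (c ^ (1 - q)))) :=
    (ENNReal.continuous_ofReal.continuousAt.comp
      (Real.continuousAt_rpow_const c (1 - q) (Or.inl h0.ne'))).mono_left nhdsWithin_le_nhds
  refine le_of_tendsto hcont ?_
  filter_upwards [self_mem_nhdsWithin, nhdsWithin_le_nhds (lt_mem_nhds h0)] with U hUc hU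
  exact hL U hU.le (volume_inter_Ioi_pos hpos hU.le hUc)

/-- The pointwise (one ray) form of the isoperimetric inequality, linearized at `T`. -/
lemma ofReal_tangent_le {q : ℝ} (hq : q < 0) {S : Set ℝ} (hpos : S ⊆ Ioi 0)
    {T : ℝ} (hT : 0 < T) {L : ℝ≥0∞}
    (hL : ∀ U, 0 ≤ U → 0 < volume (S ∩ Ioi U) → ENNReal.ofReal (U ^ (1 - q)) ≤ L) :
    ENNReal.ofReal ((1 - q) * T ^ (-q) * (volume S).toReal) ≤
      L + ENNReal.ofReal (-q * T ^ (1 - q)) := by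
  have hc : 0 ≤ (volume S).toReal := ENNReal.toReal_nonneg
  have h1 : (1 - q) * T ^ (-q) * (volume S).toReal ≤
      (volume S).toReal ^ (1 - q) + -q * T ^ (1 - q) := by
    rcases eq_or_ne (volume S).toReal T with h | h
    · have : T ^ (1 - q) = T ^ (-q) * T := by
        rw [← Real.rpow_add_one hT.ne']
        ring_nf
      rw [h, this]
      linarith
    · exact (rpow_tangent_lt hq hT hc h).le
  calc _ ≤ _ := ENNReal.ofReal_le_ofReal h1
    _ = _ := ENNReal.ofReal_add (Real.rpow_nonneg hc _)
      (mul_nonneg (by linarith) (Real.rpow_nonneg hT.le _))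
    _ ≤ _ := by
      gcongr
      exact ofReal_volume_rpow_le hq hpos hL

/-- In the equality case of the one-ray inequality, `S` is the interval `(0, T]` up to a null
set. -/
lemma volume_eq_zero_of_ofReal_tangent_eq {q : ℝ} (hq : q < 0) {S : Set ℝ}
    (hSm : MeasurableSet S) (hpos : S ⊆ Ioi 0) {T : ℝ} (hT : 0 < T) {L : ℝ≥0∞}
    (hL : ∀ U, 0 ≤ U → 0 < volume (S ∩ Ioi U) → ENNReal.ofReal (U ^ (1 - q)) ≤ L)
    (heq : ENNReal.ofReal ((1 - q) * T ^ (-q) * (volume S).toReal) =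
      L + ENNReal.ofReal (-q * T ^ (1 - q))) :
    volume (S ∩ Ioi T) = 0 ∧ volume (Ioc 0 T \ S) = 0 := by
  have hc : 0 ≤ (volume S).toReal := ENNReal.toReal_nonneg
  have hTq : 0 ≤ -q * T ^ (1 - q) := mul_nonneg (by linarith) (Real.rpow_nonneg hT.le _)
  have hLtop : L ≠ ⊤ := fun h => by simp [h] at heq
  have hreal : (1 - q) * T ^ (-q) * (volume S).toReal = L.toReal + -q * T ^ (1 - q) := by
    have := congrArg ENNReal.toReal heq
    rwa [ENNReal.toReal_add hLtop ENNReal.ofReal_ne_top, ENNReal.toReal_ofReal hTq,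
      ENNReal.toReal_ofReal (mul_nonneg (mul_nonneg (by linarith) (Real.rpow_nonneg hT.le _)) hc)]
      at this
  have hcT : (volume S).toReal = T := by
    by_contra h
    have h1 := rpow_tangent_lt hq hT hc h
    have h2 := (ENNReal.ofReal_le_iff_le_toReal hLtop).1 (ofReal_volume_rpow_le hq hpos hL)
    linarith
  have hLT : L.toReal = T ^ (1 - q) := by
    have : T ^ (1 - q) = T ^ (-q) * T := by
      rw [← Real.rpow_add_one hT.ne']
      ring_nf
    rw [hcT] at hreal
    rw [this] at hreal ⊢
    linarith
  have hnull : ∀ U, T < U → volume (S ∩ Ioi U) = 0 := by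
    intro U hU
    by_contra h
    have h1 := (ENNReal.ofReal_le_iff_le_toReal hLtop).1
      (hL U (hT.le.trans hU.le) (pos_iff_ne_zero.2 h))
    have h2 := Real.rpow_lt_rpow hT.le hU (by linarith : 0 < 1 - q)
    linarith
  have hS0 : volume (S ∩ Ioi T) = 0 := by
    have hsub : S ∩ Ioi T ⊆ ⋃ k : ℕ, S ∩ Ioi (T + 1 / (k + 1)) := by
      rintro s ⟨hs, hsT⟩
      obtain ⟨k, hk⟩ := exists_nat_one_div_lt (K := ℝ) (sub_pos.2 (mem_Ioi.1 hsT))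
      exact mem_iUnion.2 ⟨k, hs, by simp only [mem_Ioi]; linarith⟩
    refine measure_mono_null hsub (measure_iUnion_null fun k => hnull _ ?_)
    have : (0 : ℝ) < 1 / (k + 1) := by positivity
    linarith
  refine ⟨hS0, ?_⟩
  have hvol : volume S = ENNReal.ofReal T := by
    rw [← hcT, ENNReal.ofReal_toReal]
    intro h
    rw [h] at hcT
    simp at hcT
    linarith
  have h1 : volume S ≤ volume (Ioc 0 T ∩ S) := by
    have hsub : S ⊆ (Ioc 0 T ∩ S) ∪ (S ∩ Ioi T) := fun s hs =>
      (lt_or_ge T s).elim (fun h => Or.inr ⟨hs, h⟩) fun h => Or.inl ⟨⟨hpos hs, h⟩, hs⟩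
    calc volume S ≤ _ := measure_mono hsub
      _ ≤ _ := measure_union_le _ _
      _ = volume (Ioc 0 T ∩ S) := by rw [hS0, add_zero]
  have h2 := measure_inter_add_sdiff (μ := volume) (Ioc 0 T) hSm
  rw [Real.volume_Ioc, sub_zero, ← hvol] at h2
  have hfin : volume S ≠ ⊤ := by rw [hvol]; exact ENNReal.ofReal_ne_top
  have h3 : volume S + volume (Ioc 0 T \ S) ≤ volume S + 0 := by
    rw [add_zero]
    exact (add_le_add_left h1 _).trans h2.le
  exact nonpos_iff_eq_zero.1 ((ENNReal.add_le_add_iff_left hfin).1 h3)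

section Polar

variable {E : Type*} [NormedAddCommGroup E] [NormedSpace ℝ E]

section Gauge

variable {B : Set E}

lemma gauge_pos_of_isBounded (hB : IsOpen B) (hb : Bornology.IsBounded B) (h0 : (0 : E) ∈ B)
    {x : E} (hx : x ≠ 0) : 0 < gauge B x :=
  (gauge_pos (absorbent_nhds_zero (hB.mem_nhds h0))
    (NormedSpace.isVonNBounded_of_isBounded ℝ hb)).2 hx

lemma gauge_lt_one_iff_mem (hB : IsOpen B) (hc : Convex ℝ B) (h0 : (0 : E) ∈ B) {x : E} :
    gauge B x < 1 ↔ x ∈ B := by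
  rw [gauge_lt_one_iff_mem_interior hc (hB.mem_nhds h0), hB.interior_eq]

lemma mem_smul_iff_gauge_lt (hB : IsOpen B) (hc : Convex ℝ B) (h0 : (0 : E) ∈ B) {t : ℝ}
    (ht : 0 < t) {x : E} : x ∈ t • B ↔ gauge B x < t := by
  rw [mem_smul_set_iff_inv_smul_mem₀ ht.ne', ← gauge_lt_one_iff_mem hB hc h0,
    gauge_smul_of_nonneg (inv_nonneg.2 ht.le), smul_eq_mul, inv_mul_lt_iff₀ ht, mul_one]

lemma gauge_inv_gauge_smul (hB : IsOpen B) (hb : Bornology.IsBounded B) (h0 : (0 : E) ∈ B)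
    {x : E} (hx : x ≠ 0) : gauge B ((gauge B x)⁻¹ • x) = 1 := by
  rw [gauge_smul_of_nonneg (inv_nonneg.2 (gauge_nonneg x)), smul_eq_mul,
    inv_mul_cancel₀ (gauge_pos_of_isBounded hB hb h0 hx).ne']

end Gauge

variable [MeasurableSpace E] [BorelSpace E] [SecondCountableTopology E]

/-- The radial projection of `μ` restricted to `Bᶜ` onto the boundary of `B`. -/
noncomputable def angularMeasure (μ : Measure E) (B : Set E) : Measure E :=
  (μ.restrict Bᶜ).map fun x => (gauge B x)⁻¹ • x

/-- A measure that is homogeneous of negative degree has no atom at the origin. -/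
lemma measure_singleton_zero_of_homogeneous {q : ℝ} (hq : q < 0) {μ : Measure E} [SigmaFinite μ]
    (hhom : ∀ A : Set E, MeasurableSet A → ∀ c : ℝ, 0 < c →
      μ (c • A) = ENNReal.ofReal (c ^ (1 / q)) * μ A) :
    μ {0} = 0 := by
  have hfin : μ {0} < ⊤ := by
    have h0 : (0 : E) ∈ ⋃ i, spanningSets μ i := by simp [iUnion_spanningSets]
    obtain ⟨i, hi⟩ := mem_iUnion.1 h0
    exact (measure_mono (singleton_subset_iff.2 hi)).trans_lt (measure_spanningSets_lt_top μ i)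
  have h := hhom {0} (measurableSet_singleton 0) 2 two_pos
  rw [smul_set_singleton, smul_zero] at h
  have hlt : (2 : ℝ) ^ (1 / q) < 1 :=
    Real.rpow_lt_one_of_one_lt_of_neg one_lt_two (one_div_neg.2 hq)
  have hr := congrArg ENNReal.toReal h
  rw [ENNReal.toReal_mul, ENNReal.toReal_ofReal (by positivity)] at hr
  have hz : (μ {0}).toReal = 0 := by
    by_contra hne
    have := mul_right_cancel₀ hne ((one_mul _).trans hr)
    linarith
  exact ((ENNReal.toReal_eq_zero_iff _).1 hz).resolve_right hfin.ne

variable {B : Set E}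

lemma measurable_inv_gauge_smul (hB : IsOpen B) (hc : Convex ℝ B) (h0 : (0 : E) ∈ B) :
    Measurable fun x => (gauge B x)⁻¹ • x :=
  (continuous_gauge hc (hB.mem_nhds h0)).measurable.inv.smul measurable_id

lemma angularMeasure_univ (hB : IsOpen B) (hc : Convex ℝ B) (h0 : (0 : E) ∈ B) (μ : Measure E) :
    angularMeasure μ B univ = μ Bᶜ := by
  rw [angularMeasure, Measure.map_apply (measurable_inv_gauge_smul hB hc h0) MeasurableSet.univ]
  simp

lemma ae_angularMeasure_gauge_eq_one (hB : IsOpen B) (hb : Bornology.IsBounded B)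
    (hc : Convex ℝ B) (h0 : (0 : E) ∈ B) (μ : Measure E) :
    ∀ᵐ θ ∂angularMeasure μ B, gauge B θ = 1 := by
  have hg := (continuous_gauge hc (hB.mem_nhds h0)).measurable
  rw [angularMeasure, ae_map_iff (measurable_inv_gauge_smul hB hc h0).aemeasurable
    (measurableSet_eq_fun hg measurable_const)]
  filter_upwards [ae_restrict_mem hB.measurableSet.compl] with x hx
  exact gauge_inv_gauge_smul hB hb h0 fun h => hx (h ▸ h0)

/-- Polar decomposition of a homogeneous measure: in the coordinates `s = g ^ (1 / q)`, `θ = x / g`,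
where `g` is the gauge of `B`, it is the product of Lebesgue measure and the angular measure. -/
lemma map_polar_eq_prod {q : ℝ} (hq : q < 0) {μ : Measure E} [SigmaFinite μ]
    (hhom : ∀ A : Set E, MeasurableSet A → ∀ c : ℝ, 0 < c →
      μ (c • A) = ENNReal.ofReal (c ^ (1 / q)) * μ A)
    (hB : IsOpen B) (hb : Bornology.IsBounded B) (hc : Convex ℝ B) (h0 : (0 : E) ∈ B)
    [IsFiniteMeasure (angularMeasure μ B)] :
    (volume.restrict (Ioi (0 : ℝ))).prod (angularMeasure μ B) =
      μ.map fun x => (gauge B x ^ (1 / q), (gauge B x)⁻¹ • x) := by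
  have hg := (continuous_gauge hc (hB.mem_nhds h0)).measurable
  have hdir := measurable_inv_gauge_smul hB hc h0
  have hz := measure_singleton_zero_of_homogeneous hq hhom
  have hspan : (volume.restrict (Ioi (0 : ℝ))).FiniteSpanningSetsIn (range Iic) :=
    { set := fun k => Iic (k : ℝ)
      set_mem := fun k => mem_range_self _
      finite := fun k => by
        rw [Measure.restrict_apply measurableSet_Iic, Iic_inter_Ioi, Real.volume_Ioc]
        exact ENNReal.ofReal_lt_top
      spanning := by
        refine eq_univ_of_forall fun x => mem_iUnion.2 ?_
        obtain ⟨k, hk⟩ := exists_nat_ge x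
        exact ⟨k, hk⟩ }
  refine Measure.prod_eq_generateFrom
    ((borel_eq_generateFrom_Iic ℝ).symm.trans BorelSpace.measurable_eq.symm)
    MeasurableSpace.generateFrom_measurableSet isPiSystem_Iic
    MeasurableSpace.isPiSystem_measurableSet hspan
    (angularMeasure μ B).toFiniteSpanningSetsIn ?_
  rintro _ ⟨t, rfl⟩ D (hD : MeasurableSet D)
  rw [Measure.map_apply ((hg.pow_const _).prodMk hdir) (measurableSet_Iic.prod hD),
    Measure.restrict_apply measurableSet_Iic, Iic_inter_Ioi, Real.volume_Ioc, sub_zero]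
  rcases le_or_gt t 0 with ht | ht
  · rw [ENNReal.ofReal_of_nonpos ht, zero_mul]
    refine measure_mono_null (fun x hx => ?_) hz
    by_contra hx0
    have := Real.rpow_pos_of_pos (gauge_pos_of_isBounded hB hb h0 hx0) (1 / q)
    have hxt : gauge B x ^ (1 / q) ≤ t := hx.1
    linarith
  have htq : 0 < t ^ q := Real.rpow_pos_of_pos ht q
  have hA : MeasurableSet ((fun x => (gauge B x)⁻¹ • x) ⁻¹' D ∩ Bᶜ) :=
    (hdir hD).inter hB.measurableSet.compl
  have hscale := hhom _ hA (t ^ q) htq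
  rw [← Real.rpow_mul ht.le, mul_one_div_cancel hq.ne, Real.rpow_one] at hscale
  rw [angularMeasure, Measure.map_apply hdir hD, Measure.restrict_apply (hdir hD), ← hscale]
  have hiff : ∀ x : E, x ≠ 0 →
      (x ∈ (fun x => (gauge B x ^ (1 / q), (gauge B x)⁻¹ • x)) ⁻¹' (Iic t ×ˢ D) ↔
        x ∈ (t ^ q) • ((fun x => (gauge B x)⁻¹ • x) ⁻¹' D ∩ Bᶜ)) := by
    intro x hx
    have hgx := gauge_pos_of_isBounded hB hb h0 hx
    rw [mem_smul_set_iff_inv_smul_mem₀ htq.ne']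
    simp only [mem_preimage, mem_prod, mem_Iic, mem_inter_iff, mem_compl_iff]
    rw [← gauge_lt_one_iff_mem hB hc h0, gauge_smul_of_nonneg (inv_nonneg.2 htq.le), smul_eq_mul,
      smul_smul, mul_inv, inv_inv, mul_right_comm, mul_inv_cancel₀ htq.ne', one_mul,
      inv_mul_lt_iff₀ htq, mul_one, not_lt, one_div, Real.rpow_inv_le_iff_of_neg hgx ht hq, and_comm]
  refine measure_congr (eventuallyEq_set.2 ?_)
  have hne : ∀ᵐ x ∂μ, x ≠ 0 := compl_mem_ae_iff.2 hz
  filter_upwards [hne] with x hx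
  exact hiff x hx

lemma measurableSet_polar {S : Set E} (hS : MeasurableSet S) (q : ℝ) :
    MeasurableSet {p : ℝ × E | 0 < p.1 ∧ p.1 ^ q • p.2 ∈ S} :=
  (measurableSet_lt measurable_const measurable_fst).inter
    (((measurable_fst.pow_const q).smul measurable_snd) hS)

lemma measurableSet_ray {S : Set E} (hS : MeasurableSet S) (q : ℝ) (θ : E) :
    MeasurableSet {s : ℝ | 0 < s ∧ s ^ q • θ ∈ S} :=
  measurable_prodMk_right (measurableSet_polar hS q)

lemma measurable_volume_ray {S : Set E} (hS : MeasurableSet S) (q : ℝ) :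
    Measurable fun θ : E => volume {s : ℝ | 0 < s ∧ s ^ q • θ ∈ S} :=
  measurable_measure_prodMk_right (measurableSet_polar hS q)

lemma measure_eq_lintegral_ray {q : ℝ} (hq : q < 0) {μ : Measure E} [SigmaFinite μ]
    (hhom : ∀ A : Set E, MeasurableSet A → ∀ c : ℝ, 0 < c →
      μ (c • A) = ENNReal.ofReal (c ^ (1 / q)) * μ A)
    (hB : IsOpen B) (hb : Bornology.IsBounded B) (hc : Convex ℝ B) (h0 : (0 : E) ∈ B)
    [IsFiniteMeasure (angularMeasure μ B)] {S : Set E} (hS : MeasurableSet S) :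
    μ S = ∫⁻ θ, volume {s : ℝ | 0 < s ∧ s ^ q • θ ∈ S} ∂angularMeasure μ B := by
  have hg := (continuous_gauge hc (hB.mem_nhds h0)).measurable
  have hz := measure_singleton_zero_of_homogeneous hq hhom
  have hP := measurableSet_polar hS q
  have h1 : μ S = μ.map (fun x => (gauge B x ^ (1 / q), (gauge B x)⁻¹ • x))
      {p : ℝ × E | 0 < p.1 ∧ p.1 ^ q • p.2 ∈ S} := by
    rw [Measure.map_apply ((hg.pow_const _).prodMk (measurable_inv_gauge_smul hB hc h0)) hP]
    refine measure_congr (eventuallyEq_set.2 ?_)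
    have hne : ∀ᵐ x ∂μ, x ≠ 0 := compl_mem_ae_iff.2 hz
    filter_upwards [hne] with x hx
    have hgx := gauge_pos_of_isBounded hB hb h0 hx
    refine ⟨fun h => ⟨Real.rpow_pos_of_pos hgx _, ?_⟩, fun h => ?_⟩
    · simpa [← Real.rpow_mul hgx.le, hq.ne, smul_smul, hgx.ne'] using h
    · have h2 : (gauge B x ^ (1 / q)) ^ q • (gauge B x)⁻¹ • x ∈ S := h.2
      simpa [← Real.rpow_mul hgx.le, hq.ne, smul_smul, hgx.ne'] using h2
  rw [h1, ← map_polar_eq_prod hq hhom hB hb hc h0, Measure.prod_apply_symm hP]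
  refine lintegral_congr fun θ => ?_
  rw [Measure.restrict_apply (measurable_prodMk_right hP)]
  congr 1
  ext s
  simp only [mem_inter_iff, mem_preimage, mem_ofPred_eq, mem_Ioi]
  tauto

end Polar

/-- Along a ray through a boundary point `θ` of `B`, the enlargement `Cᶜ + ε • B` contains the
radial enlargement of the trace of `Cᶜ`. -/
lemma rpow_smul_mem_add_smul {E : Type*} [NormedAddCommGroup E] [NormedSpace ℝ E] {B C : Set E}
    (hB : IsOpen B) (hc : Convex ℝ B) (h0 : (0 : E) ∈ B) {q : ℝ} (hq : q < 0) {θ : E}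
    (hθ : gauge B θ = 1) {ε s s' : ℝ} (hε : 0 < ε) (hs : 0 < s) (hss' : s ≤ s')
    (hs' : s' ^ q • θ ∉ C) (hlt : s ^ q - s' ^ q < ε) : s ^ q • θ ∈ Cᶜ + ε • B := by
  refine mem_add.2 ⟨s' ^ q • θ, hs', (s ^ q - s' ^ q) • θ, ?_, ?_⟩
  · have hnn : 0 ≤ s ^ q - s' ^ q := sub_nonneg.2 (Real.rpow_le_rpow_of_nonpos hs hss' hq.le)
    rw [mem_smul_iff_gauge_lt hB hc h0 hε, gauge_smul_of_nonneg hnn, hθ, smul_eq_mul, mul_one]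
    exact hlt
  · rw [← add_smul, add_sub_cancel]

lemma measurableSet_add_smul_diff {E : Type*} [NormedAddCommGroup E] [NormedSpace ℝ E]
    [MeasurableSpace E] [BorelSpace E] {A B : Set E} (hA : MeasurableSet A) (hB : IsOpen B)
    (hBne : B.Nonempty) (ε : ℝ) : MeasurableSet ((A + ε • B) \ A) := by
  rcases eq_or_ne ε 0 with rfl | hε
  · rw [zero_smul_set hBne, add_zero, sdiff_self]
    exact MeasurableSet.empty
  · exact ((hB.smul₀ hε).add_left).measurableSet.diff hA

/-- equality case in the isoperimetric inequality for a σ-finite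
`q`-homogeneous measure, `q < 0`: an equality set `C` must coincide with the complement of
a homothetic copy of `B` up to zero `μ`-measure. -/
theorem stmt14 (n : ℕ) (hn : 1 ≤ n) (q : ℝ) (hq : q < 0)
    (μ : Measure (Fin n → ℝ)) (hσ : SigmaFinite μ)
    (hhom : ∀ A : Set (Fin n → ℝ), MeasurableSet A → ∀ c : ℝ, 0 < c →
      μ (c • A) = ENNReal.ofReal (c ^ (1 / q)) * μ A)
    (B : Set (Fin n → ℝ)) (hBopen : IsOpen B) (hBbdd : Bornology.IsBounded B)
    (hBconv : Convex ℝ B) (h0B : (0 : Fin n → ℝ) ∈ B)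
    (hBc0 : 0 < μ Bᶜ) (hBcfin : μ Bᶜ < ⊤)
    (C : Set (Fin n → ℝ)) (hC : MeasurableSet C) (hC0 : 0 < μ C) (hCfin : μ C < ⊤)
    (heq : mInnerBoundary μ B C = ENNReal.ofReal (-(1 / q)) * μ Bᶜ ^ q * μ C ^ (1 - q)) :
    ∃ t : ℝ, 0 < t ∧ μ (C \ (t • B)ᶜ) = 0 ∧ μ ((t • B)ᶜ \ C) = 0 := by
  have hang := angularMeasure_univ hBopen hBconv h0B μ
  set ν := angularMeasure μ B with hν
  have hfinν : IsFiniteMeasure ν := ⟨by rw [hang]; exact hBcfin⟩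
  have hpolar : ∀ {S : Set (Fin n → ℝ)}, MeasurableSet S →
      μ S = ∫⁻ θ, volume {s : ℝ | 0 < s ∧ s ^ q • θ ∈ S} ∂ν := fun hS =>
    measure_eq_lintegral_ray hq hhom hBopen hBbdd hBconv h0B hS
  set V := (μ Bᶜ).toReal with hV
  set M := (μ C).toReal with hM
  have hV0 : 0 < V := ENNReal.toReal_pos hBc0.ne' hBcfin.ne
  have hM0 : 0 < M := ENNReal.toReal_pos hC0.ne' hCfin.ne
  have hVof : μ Bᶜ = ENNReal.ofReal V := (ENNReal.ofReal_toReal hBcfin.ne).symm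
  have hMof : μ C = ENNReal.ofReal M := (ENNReal.ofReal_toReal hCfin.ne).symm
  set T := M / V with hTdef
  have hT : 0 < T := div_pos hM0 hV0
  have hMT : M = T * V := (div_mul_cancel₀ M hV0.ne').symm
  have hTpow : T ^ (1 - q) = T ^ (-q) * T := by
    rw [← Real.rpow_add_one hT.ne']
    ring_nf
  have hTpow0 : 0 ≤ T ^ (1 - q) := Real.rpow_nonneg hT.le _
  obtain ⟨e, heF, he⟩ := exists_seq_tendsto_liminf (f := 𝓝[>] (0 : ℝ))
    (u := fun ε : ℝ => μ ((Cᶜ + ε • B) \ Cᶜ) / ENNReal.ofReal ε)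
  set W : ℕ → (Fin n → ℝ) → ℝ≥0∞ := fun k θ =>
    volume {s : ℝ | 0 < s ∧ s ^ q • θ ∈ (Cᶜ + e k • B) \ Cᶜ} / ENNReal.ofReal (e k) with hW
  have hmeas : ∀ k, MeasurableSet ((Cᶜ + e k • B) \ Cᶜ) := fun k =>
    measurableSet_add_smul_diff hC.compl hBopen ⟨0, h0B⟩ (e k)
  have hWm : ∀ k, Measurable (W k) := fun k =>
    (measurable_volume_ray (hmeas k) q).div_const _
  set L : (Fin n → ℝ) → ℝ≥0∞ := fun θ => liminf (fun k => W k θ) atTop with hLdef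
  have hLm : Measurable L := Measurable.liminf hWm
  have hLint : ∫⁻ θ, L θ ∂ν ≤ ENNReal.ofReal (-(1 / q)) * μ Bᶜ ^ q * μ C ^ (1 - q) := by
    refine (lintegral_liminf_le hWm).trans (le_of_eq ?_)
    rw [← heq, mInnerBoundary, mBoundary, ← heF.liminf_eq]
    congr 1
    ext k
    rw [Function.comp_apply, hpolar (hmeas k)]
    simp only [hW, div_eq_mul_inv]
    rw [lintegral_mul_const _ (measurable_volume_ray (hmeas k) q)]
  have hfin_ray : ∀ᵐ θ ∂ν, volume {s : ℝ | 0 < s ∧ s ^ q • θ ∈ C} < ⊤ :=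
    ae_lt_top (measurable_volume_ray hC q) (by rw [← hpolar hC]; exact hCfin.ne)
  have hgauge : ∀ᵐ θ ∂ν, gauge B θ = 1 :=
    ae_angularMeasure_gauge_eq_one hBopen hBbdd hBconv h0B μ
  have hbound : ∀ᵐ θ ∂ν, ∀ U, 0 ≤ U → 0 < volume ({s : ℝ | 0 < s ∧ s ^ q • θ ∈ C} ∩ Ioi U) →
      ENNReal.ofReal (U ^ (1 - q)) ≤ ENNReal.ofReal (-q) * L θ := by
    filter_upwards [hfin_ray, hgauge] with θ hθfin hθ U hU hpos
    have hev := eventually_le_volume_rpow_growth hq hθfin hU hpos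
    have hle : ENNReal.ofReal (-(1 / q) * U ^ (1 - q)) ≤ L θ := by
      refine le_liminf_of_le (by isBoundedDefault) ?_
      filter_upwards [he.eventually hev, he.eventually self_mem_nhdsWithin] with k hk hek
      have hek0 : 0 < e k := hek
      rw [hW, ENNReal.le_div_iff_mul_le (Or.inl (by simpa using hek0))
        (Or.inl ENNReal.ofReal_ne_top), ← ENNReal.ofReal_mul' hek0.le]
      refine hk.trans (measure_mono ?_)
      rintro s ⟨⟨hs0, hsC⟩, -, s', hs'C, hss', hlt⟩
      refine ⟨hs0, rpow_smul_mem_add_smul hBopen hBconv h0B hq hθ hek0 hs0 hss' ?_ hlt,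
        fun h => h hsC⟩
      exact fun h => hs'C ⟨hs0.trans_le hss', h⟩
    calc ENNReal.ofReal (U ^ (1 - q))
        = ENNReal.ofReal (-q) * ENNReal.ofReal (-(1 / q) * U ^ (1 - q)) := by
          rw [← ENNReal.ofReal_mul (by linarith)]
          congr 1
          field_simp [hq.ne]
      _ ≤ _ := by gcongr
  have hpos : ∀ θ : Fin n → ℝ, {s : ℝ | 0 < s ∧ s ^ q • θ ∈ C} ⊆ Ioi 0 := fun θ s hs => hs.1
  have hae := ae_eq_of_ae_le_of_lintegral_le (μ := ν)
    (f := fun θ => ENNReal.ofReal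
      ((1 - q) * T ^ (-q) * (volume {s : ℝ | 0 < s ∧ s ^ q • θ ∈ C}).toReal))
    (g := fun θ => ENNReal.ofReal (-q) * L θ + ENNReal.ofReal (-q * T ^ (1 - q)))
  have hfint : ∫⁻ θ, ENNReal.ofReal
      ((1 - q) * T ^ (-q) * (volume {s : ℝ | 0 < s ∧ s ^ q • θ ∈ C}).toReal) ∂ν =
      ENNReal.ofReal ((1 - q) * T ^ (1 - q) * V) := by
    have h1 : 0 ≤ (1 - q) * T ^ (-q) :=
      mul_nonneg (by linarith) (Real.rpow_nonneg hT.le _)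
    calc _ = ∫⁻ θ, ENNReal.ofReal ((1 - q) * T ^ (-q)) *
          volume {s : ℝ | 0 < s ∧ s ^ q • θ ∈ C} ∂ν := by
          refine lintegral_congr_ae ?_
          filter_upwards [hfin_ray] with θ hθ
          rw [ENNReal.ofReal_mul h1, ENNReal.ofReal_toReal hθ.ne]
      _ = _ := by
          rw [lintegral_const_mul _ (measurable_volume_ray hC q), ← hpolar hC, hMof,
            ← ENNReal.ofReal_mul h1, hMT, hTpow]
          ring_nf
  have hgint : ∫⁻ θ, (ENNReal.ofReal (-q) * L θ + ENNReal.ofReal (-q * T ^ (1 - q))) ∂ν ≤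
      ENNReal.ofReal ((1 - q) * T ^ (1 - q) * V) := by
    rw [lintegral_add_right _ measurable_const, lintegral_const_mul _ hLm, lintegral_const, hang]
    have hVM : V ^ q * M ^ (1 - q) = T ^ (1 - q) * V := by
      rw [hMT, Real.mul_rpow hT.le hV0.le, mul_left_comm, ← Real.rpow_add hV0]
      simp
    calc _ ≤ ENNReal.ofReal (-q) * (ENNReal.ofReal (-(1 / q)) * μ Bᶜ ^ q * μ C ^ (1 - q)) +
          ENNReal.ofReal (-q * T ^ (1 - q)) * μ Bᶜ := by gcongr
      _ = ENNReal.ofReal (T ^ (1 - q) * V) + ENNReal.ofReal (-q * T ^ (1 - q) * V) := by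
          rw [hVof, hMof, ENNReal.ofReal_rpow_of_pos hV0, ENNReal.ofReal_rpow_of_pos hM0,
            mul_assoc, ← ENNReal.ofReal_mul (Real.rpow_nonneg hV0.le _), hVM,
            ← mul_assoc, ← ENNReal.ofReal_mul (by linarith), ← ENNReal.ofReal_mul' hV0.le]
          rw [neg_mul_neg, mul_one_div_cancel hq.ne, ENNReal.ofReal_one, one_mul]
      _ = _ := by
          rw [← ENNReal.ofReal_add (by positivity)
            (mul_nonneg (mul_nonneg (by linarith) hTpow0) hV0.le)]
          ring_nf
  have hray : ∀ᵐ θ ∂ν, volume ({s : ℝ | 0 < s ∧ s ^ q • θ ∈ C} ∩ Ioi T) = 0 ∧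
      volume (Ioc 0 T \ {s : ℝ | 0 < s ∧ s ^ q • θ ∈ C}) = 0 := by
    have heq' := hae
      (by filter_upwards [hbound] with θ hθ using ofReal_tangent_le hq (hpos θ) hT hθ)
      (by rw [hfint]; exact ENNReal.ofReal_ne_top)
      ((hLm.const_mul _).add_const _).aemeasurable (hgint.trans hfint.ge)
    filter_upwards [heq', hbound] with θ h1 h2
    exact volume_eq_zero_of_ofReal_tangent_eq hq (measurableSet_ray hC q θ) (hpos θ) hT h2 h1
  have hTq : 0 < T ^ q := Real.rpow_pos_of_pos hT q
  have htB : MeasurableSet ((T ^ q) • B) := (hBopen.smul₀ hTq.ne').measurableSet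
  have hmem : ∀ θ, gauge B θ = 1 → ∀ s : ℝ, 0 < s → (s ^ q • θ ∈ (T ^ q) • B ↔ T < s) := by
    intro θ hθ s hs
    rw [mem_smul_iff_gauge_lt hBopen hBconv h0B hTq,
      gauge_smul_of_nonneg (Real.rpow_nonneg hs.le q), hθ, smul_eq_mul, mul_one,
      Real.rpow_lt_rpow_iff_of_neg hs hT hq]
  refine ⟨T ^ q, hTq, ?_, ?_⟩
  · rw [hpolar (hC.diff htB.compl), lintegral_eq_zero_iff (measurable_volume_ray
      (hC.diff htB.compl) q)]
    filter_upwards [hray, hgauge] with θ h1 h2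
    refine measure_mono_null ?_ h1.1
    rintro s ⟨hs, hsC, hsB⟩
    exact ⟨⟨hs, hsC⟩, (hmem θ h2 s hs).1 (not_not.1 hsB)⟩
  · rw [hpolar (htB.compl.diff hC), lintegral_eq_zero_iff (measurable_volume_ray
      (htB.compl.diff hC) q)]
    filter_upwards [hray, hgauge] with θ h1 h2
    refine measure_mono_null ?_ h1.2
    rintro s ⟨hs, hsB, hsC⟩
    exact ⟨⟨hs, not_lt.1 fun h => hsB ((hmem θ h2 s hs).2 h)⟩, fun h => hsC h.2⟩
end

section
/- Let φ : (0,∞) → [0,∞) be non-increasing, lower semi-continuous, non-integrable at the origin (∫₀¹ φ = ∞) and integrable at infinity (∫₁^∞ φ < ∞), and let μ be the measure φ(t)dt on ℝ₊ = [0,∞). Set Φ(t) := ∫_t^∞ φ(s)ds for t > 0, with generalized inverse Φ⁻¹(v) := inf{t > 0 : Φ(t) ≤ v}, and let B = [0,b] for some b > 0. Then for every t ≥ 0 and every Borel set A ⊆ ℝ₊ with μ(ℝ₊∖A) < ∞, μ(ℝ₊∖(A+tB)) ≤ Φ(Φ⁻¹(μ(ℝ₊∖A)) + t·Φ⁻¹(μ(ℝ₊∖B)));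 i.e., μ is B-one-sided Φ⁻¹-complemented concave. -/
open MeasureTheory Set Filter
open scoped Pointwise ENNReal Topology

/-- Generalized inverse `Φ⁻¹(v) = inf {t > 0 : Φ(t) ≤ v}`, valued in `ℝ≥0∞`
(so an empty set gives `∞`). -/
noncomputable def genInvE (Φ : ℝ → ℝ) (v : ℝ) : ℝ≥0∞ :=
  ⨅ (t : ℝ) (_ : 0 < t) (_ : Φ t ≤ v), ENNReal.ofReal t

/-- Extension of a function `Φ : ℝ → ℝ` to `ℝ≥0∞` arguments, with the convention
`Φ(∞) = 0`. -/
noncomputable def phiE (Φ : ℝ → ℝ) (s : ℝ≥0∞) : ℝ :=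
  if s = ⊤ then 0 else Φ s.toReal

/-- If `g` is non-increasing on `(0, ∞)`, then translating a half-open interval to the right
decreases its measure with respect to `g(t)dt`. -/
lemma withDensity_Ioc_add_le {g : ℝ → ℝ≥0∞}
    (hg : ∀ s t : ℝ, 0 < s → s ≤ t → g t ≤ g s) {d a : ℝ} (hd : 0 ≤ d) (hda : d ≤ a) (h : ℝ) :
    volume.withDensity g (Ioc a (a + h)) ≤ volume.withDensity g (Ioc d (d + h)) := by
  rw [withDensity_apply _ measurableSet_Ioc, withDensity_apply _ measurableSet_Ioc,
    ← lintegral_indicator measurableSet_Ioc, ← lintegral_indicator measurableSet_Ioc,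
    ← lintegral_add_right_eq_self _ (a - d)]
  refine lintegral_mono fun x => ?_
  by_cases hx : x ∈ Ioc d (d + h)
  · rw [indicator_of_mem hx]
    exact (indicator_le_self _ _ _).trans (hg _ _ (hd.trans_lt hx.1) (by linarith))
  · rw [indicator_of_notMem]
    · exact zero_le
    · exact fun hx' => hx ⟨by linarith [hx'.1], by linarith [hx'.2]⟩

/-- The erosion of the complement of `A` by `[0, h]`: if `μ(ℝ₊ ∖ A) ≤ μ((a, ∞))`, then
`μ(ℝ₊ ∖ (A + [0, h])) ≤ μ((a + h, ∞))`, for an atomless measure `μ` that is infinite near `0`,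
finite away from `0`, and decreases under translations to the right. -/
lemma measure_diff_add_Icc_le {μ : Measure ℝ} [NullSingletonClass μ]
    (hshift : ∀ d a h : ℝ, 0 ≤ d → d ≤ a → μ (Ioc a (a + h)) ≤ μ (Ioc d (d + h)))
    (hfin : ∀ t : ℝ, 0 < t → μ (Ioi t) ≠ ⊤) (hzero : ∀ x : ℝ, 0 < x → μ (Ioo 0 x) = ⊤)
    {A : Set ℝ} (hA : μ (Ici 0 \ A) ≠ ⊤) {a h : ℝ} (ha : 0 < a) (hh : 0 ≤ h)
    (hAa : μ (Ici 0 \ A) ≤ μ (Ioi a)) :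
    μ (Ici 0 \ (A + Icc 0 h)) ≤ μ (Ioi (a + h)) := by
  set E := (Ici 0 \ (A + Icc 0 h)) \ {0} with hE
  rw [← measure_sdiff_null (measure_singleton (μ := μ) 0), ← hE]
  have hnot : ∀ x ∈ E, ∀ y, y ≤ x → x - h ≤ y → y ∉ A := fun x hx y hyx hxy hyA =>
    hx.1.2 ⟨y, hyA, x - y, ⟨by linarith, by linarith⟩, by simp⟩
  have hgt : ∀ x ∈ E, h < x := by
    intro x hx
    have hx0 : 0 < x := lt_of_le_of_ne hx.1.1 (Ne.symm hx.2)
    by_contra! hxh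
    refine hA (top_unique ?_)
    rw [← hzero x hx0]
    exact measure_mono fun y hy => ⟨hy.1.le, hnot x hx y hy.2.le (by linarith [hy.1])⟩
  rcases E.eq_empty_or_nonempty with hemp | hne
  · simp [hemp]
  have hbdd : BddBelow E := ⟨h, fun x hx => (hgt x hx).le⟩
  obtain ⟨d, hd⟩ : ∃ d, sInf E = d + h := ⟨sInf E - h, by ring⟩
  have hd0 : 0 ≤ d := by
    have := le_csInf hne fun x hx => (hgt x hx).le
    linarith
  have hle : ∀ x ∈ E, d + h ≤ x := fun x hx => hd ▸ csInf_le hbdd hx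
  rcases le_total a d with had | hda
  · calc μ E ≤ μ (Ici (a + h)) := measure_mono fun x hx => by
          have := hle x hx
          rw [mem_Ici]; linarith
      _ = μ (Ioi (a + h)) := measure_congr Ioi_ae_eq_Ici.symm
  · have hdisj : Disjoint E (Ioo d (d + h)) :=
      disjoint_left.2 fun x hx hx' => (hle x hx).not_gt hx'.2
    have hsub : E ∪ Ioo d (d + h) ⊆ Ici 0 \ A := by
      rintro y (hy | hy)
      · exact ⟨hy.1.1, hnot y hy y le_rfl (by linarith)⟩
      · obtain ⟨x, hx, hxy⟩ := exists_lt_of_csInf_lt hne (show sInf E < y + h by linarith [hy.1])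
        exact ⟨hd0.trans hy.1.le, hnot x hx y (hy.2.le.trans (hle x hx)) (by linarith)⟩
    have hIoi : μ (Ioi a) = μ (Ioi (a + h)) + μ (Ioc a (a + h)) := by
      rw [← measure_union _ measurableSet_Ioc, union_comm, Ioc_union_Ioi_eq_Ioi (by linarith)]
      exact disjoint_left.2 fun x hx hx' => (mem_Ioi.1 hx).not_ge hx'.2
    have hIoc : μ (Ioc a (a + h)) ≠ ⊤ := measure_ne_top_of_subset Ioc_subset_Ioi_self (hfin a ha)
    refine (ENNReal.add_le_add_iff_right hIoc).1 ?_
    calc μ E + μ (Ioc a (a + h)) ≤ μ E + μ (Ioo d (d + h)) :=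
          add_le_add_right
            ((hshift d a h hd0 hda).trans_eq (measure_congr Ioo_ae_eq_Ioc.symm)) _
      _ = μ (E ∪ Ioo d (d + h)) := (measure_union hdisj measurableSet_Ioo).symm
      _ ≤ μ (Ioi a) := (measure_mono hsub).trans hAa
      _ = _ := hIoi

/-- For an atomless measure that is finite away from `0`, a lower bound for `μ((s, ∞))` valid for
all `0 < s < a` passes to `s = a`. -/
lemma le_measure_Ioi_of_forall_lt {μ : Measure ℝ} [NullSingletonClass μ]
    (hfin : ∀ t : ℝ, 0 < t → μ (Ioi t) ≠ ⊤) {m : ℝ≥0∞} {a : ℝ} (ha : 0 < a)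
    (hm : ∀ s, 0 < s → s < a → m ≤ μ (Ioi s)) : m ≤ μ (Ioi a) := by
  have key := tendsto_measure_biInter_gt (μ := μ) (s := fun r : ℝ => Ioi (a - r)) (a := 0)
    (fun r _ => measurableSet_Ioi.nullMeasurableSet)
    (fun i j _ hij => Ioi_subset_Ioi (by linarith))
    ⟨a / 2, half_pos ha, hfin _ (by linarith)⟩
  have hInter : (⋂ r > (0 : ℝ), Ioi (a - r)) = Ici a := by
    ext x
    simp only [mem_iInter, mem_Ioi, mem_Ici]
    refine ⟨fun hx => le_of_forall_pos_lt_add fun r hr => ?_, fun hx r hr => by linarith⟩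
    linarith [hx r hr]
  rw [hInter, ← measure_congr (Ioi_ae_eq_Ici (μ := μ))] at key
  refine ge_of_tendsto key ?_
  filter_upwards [Ioo_mem_nhdsGT ha] with r hr
  exact hm _ (by linarith [hr.2]) (by linarith [hr.1])

/-- If `μ((s, ∞)) ≤ m` for all `s > 0`, then `μ((0, ∞)) ≤ m`. -/
lemma measure_Ioi_zero_le {μ : Measure ℝ} {m : ℝ≥0∞}
    (hm : ∀ s : ℝ, 0 < s → μ (Ioi s) ≤ m) : μ (Ioi 0) ≤ m := by
  have hU : Ioi (0 : ℝ) = ⋃ n : ℕ, Ioi (1 / ((n : ℝ) + 1)) := by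
    ext x
    simp only [mem_iUnion, mem_Ioi]
    exact ⟨fun hx => exists_nat_one_div_lt hx, fun ⟨n, hn⟩ => lt_trans (by positivity) hn⟩
  have hmono : Monotone fun n : ℕ => Ioi (1 / ((n : ℝ) + 1)) := fun i j hij =>
    Ioi_subset_Ioi (Nat.one_div_le_one_div hij)
  rw [hU, hmono.measure_iUnion]
  exact iSup_le fun n => hm _ (by positivity)

/-- one-dimensional one-sided complemented Brunn--Minkowski inequality: for
`μ = φ(t)dt` on `ℝ₊` with `φ` non-increasing, lower semi-continuous, non-integrable at `0`
and integrable at `∞`, and `B = [0,b]`,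
`μ(ℝ₊∖(A+tB)) ≤ Φ(Φ⁻¹(μ(ℝ₊∖A)) + tΦ⁻¹(μ(ℝ₊∖B)))`. -/
theorem stmt16 (φ : ℝ → ℝ) (hφm : Measurable φ) (hφ0 : ∀ t : ℝ, 0 < t → 0 ≤ φ t)
    (hφmono : ∀ s t : ℝ, 0 < s → s ≤ t → φ t ≤ φ s)
    (hφlsc : LowerSemicontinuousOn φ (Set.Ioi 0))
    (hint0 : ∫⁻ t in Set.Ioo (0 : ℝ) 1, ENNReal.ofReal (φ t) = ⊤)
    (hintinf : ∫⁻ t in Set.Ioi (1 : ℝ), ENNReal.ofReal (φ t) < ⊤)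
    (μ : Measure ℝ)
    (hμ : μ = volume.withDensity fun t => if 0 < t then ENNReal.ofReal (φ t) else 0)
    (Φ : ℝ → ℝ) (hΦ : ∀ t : ℝ, 0 < t → Φ t = ∫ s in Set.Ioi t, φ s)
    (b : ℝ) (hb : 0 < b) :
    ∀ t : ℝ, 0 ≤ t → ∀ A : Set ℝ, MeasurableSet A → A ⊆ Set.Ici 0 →
      μ (Set.Ici 0 \ A) < ⊤ →
      μ (Set.Ici 0 \ (A + t • Set.Icc (0 : ℝ) b)) ≤
        ENNReal.ofReal (phiE Φ
          (genInvE Φ (μ (Set.Ici 0 \ A)).toReal +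
            ENNReal.ofReal t * genInvE Φ (μ (Set.Ici 0 \ Set.Icc (0 : ℝ) b)).toReal)) := by
  intro t ht A _ _ hAfin
  set g : ℝ → ℝ≥0∞ := fun t => if 0 < t then ENNReal.ofReal (φ t) else 0 with hgdef
  have hg_mono : ∀ s t : ℝ, 0 < s → s ≤ t → g t ≤ g s := fun s t hs hst => by
    simp only [hgdef, if_pos hs, if_pos (hs.trans_le hst)]
    exact ENNReal.ofReal_le_ofReal (hφmono s t hs hst)
  have : NullSingletonClass μ := hμ ▸ ⟨fun x => withDensity_absolutelyContinuous volume g (measure_singleton x)⟩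
  have hμ_apply : ∀ S : Set ℝ, MeasurableSet S → S ⊆ Ioi 0 →
      μ S = ∫⁻ x in S, ENNReal.ofReal (φ x) := fun S hS hS0 => by
    rw [hμ, withDensity_apply _ hS]
    exact setLIntegral_congr_fun hS fun x hx => if_pos (hS0 hx)
  have hshift : ∀ d a h : ℝ, 0 ≤ d → d ≤ a → μ (Ioc a (a + h)) ≤ μ (Ioc d (d + h)) :=
    fun d a h hd hda => hμ ▸ withDensity_Ioc_add_le hg_mono hd hda h
  have hfin : ∀ t : ℝ, 0 < t → μ (Ioi t) ≠ ⊤ := by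
    intro t ht
    have hsub : Ioi t ⊆ Ioc t 1 ∪ Ioi 1 := fun x hx => by
      rcases le_or_gt x 1 with h | h
      exacts [Or.inl ⟨hx, h⟩, Or.inr h]
    refine measure_ne_top_of_subset hsub (measure_union_lt_top ?_ ?_).ne
    · rw [hμ_apply _ measurableSet_Ioc fun x hx => ht.trans hx.1]
      refine (setLIntegral_mono' measurableSet_Ioc fun x hx =>
        ENNReal.ofReal_le_ofReal (hφmono t x ht hx.1.le)).trans_lt ?_
      rw [setLIntegral_const]
      exact ENNReal.mul_lt_top ENNReal.ofReal_lt_top measure_Ioc_lt_top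
    · rwa [hμ_apply _ measurableSet_Ioi (Ioi_subset_Ioi zero_le_one)]
  have hone : μ (Ioo 0 1) = ⊤ := by
    rw [hμ_apply _ measurableSet_Ioo fun x hx => hx.1, hint0]
  have hzero : ∀ x : ℝ, 0 < x → μ (Ioo 0 x) = ⊤ := by
    intro x hx
    by_contra hx'
    have hsub : Ioo (0 : ℝ) 1 ⊆ Ioo 0 x ∪ Ioi (x / 2) := fun y hy => by
      rcases lt_or_ge y x with h | h
      · exact Or.inl ⟨hy.1, h⟩
      · exact Or.inr (show x / 2 < y by linarith)
    exact measure_ne_top_of_subset hsub (measure_union_lt_top (lt_top_iff_ne_top.2 hx')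
      (lt_top_iff_ne_top.2 (hfin _ (half_pos hx)))).ne hone
  have hΦμ : ∀ t : ℝ, 0 < t → Φ t = (μ (Ioi t)).toReal := by
    intro t ht
    rw [hΦ t ht, hμ_apply _ measurableSet_Ioi fun x hx => ht.trans hx]
    refine integral_eq_lintegral_of_nonneg_ae ?_ hφm.aestronglyMeasurable
    exact (ae_restrict_iff' measurableSet_Ioi).2 (ae_of_all _ fun x hx => hφ0 x (ht.trans hx))
  have hΦle : ∀ t : ℝ, 0 < t → ∀ m : ℝ≥0∞, m ≠ ⊤ → (Φ t ≤ m.toReal ↔ μ (Ioi t) ≤ m) :=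
    fun t ht m hm => by rw [hΦμ t ht, ENNReal.toReal_le_toReal (hfin t ht) hm]
  have hBinv : genInvE Φ (μ (Ici 0 \ Icc (0 : ℝ) b)).toReal ≤ ENNReal.ofReal b := by
    have hB : Ici 0 \ Icc (0 : ℝ) b = Ioi b := by
      ext x
      simp only [Set.mem_sdiff, mem_Ici, mem_Icc, mem_Ioi, not_and, not_le]
      exact ⟨fun hx => hx.2 hx.1, fun hx => ⟨(hb.trans hx).le, fun _ => hx⟩⟩
    rw [hB, genInvE]
    exact iInf₂_le_of_le b hb (iInf_le _ (hΦμ b hb).le)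
  set β := genInvE Φ (μ (Ici 0 \ Icc (0 : ℝ) b)).toReal
  have hβ : β ≠ ⊤ := (hBinv.trans_lt ENNReal.ofReal_lt_top).ne
  set m := μ (Ici 0 \ A)
  set α := genInvE Φ m.toReal with hα
  have hlt : ∀ s : ℝ, 0 < s → ENNReal.ofReal s < α → m ≤ μ (Ioi s) := by
    intro s hs hsα
    by_contra! hlt
    refine hsα.not_ge (iInf₂_le_of_le s hs (iInf_le _ ?_))
    exact (hΦle s hs m hAfin.ne).2 hlt.le
  have hset : t • Icc (0 : ℝ) b = Icc 0 (t * b) := by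
    rcases ht.eq_or_lt with rfl | ht
    · simp [zero_smul_set (nonempty_Icc.2 hb.le), ← singleton_zero]
    · simp [LinearOrderedField.smul_Icc ht]
  rw [hset]
  have htb : 0 ≤ t * b := mul_nonneg ht hb.le
  by_cases hαtop : α = ⊤
  · suffices h0 : m = 0 by
      have hsub : Ici 0 \ (A + Icc 0 (t * b)) ⊆ Ici 0 \ A := fun x hx =>
        ⟨hx.1, fun hxA => hx.2 ⟨x, hxA, 0, ⟨le_rfl, htb⟩, add_zero x⟩⟩
      rw [measure_mono_null hsub h0]
      exact zero_le
    have hlim : Tendsto (fun s : ℝ => μ (Ioi s)) atTop (𝓝 (μ (⋂ s : ℝ, Ioi s))) :=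
      tendsto_measure_iInter_atTop (fun _ => measurableSet_Ioi.nullMeasurableSet)
        (fun _ _ hij => Ioi_subset_Ioi hij) ⟨1, hfin 1 one_pos⟩
    have hemp : (⋂ s : ℝ, Ioi s) = ∅ :=
      eq_empty_of_forall_notMem fun x hx => lt_irrefl x (mem_iInter.1 hx x)
    rw [hemp, measure_empty] at hlim
    refine le_antisymm (ge_of_tendsto hlim ?_) zero_le
    filter_upwards [eventually_gt_atTop 0] with s hs
    exact hlt s hs (hαtop ▸ ENNReal.ofReal_lt_top)
  have hα0 : α ≠ 0 := by
    intro h0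
    refine hAfin.not_ge ?_
    rw [← hone]
    refine (measure_mono fun x hx => hx.1).trans (measure_Ioi_zero_le fun s hs => ?_)
    have hαs : α < ENNReal.ofReal s := by simpa [h0] using hs
    simp only [hα, genInvE, iInf_lt_iff] at hαs
    obtain ⟨r, hr, hΦr, hrs⟩ := hαs
    have hrs' : r ≤ s := ((ENNReal.ofReal_lt_ofReal_iff hs).1 hrs).le
    exact (measure_mono (Ioi_subset_Ioi hrs')).trans ((hΦle r hr m hAfin.ne).1 hΦr)
  have ha : 0 < α.toReal := ENNReal.toReal_pos hα0 hαtop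
  have hma : m ≤ μ (Ioi α.toReal) := le_measure_Ioi_of_forall_lt hfin ha fun s hs hsa =>
    hlt s hs ((ENNReal.ofReal_lt_iff_lt_toReal hs.le hαtop).2 hsa)
  have htβ : ENNReal.ofReal t * β ≠ ⊤ := ENNReal.mul_ne_top ENNReal.ofReal_ne_top hβ
  have hβb : β.toReal ≤ b := ENNReal.toReal_le_of_le_ofReal hb.le hBinv
  have hpos : 0 < α.toReal + t * β.toReal :=
    add_pos_of_pos_of_nonneg ha (mul_nonneg ht ENNReal.toReal_nonneg)
  rw [phiE, if_neg (ENNReal.add_ne_top.2 ⟨hαtop, htβ⟩), ENNReal.toReal_add hαtop htβ,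
    ENNReal.toReal_mul, ENNReal.toReal_ofReal ht, hΦμ _ hpos, ENNReal.ofReal_toReal (hfin _ hpos)]
  exact (measure_diff_add_Icc_le hshift hfin hzero hAfin.ne ha htb hma).trans
    (measure_mono (Ioi_subset_Ioi (by gcongr)))
end
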